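/- arXiv:0708.3608 — 7 statements merged into one kernel-verified Lean document; each statement's English description precedes it below -/
import Mathlib

section
/- Let f : [0,1] → {1,2,…} ∪ {ω, 𝔠} satisfy Condition (1), satisfy Condition (**) at every y with f(y) ∈ {ω, 𝔠}, and have {y ∈ [0,1] : f(y) = 𝔠} analytic. Then there exists a continuous function F : [0,1] → [0,1] with F(0) = 0, F(1) = 1 such that |F⁻¹(y)| = f(y) for every y ∈ [0,1]. -/
open Set Cardinal

noncomputable section

/-- The section of `F` over `y`: the set of `x ∈ [0,1]` with `F x = y`. -/
def Sec (F : ℝ → ℝ) (y : ℝ) : Set ℝ := {x | x ∈ Set.Icc (0:ℝ) 1 ∧ F x = y}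

/-- Condition (1) for a cardinal-valued function `f` on `[0,1]`. -/
def Cond1 (f : ℝ → Cardinal) : Prop :=
  (∀ y ∈ Set.Ioo (0:ℝ) 1, f y < ℵ₀ →
    ∃ ε > 0, ∀ y₁ ∈ Set.Icc (0:ℝ) 1, ∀ y₂ ∈ Set.Icc (0:ℝ) 1,
      y - ε < y₁ → y₁ < y → y < y₂ → y₂ < y + ε →
      2 * f y ≤ f y₁ + f y₂ ∧
      (f y₁ + f y₂ = 2 * f y →
        (∃ k : ℕ, f y₁ = k ∧ Odd k) ∧ (∃ k : ℕ, f y₂ = k ∧ Odd k))) ∧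
  (f 0 < ℵ₀ → ∃ ε > 0, ∀ y₂ ∈ Set.Icc (0:ℝ) 1, 0 < y₂ → y₂ < ε →
    2 * f 0 ≤ 1 + f y₂) ∧
  (f 1 < ℵ₀ → ∃ ε > 0, ∀ y₁ ∈ Set.Icc (0:ℝ) 1, 1 - ε < y₁ → y₁ < 1 →
    2 * f 1 ≤ f y₁ + 1)

/-- Condition (**) for a cardinal-valued function `f` at the point `y ∈ [0,1]`,
with the convention that the term `f y₁` is replaced by `1` when `y = 0` and
the term `f y₂` is replaced by `1` when `y = 1`. -/
def CondStar (f : ℝ → Cardinal) (y : ℝ) : Prop :=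
  ∀ n : ℕ, ∃ ε > 0,
    (∀ y₁ ∈ Set.Icc (0:ℝ) 1, ∀ y₂ ∈ Set.Icc (0:ℝ) 1,
      y - ε < y₁ → y₁ < y → y < y₂ → y₂ < y + ε → (n : Cardinal) ≤ f y₁ + f y₂) ∧
    (y = 0 → ∀ y₂ ∈ Set.Icc (0:ℝ) 1, 0 < y₂ → y₂ < ε → (n : Cardinal) ≤ 1 + f y₂) ∧
    (y = 1 → ∀ y₁ ∈ Set.Icc (0:ℝ) 1, 1 - ε < y₁ → y₁ < 1 → (n : Cardinal) ≤ f y₁ + 1)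


structure Fam where
  α : Type
  l : α → α
  r : α → α
  st : α → ℝ
  en : α → ℝ
  lo : α → ℝ
  hi : α → ℝ
  dep : α → ℕ
  st_l : ∀ a, st (l a) = st a
  en_r : ∀ a, en (r a) = en a
  mid : ∀ a, en (l a) = st (r a)
  lo_l : ∀ a, lo a ≤ lo (l a)
  lo_r : ∀ a, lo a ≤ lo (r a)
  hi_l : ∀ a, hi (l a) ≤ hi a
  hi_r : ∀ a, hi (r a) ≤ hi a
  lo_st : ∀ a, lo a ≤ st a
  st_hi : ∀ a, st a ≤ hi a
  lo_en : ∀ a, lo a ≤ en a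
  en_hi : ∀ a, en a ≤ hi a
  dep_l : ∀ a, dep a < dep (l a)
  dep_r : ∀ a, dep a < dep (r a)
  small : ∀ ε > 0, ∃ N, ∀ a, N ≤ dep a → hi a - lo a < ε

namespace Fam
variable (Φ : Fam)

def G : ℕ → Φ.α → ℝ → ℝ
  | 0, a, t => Φ.st a + t * (Φ.en a - Φ.st a)
  | n+1, a, t => if t ≤ 1/2 then G n (Φ.l a) (2*t) else G n (Φ.r a) (2*t-1)

lemma G_zero (n : ℕ) (a : Φ.α) : Φ.G n a 0 = Φ.st a := by
  induction n generalizing a with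
  | zero => simp [G]
  | succ n ih => simp [G, ih, Φ.st_l]

lemma G_one (n : ℕ) (a : Φ.α) : Φ.G n a 1 = Φ.en a := by
  induction n generalizing a with
  | zero => simp [G]
  | succ n ih =>
    have : ¬ ((1:ℝ) ≤ 1/2) := by norm_num
    rw [G, if_neg this]
    norm_num [ih, Φ.en_r]

lemma G_cont (n : ℕ) (a : Φ.α) : Continuous (Φ.G n a) := by
  induction n generalizing a with
  | zero =>
    show Continuous (fun t => Φ.st a + t * (Φ.en a - Φ.st a))
    fun_prop
  | succ n ih =>
    show Continuous (fun t => if t ≤ 1/2 then Φ.G n (Φ.l a) (2*t) else Φ.G n (Φ.r a) (2*t-1))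
    refine Continuous.if_le ((ih _).comp (by fun_prop)) ((ih _).comp (by fun_prop))
      continuous_id continuous_const ?_
    intro x hx
    have hx' : x = 1/2 := hx
    subst hx'
    norm_num [G_zero, G_one, Φ.mid]

lemma G_mem (n : ℕ) (a : Φ.α) {t : ℝ} (ht : t ∈ Icc (0:ℝ) 1) :
    Φ.G n a t ∈ Icc (Φ.lo a) (Φ.hi a) := by
  induction n generalizing a t with
  | zero =>
    obtain ⟨h0, h1⟩ := ht
    have e : Φ.G 0 a t = (1-t) * Φ.st a + t * Φ.en a := by simp [G]; ring
    rw [e]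
    have := Φ.lo_st a; have := Φ.st_hi a; have := Φ.lo_en a; have := Φ.en_hi a
    constructor <;> nlinarith
  | succ n ih =>
    obtain ⟨h0, h1⟩ := ht
    unfold G
    split_ifs with h
    · have := ih (Φ.l a) (t := 2*t) ⟨by linarith, by linarith⟩
      exact ⟨(Φ.lo_l a).trans this.1, this.2.trans (Φ.hi_l a)⟩
    · have := ih (Φ.r a) (t := 2*t-1) ⟨by linarith, by linarith⟩
      exact ⟨(Φ.lo_r a).trans this.1, this.2.trans (Φ.hi_r a)⟩

lemma G_near {ε : ℝ} {N : ℕ} (hN : ∀ a, N ≤ Φ.dep a → Φ.hi a - Φ.lo a < ε)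
    (n m : ℕ) (a : Φ.α) {t : ℝ} (ht : t ∈ Icc (0:ℝ) 1) (hn : N ≤ Φ.dep a + n) :
    |Φ.G (n+m) a t - Φ.G n a t| < ε := by
  induction n generalizing a t with
  | zero =>
    have h1 := Φ.G_mem (0+m) a ht
    have h2 := Φ.G_mem 0 a ht
    have := hN a (by simpa using hn)
    rw [abs_lt]; constructor <;> linarith [h1.1, h1.2, h2.1, h2.2]
  | succ n ih =>
    obtain ⟨h0, h1⟩ := ht
    rw [show n+1+m = (n+m)+1 by ring]
    unfold G
    have := Φ.dep_l a
    have := Φ.dep_r a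
    split_ifs with h
    · exact ih (Φ.l a) ⟨by linarith, by linarith⟩ (by omega)
    · exact ih (Φ.r a) ⟨by linarith, by linarith⟩ (by omega)

lemma exists_lim (a : Φ.α) (t : ℝ) : ∃ x, t ∈ Icc (0:ℝ) 1 →
    Filter.Tendsto (fun n => Φ.G n a t) Filter.atTop (nhds x) := by
  by_cases ht : t ∈ Icc (0:ℝ) 1
  · have : CauchySeq (fun n => Φ.G n a t) := by
      rw [Metric.cauchySeq_iff']
      intro ε hε
      obtain ⟨N, hN⟩ := Φ.small ε hε
      refine ⟨N, fun n hn => ?_⟩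
      obtain ⟨m, rfl⟩ := Nat.exists_eq_add_of_le hn
      exact Φ.G_near hN N m a ht (by omega)
    obtain ⟨x, hx⟩ := cauchySeq_tendsto_of_complete this
    exact ⟨x, fun _ => hx⟩
  · exact ⟨0, fun h => absurd h ht⟩

def F (a : Φ.α) (t : ℝ) : ℝ := (Φ.exists_lim a t).choose

lemma F_lim (a : Φ.α) {t : ℝ} (ht : t ∈ Icc (0:ℝ) 1) :
    Filter.Tendsto (fun n => Φ.G n a t) Filter.atTop (nhds (Φ.F a t)) :=
  (Φ.exists_lim a t).choose_spec ht

lemma F_cont (a : Φ.α) : ContinuousOn (Φ.F a) (Icc 0 1) := by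
  have : TendstoUniformlyOn (fun n => Φ.G n a) (Φ.F a) Filter.atTop (Icc 0 1) := by
    rw [Metric.tendstoUniformlyOn_iff]
    intro ε hε
    obtain ⟨N, hN⟩ := Φ.small (ε/2) (by linarith)
    filter_upwards [Filter.eventually_ge_atTop N] with n hn t ht
    have h1 : Filter.Tendsto (fun m => |Φ.G (n+m) a t - Φ.G n a t|) Filter.atTop
        (nhds |Φ.F a t - Φ.G n a t|) := by
      have := (Φ.F_lim a ht).comp (Filter.tendsto_add_atTop_nat n)
      refine Filter.Tendsto.abs (Filter.Tendsto.sub_const ?_ _)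
      simpa [Function.comp_def, add_comm] using this
    have := le_of_tendsto h1 (Filter.Eventually.of_forall fun m =>
      (Φ.G_near hN n m a ht (by omega)).le)
    rw [Real.dist_eq]; linarith
  exact this.continuousOn (Filter.Frequently.of_forall fun n => (Φ.G_cont n a).continuousOn)

lemma F_zero (a : Φ.α) : Φ.F a 0 = Φ.st a :=
  tendsto_nhds_unique (Φ.F_lim a (by simp)) (by simp [G_zero])

lemma F_one (a : Φ.α) : Φ.F a 1 = Φ.en a :=
  tendsto_nhds_unique (Φ.F_lim a (by simp)) (by simp [G_one])

lemma F_mem (a : Φ.α) {t : ℝ} (ht : t ∈ Icc (0:ℝ) 1) : Φ.F a t ∈ Icc (Φ.lo a) (Φ.hi a) :=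
  isClosed_Icc.mem_of_tendsto (Φ.F_lim a ht) (Filter.Eventually.of_forall fun n => Φ.G_mem n a ht)

lemma F_l (a : Φ.α) {t : ℝ} (ht : t ∈ Icc (0:ℝ) 1) : Φ.F a (t/2) = Φ.F (Φ.l a) t := by
  have h := (Φ.F_lim a (t := t/2) ⟨by linarith [ht.1], by linarith [ht.2]⟩).comp
    (Filter.tendsto_add_atTop_nat 1)
  refine tendsto_nhds_unique h ((Φ.F_lim (Φ.l a) ht).congr fun n => ?_)
  have : t/2 ≤ 1/2 := by linarith [ht.2]
  simp only [Function.comp, G, if_pos this]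
  congr 1; ring

lemma F_r (a : Φ.α) {t : ℝ} (ht : t ∈ Icc (0:ℝ) 1) :
    Φ.F a (1/2 + t/2) = Φ.F (Φ.r a) t := by
  rcases eq_or_lt_of_le ht.1 with h0 | h0
  · subst h0
    rw [show (1/2 + 0/2 : ℝ) = 1/2 by norm_num, Φ.F_l a (by simp), F_one, F_zero, Φ.mid]
  have h := (Φ.F_lim a (t := 1/2 + t/2) ⟨by linarith [ht.1], by linarith [ht.2]⟩).comp
    (Filter.tendsto_add_atTop_nat 1)
  refine tendsto_nhds_unique h ((Φ.F_lim (Φ.r a) ht).congr fun n => ?_)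
  have : ¬ (1/2 + t/2 ≤ 1/2) := by linarith
  simp only [Function.comp, G, if_neg this]
  congr 1; ring

/-- half-open fibre -/
def fib (a : Φ.α) (y : ℝ) : Set ℝ := {t | t ∈ Ico (0:ℝ) 1 ∧ Φ.F a t = y}

lemma fib_eq (a : Φ.α) (y : ℝ) : Φ.fib a y =
    (fun t => t/2) '' Φ.fib (Φ.l a) y ∪ (fun t => 1/2 + t/2) '' Φ.fib (Φ.r a) y := by
  ext t
  simp only [fib, mem_ofPred_eq, mem_union, mem_image]
  constructor
  · rintro ⟨⟨h0, h1⟩, h⟩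
    rcases lt_or_ge t (1/2) with h2 | h2
    · left
      refine ⟨2*t, ⟨⟨by linarith, by linarith⟩, ?_⟩, by ring⟩
      rw [← h, ← Φ.F_l a ⟨by linarith, by linarith⟩]; congr 1; ring
    · right
      refine ⟨2*t-1, ⟨⟨by linarith, by linarith⟩, ?_⟩, by ring⟩
      rw [← h, ← Φ.F_r a ⟨by linarith, by linarith⟩]; congr 1; ring
  · rintro (⟨x, ⟨⟨h0, h1⟩, h⟩, rfl⟩ | ⟨x, ⟨⟨h0, h1⟩, h⟩, rfl⟩)
    · exact ⟨⟨by linarith, by linarith⟩, by rw [Φ.F_l a ⟨h0, h1.le⟩, h]⟩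
    · exact ⟨⟨by linarith, by linarith⟩, by rw [Φ.F_r a ⟨h0, h1.le⟩, h]⟩

def M (a : Φ.α) (y : ℝ) : ℕ∞ := (Φ.fib a y).encard

lemma M_eq (a : Φ.α) (y : ℝ) : Φ.M a y = Φ.M (Φ.l a) y + Φ.M (Φ.r a) y := by
  unfold M
  rw [fib_eq, encard_union_eq, Function.Injective.encard_image, Function.Injective.encard_image]
  · intro x y h; simpa using h
  · intro x y h; simpa using h
  · rw [Set.disjoint_left]
    rintro _ ⟨x, ⟨⟨h0, h1⟩, -⟩, rfl⟩ ⟨z, ⟨⟨h2, h3⟩, -⟩, h⟩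
    simp only at h
    linarith

lemma M_zero {a : Φ.α} {y : ℝ} (h : y ∉ Icc (Φ.lo a) (Φ.hi a)) : Φ.M a y = 0 := by
  unfold M
  rw [encard_eq_zero, eq_empty_iff_forall_notMem]
  rintro t ⟨ht, rfl⟩
  exact h (Φ.F_mem a ⟨ht.1, ht.2.le⟩)

lemma one_le_M {a : Φ.α} {y : ℝ} (h : y ∈ uIcc (Φ.st a) (Φ.en a)) (hy : y ≠ Φ.en a) :
    1 ≤ Φ.M a y := by
  have := intermediate_value_uIcc (a := (0:ℝ)) (b := 1) (f := Φ.F a)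
    (by rw [uIcc_of_le zero_le_one]; exact Φ.F_cont a)
  rw [F_zero, F_one, uIcc_of_le zero_le_one] at this
  obtain ⟨t, ht, rfl⟩ := this h
  unfold M
  rw [one_le_encard_iff_nonempty]
  refine ⟨t, ⟨ht.1, lt_of_le_of_ne ht.2 ?_⟩, rfl⟩
  rintro rfl
  exact hy (Φ.F_one a)

/-- zero at the end value -/
lemma M_end {y : ℝ} (X : Set Φ.α) (hX : ∀ q ∈ X, Φ.M q y = 0 ∨ (Φ.M (Φ.l q) y = 0 ∧ Φ.r q ∈ X)) :
    ∀ q ∈ X, Φ.M q y = 0 := by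
  have key : ∀ n : ℕ, ∀ q ∈ X, ∀ t ∈ Φ.fib q y, 1 - t ≤ (1/2)^n := by
    intro n
    induction n with
    | zero => rintro q hq t ⟨ht, -⟩; simp; exact ht.1
    | succ n ih =>
      intro q hq t ht
      rcases hX q hq with h | ⟨h1, h2⟩
      · rw [M, encard_eq_zero] at h; rw [h] at ht; exact ht.elim
      · rw [M, encard_eq_zero] at h1
        rw [fib_eq, h1] at ht
        simp only [image_empty, empty_union] at ht
        obtain ⟨x, hx, rfl⟩ := ht
        have := ih _ h2 x hx
        rw [pow_succ]; simp only; linarith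
  intro q hq
  rw [M, encard_eq_zero, eq_empty_iff_forall_notMem]
  intro t ht
  have h1 : 0 < 1 - t := by linarith [ht.1.2]
  obtain ⟨n, hn⟩ := exists_pow_lt_of_lt_one h1 (by norm_num : (1/2:ℝ) < 1)
  linarith [key n q hq t ht]

lemma M_le_one {y : ℝ} (X : Set Φ.α) (hX : ∀ q ∈ X, Φ.M q y = 0 ∨
    (Φ.M (Φ.l q) y = 0 ∧ Φ.r q ∈ X) ∨ (Φ.l q ∈ X ∧ Φ.M (Φ.r q) y = 0)) :
    ∀ q ∈ X, Φ.M q y ≤ 1 := by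
  have key : ∀ n : ℕ, ∀ q ∈ X, ∀ t ∈ Φ.fib q y, ∀ t' ∈ Φ.fib q y, t - t' ≤ (1/2)^n := by
    intro n
    induction n with
    | zero => rintro q hq t ⟨ht, -⟩ t' ⟨ht', -⟩; simp; linarith [ht.2, ht'.1]
    | succ n ih =>
      intro q hq t ht t' ht'
      rcases hX q hq with h | ⟨h1, h2⟩ | ⟨h2, h1⟩
      · rw [M, encard_eq_zero] at h; rw [h] at ht; exact ht.elim
      all_goals
        rw [M, encard_eq_zero] at h1
        rw [fib_eq, h1] at ht ht'
        simp only [image_empty, empty_union, union_empty] at ht ht'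
        obtain ⟨x, hx, rfl⟩ := ht
        obtain ⟨x', hx', rfl⟩ := ht'
        have := ih _ h2 x hx x' hx'
        rw [pow_succ]; simp only; linarith
  intro q hq
  rw [M, encard_le_one_iff]
  have : ∀ t ∈ Φ.fib q y, ∀ t' ∈ Φ.fib q y, t ≤ t' := by
    intro t ht t' ht'
    by_contra hlt
    obtain ⟨n, hn⟩ := exists_pow_lt_of_lt_one (by linarith : 0 < t - t')
      (by norm_num : (1/2:ℝ) < 1)
    linarith [key n q hq t ht t' ht']
  intro a b ha hb
  exact le_antisymm (this a ha b hb) (this b hb a ha)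

def Cn (a : Φ.α) (y : ℝ) : Prop := (Φ.fib a y).Countable

lemma Cn_iff (a : Φ.α) (y : ℝ) : Φ.Cn a y ↔ Φ.Cn (Φ.l a) y ∧ Φ.Cn (Φ.r a) y := by
  unfold Cn
  rw [fib_eq, countable_union]
  constructor
  · rintro ⟨h1, h2⟩
    exact ⟨countable_of_injective_of_countable_image
      (fun x _ y _ h => by simpa using h) h1,
      countable_of_injective_of_countable_image
      (fun x _ y _ h => by simpa using h) h2⟩
  · rintro ⟨h1, h2⟩
    exact ⟨h1.image _, h2.image _⟩

lemma Cn_of_M {a : Φ.α} {y : ℝ} (h : Φ.M a y ≤ 1) : Φ.Cn a y := by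
  unfold Cn
  exact (finite_of_encard_le_coe (k := 1) h).countable

lemma Cn_of_notMem {a : Φ.α} {y : ℝ} (h : y ∉ Icc (Φ.lo a) (Φ.hi a)) : Φ.Cn a y :=
  Φ.Cn_of_M (by rw [Φ.M_zero h]; simp)

lemma Cn_all {y : ℝ} (X : Set Φ.α) (hX : ∀ q ∈ X, Φ.Cn q y ∨
    (Φ.Cn (Φ.l q) y ∧ Φ.r q ∈ X) ∨ (Φ.l q ∈ X ∧ Φ.Cn (Φ.r q) y)) :
    ∀ q ∈ X, Φ.Cn q y := by
  have key : ∀ n : ℕ, ∀ q ∈ X, ∃ C : Set ℝ, C.Countable ∧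
      ∀ t ∈ Φ.fib q y \ C, ∀ t' ∈ Φ.fib q y \ C, t - t' ≤ (1/2)^n := by
    intro n
    induction n with
    | zero =>
      intro q hq
      refine ⟨∅, countable_empty, ?_⟩
      rintro t ⟨⟨ht, -⟩, -⟩ t' ⟨⟨ht', -⟩, -⟩; simp; linarith [ht.2, ht'.1]
    | succ n ih =>
      intro q hq
      rcases hX q hq with h | ⟨h1, h2⟩ | ⟨h2, h1⟩
      · exact ⟨_, h, fun t ht => absurd ht.1 ht.2⟩
      · obtain ⟨C, hC, hC'⟩ := ih _ h2
        refine ⟨(fun t => t/2) '' Φ.fib (Φ.l q) y ∪ (fun t => 1/2 + t/2) '' C,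
          (h1.image _).union (hC.image _), ?_⟩
        rw [fib_eq]
        have : ∀ t, t ∈ ((fun t => t/2) '' Φ.fib (Φ.l q) y ∪
            (fun t => 1/2 + t/2) '' Φ.fib (Φ.r q) y) \ ((fun t => t/2) '' Φ.fib (Φ.l q) y ∪
            (fun t => 1/2 + t/2) '' C) → ∃ x ∈ Φ.fib (Φ.r q) y \ C, 1/2 + x/2 = t := by
          rintro t ⟨h | ⟨x, hx, rfl⟩, h'⟩
          · exact absurd (Or.inl h) h'
          · exact ⟨x, ⟨hx, fun hc => h' (Or.inr ⟨x, hc, rfl⟩)⟩, rfl⟩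
        intro t ht t' ht'
        obtain ⟨x, hx, rfl⟩ := this t ht
        obtain ⟨x', hx', rfl⟩ := this t' ht'
        have := hC' x hx x' hx'
        rw [pow_succ]; linarith
      · obtain ⟨C, hC, hC'⟩ := ih _ h2
        refine ⟨(fun t => t/2) '' C ∪ (fun t => 1/2 + t/2) '' Φ.fib (Φ.r q) y,
          (hC.image _).union (h1.image _), ?_⟩
        rw [fib_eq]
        have : ∀ t, t ∈ ((fun t => t/2) '' Φ.fib (Φ.l q) y ∪
            (fun t => 1/2 + t/2) '' Φ.fib (Φ.r q) y) \ ((fun t => t/2) '' C ∪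
            (fun t => 1/2 + t/2) '' Φ.fib (Φ.r q) y) → ∃ x ∈ Φ.fib (Φ.l q) y \ C, x/2 = t := by
          rintro t ⟨⟨x, hx, rfl⟩ | h, h'⟩
          · exact ⟨x, ⟨hx, fun hc => h' (Or.inl ⟨x, hc, rfl⟩)⟩, rfl⟩
          · exact absurd (Or.inr h) h'
        intro t ht t' ht'
        obtain ⟨x, hx, rfl⟩ := this t ht
        obtain ⟨x', hx', rfl⟩ := this t' ht'
        have := hC' x hx x' hx'
        rw [pow_succ]; linarith
  intro q hq
  choose C hC hC' using fun n => key n q hq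
  have hsub : (Φ.fib q y \ ⋃ n, C n).Subsingleton := by
    have : ∀ t ∈ Φ.fib q y \ ⋃ n, C n, ∀ t' ∈ Φ.fib q y \ ⋃ n, C n, t ≤ t' := by
      intro t ht t' ht'
      by_contra hlt
      obtain ⟨n, hn⟩ := exists_pow_lt_of_lt_one (by linarith : 0 < t - t')
        (by norm_num : (1/2:ℝ) < 1)
      have := hC' n t ⟨ht.1, fun h => ht.2 (mem_iUnion_of_mem n h)⟩ t'
        ⟨ht'.1, fun h => ht'.2 (mem_iUnion_of_mem n h)⟩
      linarith
    intro a ha b hb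
    exact le_antisymm (this a ha b hb) (this b hb a ha)
  exact (hsub.countable.union (countable_iUnion hC)).mono
    (by intro t ht; by_cases h : t ∈ ⋃ n, C n
        · exact Or.inr h
        · exact Or.inl ⟨ht, h⟩)

end Fam


open Classical in
def lev (good : List Bool → Prop) : List Bool → ℕ
  | [] => 0
  | _ :: s => lev good s + if good s then 1 else 0

structure Tr where
  a : List Bool → ℝ
  b : List Bool → ℝ
  m : List Bool → ℝ
  a0 : a [] = 0
  b0 : b [] = 1
  aL : ∀ s, a (false :: s) = a s
  bL : ∀ s, b (false :: s) = m s
  aR : ∀ s, a (true :: s) = m s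
  bR : ∀ s, b (true :: s) = b s
  am : ∀ s, a s < m s
  mb : ∀ s, m s < b s
  small : ∀ ε > 0, ∃ N, ∀ s : List Bool, N ≤ s.length → b s - a s < ε
  good : List Bool → Prop
  pi : List Bool → ℕ
  pi_le : ∀ s, pi s ≤ lev good s

inductive St where
  | up (j : ℕ) (s : List Bool) : St
  | skip (j : ℕ) (s : List Bool) : St
  | exc (j : ℕ) (s : List Bool) : St
  | dn (s : List Bool) : St

namespace Tr
open St
variable (T : Tr)

abbrev k (s : List Bool) : ℕ := lev T.good s

def ins (j : ℕ) (s : List Bool) : Prop := T.good s ∧ T.pi s = j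

open Classical in
def lf : St → St
  | up j s => if T.ins j s then exc (T.k s + 1) s else up j (false :: s)
  | skip j s => up j (false :: s)
  | exc j s => skip j s
  | dn s => dn (true :: s)

open Classical in
def rt : St → St
  | up j s => if T.ins j s then skip j s else up j (true :: s)
  | skip j s => up j (true :: s)
  | exc _ s => dn s
  | dn s => dn (false :: s)

def nd : St → List Bool
  | up _ s => s
  | skip _ s => s
  | exc _ s => s
  | dn s => s

def sst : St → ℝ
  | up _ s => T.a s
  | skip _ s => T.a s
  | exc _ s => T.a s
  | dn s => T.b s

def sen : St → ℝ
  | up _ s => T.b s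
  | skip _ s => T.b s
  | exc _ s => T.a s
  | dn s => T.a s

def sdep : St → ℕ
  | up _ s => 3 * s.length
  | skip _ s => 3 * s.length + 2
  | exc _ s => 3 * s.length + 1
  | dn s => 3 * s.length + 2

lemma ab (s : List Bool) : T.a s < T.b s := (T.am s).trans (T.mb s)

def fam : Fam where
  α := St
  l := T.lf
  r := T.rt
  st := T.sst
  en := T.sen
  lo q := T.a (nd q)
  hi q := T.b (nd q)
  dep := sdep
  st_l q := by
    cases q <;> simp only [lf] <;> (try split_ifs) <;> simp [sst, T.aL, T.bR]
  en_r q := by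
    cases q <;> simp only [rt] <;> (try split_ifs) <;> simp [sen, T.aL, T.bR]
  mid q := by
    cases q <;> simp only [lf, rt] <;> (try split_ifs) <;> simp [sst, sen, T.bL, T.aR]
  lo_l q := by
    cases q <;> simp only [lf] <;> (try split_ifs) <;> simp [nd, T.aL, T.aR, (T.am _).le]
  lo_r q := by
    cases q <;> simp only [rt] <;> (try split_ifs) <;> simp [nd, T.aL, T.aR, (T.am _).le]
  hi_l q := by
    cases q <;> simp only [lf] <;> (try split_ifs) <;> simp [nd, T.bL, T.bR, (T.mb _).le]
  hi_r q := by
    cases q <;> simp only [rt] <;> (try split_ifs) <;> simp [nd, T.bL, T.bR, (T.mb _).le]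
  lo_st q := by cases q <;> simp [sst, nd, (T.ab _).le]
  st_hi q := by cases q <;> simp [sst, nd, (T.ab _).le]
  lo_en q := by cases q <;> simp [sen, nd, (T.ab _).le]
  en_hi q := by cases q <;> simp [sen, nd, (T.ab _).le]
  dep_l q := by
    cases q <;> simp only [lf] <;> (try split_ifs) <;> simp [sdep] <;> omega
  dep_r q := by
    cases q <;> simp only [rt] <;> (try split_ifs) <;> simp [sdep] <;> omega
  small ε hε := by
    obtain ⟨N, hN⟩ := T.small ε hε
    refine ⟨3*N+3, fun q hq => hN _ ?_⟩
    cases q <;> simp only [sdep, nd] at * <;> omega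

abbrev M (q : St) (y : ℝ) : ℕ∞ := T.fam.M q y
abbrev Cn (q : St) (y : ℝ) : Prop := T.fam.Cn q y

lemma M_eq (q : St) (y : ℝ) : T.M q y = T.M (T.lf q) y + T.M (T.rt q) y := T.fam.M_eq q y
lemma Cn_iff (q : St) (y : ℝ) : T.Cn q y ↔ T.Cn (T.lf q) y ∧ T.Cn (T.rt q) y := T.fam.Cn_iff q y
lemma M_zero {q : St} {y : ℝ} (h : y ∉ Icc (T.a (nd q)) (T.b (nd q))) : T.M q y = 0 :=
  T.fam.M_zero h

lemma M_dn_end (s : List Bool) : T.M (dn s) (T.a s) = 0 := by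
  refine T.fam.M_end (y := T.a s) {q | ∃ s', q = dn s' ∧ T.a s' = T.a s} ?_ _ ⟨s, rfl, rfl⟩
  rintro _ ⟨s', rfl, h⟩
  right
  refine ⟨T.M_zero (q := dn (true :: s')) ?_, ⟨false :: s', rfl, by rw [T.aL, h]⟩⟩
  simp only [nd, T.aR, mem_Icc, not_and, ← h]
  intro h'; linarith [T.am s']

lemma M_dn_le (s : List Bool) (y : ℝ) : T.M (dn s) y ≤ 1 := by
  refine T.fam.M_le_one (y := y) {q | ∃ s', q = dn s'} ?_ _ ⟨s, rfl⟩
  rintro _ ⟨s', rfl⟩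
  right
  rcases lt_trichotomy y (T.m s') with h | h | h
  · left
    refine ⟨T.M_zero (q := dn (true :: s')) ?_, ⟨_, rfl⟩⟩
    simp only [nd, T.aR, mem_Icc, not_and]
    intro h'; linarith
  · left
    refine ⟨?_, ⟨_, rfl⟩⟩
    have := T.M_dn_end (true :: s')
    rw [T.aR, ← h] at this
    exact this
  · right
    refine ⟨⟨_, rfl⟩, T.M_zero (q := dn (false :: s')) ?_⟩
    simp only [nd, T.bL, mem_Icc, not_and]
    intro h'; linarith

open Classical in
lemma M_dn (s : List Bool) (y : ℝ) :
    T.M (dn s) y = if y ∈ Ioc (T.a s) (T.b s) then 1 else 0 := by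
  split_ifs with h
  · refine le_antisymm (T.M_dn_le s y) (T.fam.one_le_M (a := dn s) ?_ h.1.ne')
    show y ∈ uIcc (T.b s) (T.a s)
    rw [uIcc_of_ge (T.ab s).le]
    exact ⟨h.1.le, h.2⟩
  · by_cases h' : y = T.a s
    · subst h'; exact T.M_dn_end s
    · apply T.M_zero
      simp only [nd, mem_Icc]
      rintro ⟨h1, h2⟩
      exact h ⟨lt_of_le_of_ne h1 (Ne.symm h'), h2⟩

lemma one_le_up {j : ℕ} {s : List Bool} {y : ℝ} (h : y ∈ Ico (T.a s) (T.b s)) :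
    1 ≤ T.M (up j s) y := by
  refine T.fam.one_le_M (a := up j s) ?_ h.2.ne
  show y ∈ uIcc (T.a s) (T.b s)
  rw [uIcc_of_le (T.ab s).le]
  exact ⟨h.1, h.2.le⟩

lemma M_skip (j : ℕ) (s : List Bool) (y : ℝ) :
    T.M (skip j s) y = T.M (up j (false :: s)) y + T.M (up j (true :: s)) y := T.M_eq _ _

lemma M_up_neg {j : ℕ} {s : List Bool} (h : ¬ T.ins j s) (y : ℝ) :
    T.M (up j s) y = T.M (up j (false :: s)) y + T.M (up j (true :: s)) y := by
  rw [M_eq]; simp [lf, rt, h]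

open Classical in
lemma M_up_pos {j : ℕ} {s : List Bool} (h : T.ins j s) (y : ℝ) :
    T.M (up j s) y = (T.M (up (T.k s + 1) (false :: s)) y + T.M (up (T.k s + 1) (true :: s)) y) +
      (if y ∈ Ioc (T.a s) (T.b s) then 1 else 0) +
      (T.M (up j (false :: s)) y + T.M (up j (true :: s)) y) := by
  rw [M_eq]
  simp only [lf, rt, h, if_true]
  rw [M_skip, M_eq _ (exc _ _)]
  simp only [lf, rt]
  rw [M_skip, M_dn]

/-- total number of lines over `s` -/
def C (s : List Bool) (y : ℝ) : ℕ∞ := ∑ j ∈ Finset.range (T.k s + 1), T.M (up j s) y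

lemma lev_pos {s : List Bool} (h : T.good s) (d : Bool) : T.k (d :: s) = T.k s + 1 := by
  simp [k, lev, h]

lemma lev_neg {s : List Bool} (h : ¬ T.good s) (d : Bool) : T.k (d :: s) = T.k s := by
  simp [k, lev, h]

open Classical in
lemma C_eq (s : List Bool) (y : ℝ) : T.C s y = T.C (false :: s) y + T.C (true :: s) y +
    if T.good s ∧ y ∈ Ioc (T.a s) (T.b s) then 1 else 0 := by
  by_cases hg : T.good s
  · unfold C
    rw [T.lev_pos hg, T.lev_pos hg, Finset.sum_range_succ _ (T.k s + 1),
      Finset.sum_range_succ _ (T.k s + 1)]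
    have hmem : T.pi s ∈ Finset.range (T.k s + 1) :=
      Finset.mem_range.2 (Nat.lt_succ_of_le (T.pi_le s))
    rw [← Finset.add_sum_erase _ _ hmem,
      ← Finset.add_sum_erase _ (fun j => T.M (up j (false :: s)) y) hmem,
      ← Finset.add_sum_erase _ (fun j => T.M (up j (true :: s)) y) hmem]
    rw [T.M_up_pos ⟨hg, rfl⟩]
    have : ∑ x ∈ (Finset.range (T.k s + 1)).erase (T.pi s), T.M (up x s) y =
        ∑ x ∈ (Finset.range (T.k s + 1)).erase (T.pi s),
          (T.M (up x (false :: s)) y + T.M (up x (true :: s)) y) := by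
      refine Finset.sum_congr rfl fun j hj => T.M_up_neg ?_ y
      rintro ⟨-, h⟩
      exact (Finset.mem_erase.1 hj).1 h.symm
    rw [this, Finset.sum_add_distrib]
    simp only [hg, true_and]
    ring
  · unfold C
    rw [T.lev_neg hg, T.lev_neg hg, ← Finset.sum_add_distrib]
    simp only [hg, false_and, if_false, add_zero]
    exact Finset.sum_congr rfl fun j _ => T.M_up_neg (fun h => hg h.1) y

open Classical in
lemma C_ge (s : List Bool) (y : ℝ) :
    (if y ∈ Ico (T.a s) (T.b s) then ((1 + T.k s : ℕ) : ℕ∞) else 0) ≤ T.C s y := by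
  split_ifs with h
  · unfold C
    calc ((1 + T.k s : ℕ) : ℕ∞) = ∑ j ∈ Finset.range (T.k s + 1), 1 := by simp [add_comm]
      _ ≤ _ := Finset.sum_le_sum fun j _ => T.one_le_up h
  · simp

/-- no good node at or below `s` contains `y` -/
def quiet (s : List Bool) (y : ℝ) : Prop :=
  ∀ s', s <:+ s' → T.good s' → y ∉ Icc (T.a s') (T.b s')

lemma quiet_cons {s : List Bool} {y : ℝ} (h : T.quiet s y) (d : Bool) : T.quiet (d :: s) y :=
  fun s' hs => h s' ((List.suffix_cons d s).trans hs)

lemma M_up_end {j : ℕ} {s : List Bool} (h : T.quiet s (T.b s)) : T.M (up j s) (T.b s) = 0 := by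
  refine T.fam.M_end (y := T.b s) {q | ∃ s', q = up j s' ∧ T.b s' = T.b s ∧ T.quiet s' (T.b s)}
    ?_ _ ⟨s, rfl, rfl, h⟩
  rintro _ ⟨s', rfl, hb, hq⟩
  by_cases hi : T.ins j s'
  · left
    exact T.M_zero (q := up j s') (hq s' List.suffix_rfl hi.1)
  right
  have e1 : T.fam.l (up j s') = up j (false :: s') := by simp [fam, lf, hi]
  have e2 : T.fam.r (up j s') = up j (true :: s') := by simp [fam, rt, hi]
  rw [e1, e2]
  refine ⟨T.M_zero (q := up j (false :: s')) ?_,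
    ⟨true :: s', rfl, by rw [T.bR, hb], T.quiet_cons hq _⟩⟩
  simp only [nd, T.bL, mem_Icc, not_and, ← hb]
  intro _ h'; linarith [T.mb s']

lemma M_up_le {j : ℕ} {s : List Bool} {y : ℝ} (h : T.quiet s y) : T.M (up j s) y ≤ 1 := by
  refine T.fam.M_le_one (y := y) {q | ∃ s', q = up j s' ∧ T.quiet s' y}
    ?_ _ ⟨s, rfl, h⟩
  rintro _ ⟨s', rfl, hq⟩
  by_cases hi : T.ins j s'
  · left
    exact T.M_zero (q := up j s') (hq s' List.suffix_rfl hi.1)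
  right
  have e1 : T.fam.l (up j s') = up j (false :: s') := by simp [fam, lf, hi]
  have e2 : T.fam.r (up j s') = up j (true :: s') := by simp [fam, rt, hi]
  rw [e1, e2]
  rcases lt_trichotomy y (T.m s') with h | h | h
  · right
    refine ⟨⟨_, rfl, T.quiet_cons hq _⟩, T.M_zero (q := up j (true :: s')) ?_⟩
    simp only [nd, T.aR, mem_Icc, not_and]
    intro h'; linarith
  · left
    refine ⟨?_, ⟨_, rfl, T.quiet_cons hq _⟩⟩
    have := T.M_up_end (j := j) (s := false :: s') (by rw [T.bL, ← h]; exact T.quiet_cons hq _)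
    rw [T.bL, ← h] at this
    exact this
  · left
    refine ⟨T.M_zero (q := up j (false :: s')) ?_, ⟨_, rfl, T.quiet_cons hq _⟩⟩
    simp only [nd, T.bL, mem_Icc, not_and]
    intro h'; linarith

open Classical in
lemma C_quiet {s : List Bool} {y : ℝ} (h : T.quiet s y) :
    T.C s y = if y ∈ Ico (T.a s) (T.b s) then ((1 + T.k s : ℕ) : ℕ∞) else 0 := by
  refine le_antisymm ?_ (T.C_ge s y)
  unfold C
  split_ifs with h1
  · calc _ ≤ ∑ j ∈ Finset.range (T.k s + 1), (1 : ℕ∞) := Finset.sum_le_sum fun j _ => T.M_up_le h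
      _ = _ := by simp [add_comm]
  · apply le_of_eq
    apply Finset.sum_eq_zero
    intro j _
    by_cases h2 : y = T.b s
    · subst h2; exact T.M_up_end h
    · apply T.M_zero
      simp only [nd, mem_Icc]
      rintro ⟨h3, h4⟩
      exact h1 ⟨h3, lt_of_le_of_ne h4 h2⟩

/-- right chain, `n` steps below `s` -/
def rc (y : ℝ) : ℕ → List Bool → List Bool
  | 0, s => s
  | n+1, s => rc y n (decide (T.m s ≤ y) :: s)

def lc (y : ℝ) : ℕ → List Bool → List Bool
  | 0, s => s
  | n+1, s => lc y n (decide (T.m s < y) :: s)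

open Classical in
/-- number of good nodes in the left chain -/
def la (y : ℝ) : ℕ → List Bool → ℕ
  | 0, _ => 0
  | n+1, s => (if T.good s then 1 else 0) + la y n (decide (T.m s < y) :: s)

lemma la_eq (y : ℝ) (n : ℕ) (s : List Bool) : T.la y n s + T.k s = T.k (T.lc y n s) := by
  induction n generalizing s with
  | zero => simp [la, lc]
  | succ n ih =>
    rw [la, lc, ← ih]
    simp only [k, lev]
    ring

open Classical in
def V (y : ℝ) : ℕ → List Bool → ℕ∞
  | 0, s => if y ∈ Ico (T.a s) (T.b s) then ((1 + T.k s : ℕ) : ℕ∞) else 0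
  | n+1, s => V y n (false :: s) + V y n (true :: s) +
      if T.good s ∧ y ∈ Ioc (T.a s) (T.b s) then 1 else 0

lemma V_le (y : ℝ) (n : ℕ) (s : List Bool) : T.V y n s ≤ T.C s y := by
  induction n generalizing s with
  | zero => exact T.C_ge s y
  | succ n ih =>
    rw [V, C_eq]
    gcongr <;> exact ih _

lemma V_quiet (y : ℝ) (n : ℕ) (s : List Bool)
    (h : ∀ s', s.length + n ≤ s'.length → T.good s' → y ∉ Icc (T.a s') (T.b s')) :
    T.C s y = T.V y n s := by
  induction n generalizing s with
  | zero =>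
    apply T.C_quiet
    intro s' hs hg
    exact h s' (by simpa using hs.length_le) hg
  | succ n ih =>
    rw [V, C_eq, ih, ih]
    all_goals
      intro s' hs hg
      refine h s' ?_ hg
      simp only [List.length_cons] at hs
      omega

open Classical in
lemma V_eq (y : ℝ) (n : ℕ) (s : List Bool) : T.V y n s =
    (if y ∈ Ico (T.a s) (T.b s) then ((1 + T.k (T.rc y n s) : ℕ) : ℕ∞) else 0) +
    (if y ∈ Ioc (T.a s) (T.b s) then ((T.la y n s : ℕ) : ℕ∞) else 0) := by
  induction n generalizing s with
  | zero => simp [V, rc, la]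
  | succ n ih =>
    rw [V, ih, ih, rc, la]
    simp only [T.aL, T.aR, T.bL, T.bR, mem_Ico, mem_Ioc]
    have h1 := T.am s
    have h2 := T.mb s
    rcases lt_trichotomy y (T.m s) with h | h | h
    · have e1 : ¬ (T.m s ≤ y) := by linarith
      have e2 : ¬ (T.m s < y) := by linarith
      have e3 : y < T.b s := by linarith
      by_cases hg : T.good s <;> by_cases ha : T.a s ≤ y <;> by_cases ha' : T.a s < y <;>
        simp [e1, e2, e3, e3.le, h, h.le, hg, ha, ha'] <;> (try ring)
      all_goals (first | (exfalso; linarith) | (norm_cast; ring))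
    · subst h
      by_cases hg : T.good s <;> simp [h1, h2, h1.le, h2.le, hg] <;> (try ring)
    · have e1 : (T.m s ≤ y) := by linarith
      have e2 : ¬ (y < T.m s) := by linarith
      have e2' : ¬ (y ≤ T.m s) := by linarith
      have e3 : T.a s < y := by linarith
      by_cases hg : T.good s <;> by_cases ha : y ≤ T.b s <;> by_cases ha' : y < T.b s <;>
        simp [e1, e2, e2', e3, e3.le, h, h.le, hg, ha, ha'] <;> (try ring)
      all_goals (first | (exfalso; linarith) | (norm_cast; ring))

end Tr


def lv (σ : ℕ → ℕ) : ℕ → ℕ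
  | 0 => 0
  | n+1 => Nat.pair (lv σ n) (σ n) + 1

def pr (k : ℕ) : ℕ := (Nat.unpair (k-1)).1

lemma pr_lt {k : ℕ} : pr (k+1) ≤ k := by
  simpa [pr] using Nat.unpair_left_le k

lemma pr_lv (σ : ℕ → ℕ) (n : ℕ) : pr (lv σ (n+1)) = lv σ n := by simp [pr, lv]

lemma lv_lt (σ : ℕ → ℕ) (n : ℕ) : lv σ n < lv σ (n+1) := by
  rw [lv]; exact Nat.lt_succ_of_le (Nat.left_le_pair _ _)

lemma lv_mono (σ : ℕ → ℕ) : StrictMono (lv σ) := strictMono_nat_of_lt_succ (lv_lt σ)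

lemma lv_inj {σ τ : ℕ → ℕ} {n n' : ℕ} (h : lv σ n = lv τ n') :
    n = n' ∧ ∀ m < n, σ m = τ m := by
  induction n generalizing n' with
  | zero =>
    cases n' with
    | zero => simp
    | succ n' => simp [lv] at h
  | succ n ih =>
    cases n' with
    | zero => simp [lv] at h
    | succ n' =>
      simp only [lv, add_left_inj, Nat.pair_eq_pair] at h
      obtain ⟨rfl, h2⟩ := ih h.1
      refine ⟨rfl, fun m hm => ?_⟩
      rcases Nat.lt_succ_iff_lt_or_eq.1 hm with h3 | rfl
      · exact h2 m h3
      · exact h.2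

lemma lv_limit (κ n : ℕ → ℕ) (τ : ℕ → ℕ → ℕ) (h1 : ∀ i, lv (τ i) (n i) = κ i)
    (h0 : ∀ i, 1 ≤ κ i) (h2 : ∀ i, pr (κ (i+1)) = κ i) :
    ∃ σ : ℕ → ℕ, Filter.Tendsto τ Filter.atTop (nhds σ) := by
  have step : ∀ i, n (i+1) = n i + 1 ∧ ∀ m < n i, τ i m = τ (i+1) m := by
    intro i
    have h := h1 (i+1)
    cases hn : n (i+1) with
    | zero => rw [hn] at h; have := h0 (i+1); simp [lv] at h; omega
    | succ n' =>
      rw [hn] at h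
      have h3 : lv (τ i) (n i) = lv (τ (i+1)) n' := by
        rw [h1, ← h2, ← h, pr_lv]
      obtain ⟨h4, h5⟩ := lv_inj h3
      exact ⟨by rw [h4], h5⟩
  have hn : ∀ i, i ≤ n i := by
    intro i
    induction i with
    | zero => simp
    | succ i ih => have := (step i).1; omega
  refine ⟨fun m => τ (m+1) m, ?_⟩
  rw [tendsto_pi_nhds]
  intro m
  have : ∀ i, m + 1 ≤ i → τ i m = τ (m+1) m := by
    intro i hi
    induction i, hi using Nat.le_induction with
    | base => rfl
    | succ i hi ih => rw [← ih, (step i).2 m (lt_of_lt_of_le hi (hn i))]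
  apply tendsto_const_nhds.congr'
  filter_upwards [Filter.eventually_ge_atTop (m+1)] with i hi
  exact (this i hi).symm

namespace Tr
open St
variable (T : Tr)

lemma skip_child {j : ℕ} {s : List Bool} {y : ℝ} (h : ¬ T.Cn (skip j s) y) :
    ∃ d, ¬ T.Cn (up j (d :: s)) y := by
  by_contra hc
  push Not at hc
  exact h ((T.Cn_iff _ _).2 ⟨hc false, hc true⟩)

lemma Cn_dn (s : List Bool) (y : ℝ) : T.Cn (dn s) y := T.fam.Cn_of_M (T.M_dn_le s y)

lemma Cn_exc {j : ℕ} {s : List Bool} {y : ℝ} (h : T.Cn (skip j s) y) : T.Cn (exc j s) y :=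
  (T.Cn_iff _ _).2 ⟨h, T.Cn_dn s y⟩

lemma Cn_notMem {q : St} {y : ℝ} (h : y ∉ Icc (T.a (nd q)) (T.b (nd q))) : T.Cn q y :=
  T.fam.Cn_of_notMem h

lemma unc_step {j : ℕ} {s : List Bool} {y : ℝ} (h : ¬ T.Cn (up j s) y) :
    ∃ s', s <:+ s' ∧ T.good s' ∧ T.pi s' = j ∧ y ∈ Icc (T.a s') (T.b s') ∧
      ¬ T.Cn (skip (T.k s' + 1) s') y := by
  by_contra hc
  push Not at hc
  have hexc : ∀ s', s <:+ s' → T.ins j s' → T.Cn (exc (T.k s' + 1) s') y := by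
    intro s' hs hi
    by_cases hy : y ∈ Icc (T.a s') (T.b s')
    · exact T.Cn_exc (hc s' hs hi.1 hi.2 hy)
    · exact T.Cn_notMem hy
  have X1 : ∀ q ∈ {q | ∃ s', s <:+ s' ∧ (q = up j s' ∨ q = skip j s') ∧ T.b s' = y},
      T.Cn q y := by
    apply T.fam.Cn_all
    rintro q ⟨s', hs, hq, hb⟩
    right; left
    have hnm : T.Cn (up j (false :: s')) y := by
      apply T.Cn_notMem
      simp only [nd, T.bL, mem_Icc, not_and, ← hb]
      intro _ h'; linarith [T.mb s']
    have hR : up j (true :: s') ∈ {q | ∃ s', s <:+ s' ∧ (q = up j s' ∨ q = skip j s') ∧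
        T.b s' = y} :=
      ⟨_, hs.trans (List.suffix_cons _ _), Or.inl rfl, by rw [T.bR, hb]⟩
    rcases hq with rfl | rfl
    · by_cases hi : T.ins j s'
      · have e1 : T.fam.l (up j s') = exc (T.k s' + 1) s' := by simp [fam, lf, hi]
        have e2 : T.fam.r (up j s') = skip j s' := by simp [fam, rt, hi]
        rw [e1, e2]
        exact ⟨hexc s' hs hi, s', hs, Or.inr rfl, hb⟩
      · have e1 : T.fam.l (up j s') = up j (false :: s') := by simp [fam, lf, hi]
        have e2 : T.fam.r (up j s') = up j (true :: s') := by simp [fam, rt, hi]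
        rw [e1, e2]
        exact ⟨hnm, hR⟩
    · exact ⟨hnm, hR⟩
  have X3 : ∀ q ∈ {q | ∃ s', s <:+ s' ∧ (q = up j s' ∨ q = skip j s')}, T.Cn q y := by
    apply T.fam.Cn_all
    rintro q ⟨s', hs, hq⟩
    right
    have hL : up j (false :: s') ∈ {q | ∃ s', s <:+ s' ∧ (q = up j s' ∨ q = skip j s')} :=
      ⟨_, hs.trans (List.suffix_cons _ _), Or.inl rfl⟩
    have hR : up j (true :: s') ∈ {q | ∃ s', s <:+ s' ∧ (q = up j s' ∨ q = skip j s')} :=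
      ⟨_, hs.trans (List.suffix_cons _ _), Or.inl rfl⟩
    have main : (T.Cn (up j (false :: s')) y ∧ up j (true :: s') ∈
        {q | ∃ s', s <:+ s' ∧ (q = up j s' ∨ q = skip j s')}) ∨
        (up j (false :: s') ∈ {q | ∃ s', s <:+ s' ∧ (q = up j s' ∨ q = skip j s')} ∧
          T.Cn (up j (true :: s')) y) := by
      rcases lt_trichotomy y (T.m s') with h | h | h
      · right
        refine ⟨hL, T.Cn_notMem ?_⟩
        simp only [nd, T.aR, mem_Icc, not_and]
        intro h'; linarith
      · left
        exact ⟨X1 _ ⟨_, hs.trans (List.suffix_cons _ _), Or.inl rfl, by rw [T.bL, h]⟩, hR⟩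
      · left
        refine ⟨T.Cn_notMem ?_, hR⟩
        simp only [nd, T.bL, mem_Icc, not_and]
        intro h'; linarith
    rcases hq with rfl | rfl
    · by_cases hi : T.ins j s'
      · have e1 : T.fam.l (up j s') = exc (T.k s' + 1) s' := by simp [fam, lf, hi]
        have e2 : T.fam.r (up j s') = skip j s' := by simp [fam, rt, hi]
        rw [e1, e2]
        left
        exact ⟨hexc s' hs hi, s', hs, Or.inr rfl⟩
      · have e1 : T.fam.l (up j s') = up j (false :: s') := by simp [fam, lf, hi]
        have e2 : T.fam.r (up j s') = up j (true :: s') := by simp [fam, rt, hi]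
        rw [e1, e2]
        exact main
    · exact main
  exact h (X3 _ ⟨s, List.suffix_rfl, Or.inl rfl⟩)

/-- `level k` is alive at `s` -/
def Alive (p : (ℕ → ℕ) → ℝ) (a b : ℝ) (k : ℕ) : Prop :=
  ∃ τ, (∃ n, lv τ n = k) ∧ p τ ∈ Icc a b

open Classical in
def PiOK (p : (ℕ → ℕ) → ℝ) : Prop :=
  ∀ s, T.pi s = if Alive p (T.a s) (T.b s) (T.k s + 1) then pr (T.k s + 1) else 0

lemma eq_of_close {x : ℝ} {y : ℝ} {s : ℕ → List Bool} (hs : ∀ i, i ≤ (s i).length)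
    {z : ℕ → ℝ} (hz : ∀ i, z i ∈ Icc (T.a (s i)) (T.b (s i)))
    (hy : ∀ i, y ∈ Icc (T.a (s i)) (T.b (s i))) (hx : Filter.Tendsto z Filter.atTop (nhds x)) :
    y = x := by
  refine tendsto_nhds_unique (f := z) (l := Filter.atTop) ?_ hx
  rw [Metric.tendsto_atTop]
  intro ε hε
  obtain ⟨N, hN⟩ := T.small ε hε
  refine ⟨N, fun i hi => ?_⟩
  have := hN (s i) (hi.trans (hs i))
  rw [Real.dist_eq, abs_lt]
  constructor <;> linarith [(hz i).1, (hz i).2, (hy i).1, (hy i).2]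

lemma unc_mem {p : (ℕ → ℕ) → ℝ} (hp : Continuous p) (hpi : T.PiOK p) {y : ℝ}
    (h : ¬ T.Cn (up 0 []) y) : y ∈ range p := by
  have step : ∀ x : {x : ℕ × List Bool // ¬ T.Cn (up x.1 x.2) y},
      ∃ x' : {x : ℕ × List Bool // ¬ T.Cn (up x.1 x.2) y}, ∃ s' d, x.1.2 <:+ s' ∧
        T.pi s' = x.1.1 ∧ y ∈ Icc (T.a s') (T.b s') ∧ x'.1 = (T.k s' + 1, d :: s') := by
    rintro ⟨⟨κ, s⟩, hx⟩
    obtain ⟨s', h1, h2, h3, h4, h5⟩ := T.unc_step hx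
    obtain ⟨d, hd⟩ := T.skip_child h5
    exact ⟨⟨(_, d :: s'), hd⟩, s', d, h1, h3, h4, rfl⟩
  choose nx sn d hn1 hn2 hn3 hn4 using step
  let x : ℕ → {x : ℕ × List Bool // ¬ T.Cn (up x.1 x.2) y} :=
    fun i => Nat.rec ⟨(0, []), h⟩ (fun _ z => nx z) i
  have hx : ∀ i, x (i+1) = nx (x i) := fun i => rfl
  have hlen : ∀ i, i ≤ (x i).1.2.length := by
    intro i
    induction i with
    | zero => simp
    | succ i ih =>
      rw [hx, hn4]
      have := (hn1 (x i)).length_le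
      simp only [List.length_cons]
      omega
  have hpos : ∀ i, 1 ≤ (x (i+1)).1.1 := by
    intro i; rw [hx, hn4]; simp
  have hal : ∀ i, Alive p (T.a (sn (x (i+1)))) (T.b (sn (x (i+1)))) (x (i+2)).1.1 ∧
      pr (x (i+2)).1.1 = (x (i+1)).1.1 := by
    intro i
    have h1 := hpi (sn (x (i+1)))
    rw [hn2] at h1
    have h2 := hpos i
    have e : (x (i+2)).1.1 = T.k (sn (x (i+1))) + 1 := by rw [hx (i+1), hn4]
    rw [e]
    split_ifs at h1 with h3
    · exact ⟨h3, h1.symm⟩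
    · omega
  have hal1 : ∀ i, ∃ τ n, lv τ n = (x (i+2)).1.1 ∧
      p τ ∈ Icc (T.a (sn (x (i+1)))) (T.b (sn (x (i+1)))) := by
    intro i
    obtain ⟨τ, ⟨n, hn⟩, h⟩ := (hal i).1
    exact ⟨τ, n, hn, h⟩
  choose τ hal2 using hal1
  choose n hal3 using hal2
  have hτ := fun i => (hal3 i).1
  have hpτ := fun i => (hal3 i).2
  obtain ⟨σ, hσ⟩ := lv_limit (fun i => (x (i+2)).1.1) n τ hτ (fun i => hpos (i+1))
    (fun i => (hal (i+1)).2)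
  refine ⟨σ, ?_⟩
  symm
  refine T.eq_of_close (s := fun i => sn (x (i+1))) ?_ hpτ (fun i => hn3 _)
    ((hp.tendsto σ).comp hσ)
  intro i
  have h1 := hlen (i+1)
  have h2 := (hn1 (x (i+1))).length_le
  omega

open Classical in
def tp (σ : ℕ → ℕ) : ℕ → ℕ
  | 0 => 0
  | k+1 => if ∃ i, lv σ i = k+1 then k+1 else tp σ k

lemma tp_le (σ : ℕ → ℕ) (k : ℕ) : tp σ k ≤ k := by
  induction k with
  | zero => simp [tp]
  | succ k ih => rw [tp]; split_ifs <;> omega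

lemma tp_self (σ : ℕ → ℕ) (i : ℕ) : tp σ (lv σ i) = lv σ i := by
  cases i with
  | zero => simp [lv, tp]
  | succ i =>
    have : ∃ i', lv σ i' = Nat.pair (lv σ i) (σ i) + 1 := ⟨i+1, rfl⟩
    rw [lv, tp, if_pos this]

lemma tp_between (σ : ℕ → ℕ) (i K : ℕ) (h1 : lv σ i ≤ K) (h2 : K < lv σ (i+1)) :
    tp σ K = lv σ i := by
  induction K, h1 using Nat.le_induction with
  | base => exact tp_self σ i
  | succ K hK ih =>
    rw [tp, if_neg, ih (by omega)]
    rintro ⟨i', h⟩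
    have h3 : i < i' := (lv_mono σ).lt_iff_lt.1 (by omega)
    have h4 : i' < i+1 := (lv_mono σ).lt_iff_lt.1 (by omega)
    omega

lemma tp_inj {σ τ : ℕ → ℕ} (h : ∀ K, tp σ K = tp τ K) : σ = τ := by
  funext m
  have h1 : tp σ (lv σ (m+1)) = lv σ (m+1) := tp_self _ _
  rw [h] at h1
  have h2 : ∃ i, lv τ i = Nat.pair (lv σ m) (σ m) + 1 := by
    by_contra hc
    rw [lv, tp, if_neg hc] at h1
    have := tp_le τ (Nat.pair (lv σ m) (σ m))
    omega
  obtain ⟨i, hi⟩ := h2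
  have h3 : lv σ (m+1) = lv τ i := by rw [hi, lv]
  exact (lv_inj h3).2 m (by omega)

lemma alive_pi {p : (ℕ → ℕ) → ℝ} (hpi : T.PiOK p) {s : List Bool} {σ : ℕ → ℕ}
    (hy : p σ ∈ Icc (T.a s) (T.b s)) (h : ∃ i, lv σ i = T.k s + 1) :
    T.pi s = tp σ (T.k s) := by
  rw [hpi s, if_pos ⟨σ, h, hy⟩]
  obtain ⟨i, hi⟩ := h
  cases i with
  | zero => simp [lv] at hi
  | succ i =>
    rw [← hi, pr_lv, tp_between σ i]
    · have := lv_lt σ i; omega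
    · omega

def bv (d : Bool) : ℝ := if d then 1 else 0

lemma F_child (q q' : St) (d : Bool) (hq : q' = if d then T.rt q else T.lf q) {x : ℝ}
    (hx : x ∈ Icc (0:ℝ) 1) : T.fam.F q (bv d / 2 + x / 2) = T.fam.F q' x := by
  cases d
  · have : T.fam.F q (x/2) = T.fam.F (T.lf q) x := T.fam.F_l q hx
    simp only [bv] at *
    simpa [hq] using this
  · have : T.fam.F q (1/2 + x/2) = T.fam.F (T.rt q) x := T.fam.F_r q hx
    simp only [bv] at *
    simpa [hq] using this

open Classical in
def off (c : ℕ → List Bool) (d : ℕ → Bool) (σ : ℕ → ℕ) (n : ℕ) : ℝ :=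
  if T.ins (tp σ (T.k (c n))) (c n) then
    (if ∃ i, lv σ i = T.k (c n) + 1 then bv (d n) / 8 else 1/2 + bv (d n) / 4)
  else bv (d n) / 2

open Classical in
def scl (c : ℕ → List Bool) (σ : ℕ → ℕ) (n : ℕ) : ℝ :=
  if T.ins (tp σ (T.k (c n))) (c n) then
    (if ∃ i, lv σ i = T.k (c n) + 1 then 1/8 else 1/4)
  else 1/2

def uw (c : ℕ → List Bool) (d : ℕ → Bool) (σ : ℕ → ℕ) : ℕ → ℝ × ℝ
  | 0 => (0, 1)
  | n+1 => ((uw c d σ n).1 + (uw c d σ n).2 * T.off c d σ n, (uw c d σ n).2 * T.scl c σ n)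

lemma bv_nonneg (d : Bool) : 0 ≤ bv d := by cases d <;> simp [bv]
lemma bv_le (d : Bool) : bv d ≤ 1 := by cases d <;> simp [bv]

lemma off_bd (c : ℕ → List Bool) (d : ℕ → Bool) (σ : ℕ → ℕ) (n : ℕ) :
    0 ≤ T.off c d σ n ∧ T.off c d σ n + T.scl c σ n ≤ 1 ∧ 0 < T.scl c σ n := by
  have h1 := bv_nonneg (d n)
  have h2 := bv_le (d n)
  unfold off scl
  split_ifs <;> refine ⟨?_, ?_, ?_⟩ <;> linarith

lemma F_step {p : (ℕ → ℕ) → ℝ} (hpi : T.PiOK p) (c : ℕ → List Bool) (d : ℕ → Bool)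
    (hc : ∀ n, c (n+1) = d n :: c n) {σ : ℕ → ℕ}
    (hσ : ∀ n, p σ ∈ Icc (T.a (c n)) (T.b (c n))) (n : ℕ) {x : ℝ} (hx : x ∈ Icc (0:ℝ) 1) :
    T.fam.F (up (tp σ (T.k (c n))) (c n)) (T.off c d σ n + T.scl c σ n * x) =
      T.fam.F (up (tp σ (T.k (c (n+1)))) (c (n+1))) x := by
  have b1 := bv_nonneg (d n)
  have b2 := bv_le (d n)
  have hx2 : bv (d n) / 2 + x / 2 ∈ Icc (0:ℝ) 1 := by
    constructor <;> linarith [hx.1, hx.2]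
  unfold off scl
  split_ifs with h1 h2
  · have e1 : T.k (c (n+1)) = T.k (c n) + 1 := by rw [hc, T.lev_pos h1.1]
    have e2 : tp σ (T.k (c n) + 1) = T.k (c n) + 1 := by rw [tp, if_pos h2]
    rw [e1, e2, hc]
    rw [← T.F_child (skip (T.k (c n) + 1) (c n)) _ (d n) (by cases d n <;> simp [lf, rt]) hx]
    rw [← T.F_child (exc (T.k (c n) + 1) (c n)) _ false (by simp [lf]) hx2]
    have hx3 : bv false / 2 + (bv (d n) / 2 + x / 2) / 2 ∈ Icc (0:ℝ) 1 := by
      have e : bv false = 0 := by simp [bv]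
      rw [e]
      constructor <;> linarith [hx2.1, hx2.2]
    rw [← T.F_child (up (tp σ (T.k (c n))) (c n)) (exc (T.k (c n) + 1) (c n)) false
      (by simp [lf, h1]) hx3]
    congr 1; simp [bv]; ring
  · have e1 : T.k (c (n+1)) = T.k (c n) + 1 := by rw [hc, T.lev_pos h1.1]
    have e2 : tp σ (T.k (c n) + 1) = tp σ (T.k (c n)) := by rw [tp, if_neg h2]
    rw [e1, e2, hc]
    rw [← T.F_child (skip (tp σ (T.k (c n))) (c n)) _ (d n) (by cases d n <;> simp [lf, rt]) hx]
    rw [← T.F_child (up (tp σ (T.k (c n))) (c n)) _ true (by simp [rt, h1]) hx2]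
    congr 1; simp [bv]; ring
  · have e2 : tp σ (T.k (c (n+1))) = tp σ (T.k (c n)) := by
      by_cases hg : T.good (c n)
      · rw [hc, T.lev_pos hg, tp, if_neg]
        intro hi
        exact h1 ⟨hg, T.alive_pi hpi (hσ n) hi⟩
      · rw [hc, T.lev_neg hg]
    rw [e2, hc]
    rw [← T.F_child (up (tp σ (T.k (c n))) (c n)) _ (d n)
      (by cases d n <;> simp [lf, rt, h1]) hx]
    congr 1; ring

lemma uw_bd (c : ℕ → List Bool) (d : ℕ → Bool) (σ : ℕ → ℕ) (n : ℕ) :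
    0 ≤ (T.uw c d σ n).1 ∧ 0 < (T.uw c d σ n).2 ∧ (T.uw c d σ n).1 + (T.uw c d σ n).2 ≤ 1 ∧
    (T.uw c d σ n).1 ≤ (T.uw c d σ (n+1)).1 ∧
    (T.uw c d σ (n+1)).1 + (T.uw c d σ (n+1)).2 ≤ (T.uw c d σ n).1 + (T.uw c d σ n).2 := by
  have key : ∀ n, 0 < (T.uw c d σ n).2 → (T.uw c d σ n).1 ≤ (T.uw c d σ (n+1)).1 ∧
    (T.uw c d σ (n+1)).1 + (T.uw c d σ (n+1)).2 ≤ (T.uw c d σ n).1 + (T.uw c d σ n).2 := by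
    intro n h
    obtain ⟨h1, h2, h3⟩ := T.off_bd c d σ n
    simp only [uw]
    constructor <;> nlinarith
  induction n with
  | zero =>
    refine ⟨by simp [uw], by simp [uw], by simp [uw], key 0 (by simp [uw])⟩
  | succ n ih =>
    obtain ⟨h1, h2, h3, h4, h5⟩ := ih
    have h6 : 0 < (T.uw c d σ (n+1)).2 := by
      simp only [uw]; exact mul_pos h2 (T.off_bd c d σ n).2.2
    exact ⟨by linarith, h6, by linarith, key _ h6⟩

lemma F_uw {p : (ℕ → ℕ) → ℝ} (hpi : T.PiOK p) (c : ℕ → List Bool) (d : ℕ → Bool)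
    (h0 : c 0 = []) (hc : ∀ n, c (n+1) = d n :: c n) {σ : ℕ → ℕ}
    (hσ : ∀ n, p σ ∈ Icc (T.a (c n)) (T.b (c n))) (n : ℕ) {x : ℝ} (hx : x ∈ Icc (0:ℝ) 1) :
    T.fam.F (up 0 []) ((T.uw c d σ n).1 + (T.uw c d σ n).2 * x) =
      T.fam.F (up (tp σ (T.k (c n))) (c n)) x := by
  induction n generalizing x with
  | zero => simp [uw, h0, k, lev, tp]
  | succ n ih =>
    rw [← T.F_step hpi c d hc hσ n hx, ← ih]
    · congr 1; simp only [uw]; ring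
    · obtain ⟨h1, h2, h3⟩ := T.off_bd c d σ n
      constructor <;> nlinarith [hx.1, hx.2]

lemma exists_t (c : ℕ → List Bool) (d : ℕ → Bool) (σ : ℕ → ℕ) :
    ∃ t, ∀ n, t ∈ Icc (T.uw c d σ n).1 ((T.uw c d σ n).1 + (T.uw c d σ n).2) := by
  have hm : Monotone fun n => (T.uw c d σ n).1 :=
    monotone_nat_of_le_succ fun n => (T.uw_bd c d σ n).2.2.2.1
  have ha : Antitone fun n => (T.uw c d σ n).1 + (T.uw c d σ n).2 :=
    antitone_nat_of_succ_le fun n => (T.uw_bd c d σ n).2.2.2.2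
  have hle : ∀ m n, (T.uw c d σ m).1 ≤ (T.uw c d σ n).1 + (T.uw c d σ n).2 := by
    intro m n
    have h1 := hm (le_max_left m n)
    have h2 := ha (le_max_right m n)
    have h3 := (T.uw_bd c d σ (max m n)).2.1
    simp only at h1 h2
    linarith
  refine ⟨⨆ n, (T.uw c d σ n).1, fun n => ⟨?_, ?_⟩⟩
  · exact le_ciSup (f := fun n => (T.uw c d σ n).1) ⟨_, by rintro _ ⟨m, rfl⟩; exact hle m 0⟩ n
  · exact ciSup_le fun m => hle m n

lemma inj_fib {p : (ℕ → ℕ) → ℝ} (hpi : T.PiOK p) {y : ℝ} (c : ℕ → List Bool) (d : ℕ → Bool)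
    (h0 : c 0 = []) (hc : ∀ n, c (n+1) = d n :: c n)
    (hy : ∀ n, y ∈ Icc (T.a (c n)) (T.b (c n))) (hk : ∀ K, ∃ n, K ≤ T.k (c n)) :
    ∃ t : (ℕ → ℕ) → ℝ, InjOn t {σ | p σ = y} ∧ ∀ σ, p σ = y → t σ ∈ Icc (0:ℝ) 1 ∧
      T.fam.F (up 0 []) (t σ) = y := by
  choose t ht using fun σ => T.exists_t c d σ
  refine ⟨t, ?_, ?_⟩
  · intro σ hσ σ' hσ' htt
    have hσ1 : ∀ n, p σ ∈ Icc (T.a (c n)) (T.b (c n)) := fun n => by rw [show p σ = y from hσ]; exact hy n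
    have hσ2 : ∀ n, p σ' ∈ Icc (T.a (c n)) (T.b (c n)) := fun n => by rw [show p σ' = y from hσ']; exact hy n
    have key : ∀ n, tp σ (T.k (c n)) = tp σ' (T.k (c n)) ∧ T.uw c d σ n = T.uw c d σ' n := by
      intro n
      induction n with
      | zero => simp [h0, k, lev, tp, uw]
      | succ n ih =>
        obtain ⟨e1, e2⟩ := ih
        have hw := (T.uw_bd c d σ n).2.1
        have b1 := bv_nonneg (d n)
        have b2 := bv_le (d n)
        have g1 := (ht σ (n+1))
        have g2 := (ht σ' (n+1))
        rw [← htt] at g2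
        have same : T.ins (tp σ (T.k (c n))) (c n) →
            ((∃ i, lv σ i = T.k (c n) + 1) ↔ (∃ i, lv σ' i = T.k (c n) + 1)) := by
          intro hi
          have hi' := hi
          rw [e1] at hi'
          simp only [uw, off, scl, if_pos hi, if_pos hi', ← e2] at g1 g2
          constructor
          · intro h
            by_contra h'
            rw [if_pos h, if_pos h] at g1
            rw [if_neg h', if_neg h'] at g2
            nlinarith [g1.1, g1.2, g2.1, g2.2]
          · intro h
            by_contra h'
            rw [if_neg h', if_neg h'] at g1
            rw [if_pos h, if_pos h] at g2
            nlinarith [g1.1, g1.2, g2.1, g2.2]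
        by_cases hi : T.ins (tp σ (T.k (c n))) (c n)
        · have hi' := hi
          rw [e1] at hi'
          have hs := same hi
          constructor
          · rw [hc, T.lev_pos hi.1, tp, tp]
            by_cases h : ∃ i, lv σ i = T.k (c n) + 1
            · rw [if_pos h, if_pos (hs.1 h)]
            · rw [if_neg h, if_neg (fun h' => h (hs.2 h')), e1]
          · simp only [uw, off, scl, if_pos hi, if_pos hi', ← e2]
            by_cases h : ∃ i, lv σ i = T.k (c n) + 1
            · rw [if_pos h, if_pos (hs.1 h), if_pos h, if_pos (hs.1 h)]
            · rw [if_neg h, if_neg (fun h' => h (hs.2 h')), if_neg h,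
                if_neg (fun h' => h (hs.2 h'))]
        · have hi' := hi
          rw [e1] at hi'
          constructor
          · by_cases hg : T.good (c n)
            · rw [hc, T.lev_pos hg, tp, tp, if_neg, if_neg, e1]
              · intro h; exact hi' ⟨hg, T.alive_pi hpi (hσ2 n) h⟩
              · intro h; exact hi ⟨hg, T.alive_pi hpi (hσ1 n) h⟩
            · rw [hc, T.lev_neg hg, e1]
          · simp only [uw, off, scl, if_neg hi, if_neg hi', ← e2]
    apply tp_inj
    intro K
    have : ∃ n, T.k (c n) = K := by
      classical
      have hf := Nat.find_spec (hk K)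
      cases hn : Nat.find (hk K) with
      | zero =>
        rw [hn, h0] at hf
        refine ⟨0, ?_⟩
        simp only [k, lev] at hf
        rw [h0]; simp only [k, lev]; omega
      | succ n =>
        have hm := Nat.find_min (hk K) (m := n) (by omega)
        rw [hn] at hf
        refine ⟨n+1, le_antisymm ?_ hf⟩
        have : T.k (c (n+1)) ≤ T.k (c n) + 1 := by
          rw [hc]
          by_cases hg : T.good (c n)
          · rw [T.lev_pos hg]
          · rw [T.lev_neg hg]; omega
        omega
    obtain ⟨n, rfl⟩ := this
    exact (key n).1
  · intro σ hσ
    have hσ1 : ∀ n, p σ ∈ Icc (T.a (c n)) (T.b (c n)) := fun n => by rw [hσ]; exact hy n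
    have h00 := ht σ 0
    simp only [uw, zero_add] at h00
    refine ⟨h00, ?_⟩
    symm
    refine T.eq_of_close (s := c) (z := fun _ => T.fam.F (up 0 []) (t σ)) ?_ ?_ hy
      tendsto_const_nhds
    · intro i
      induction i with
      | zero => simp
      | succ i ih => rw [hc, List.length_cons]; omega
    · intro n
      obtain ⟨g1, g2⟩ := ht σ n
      have hw := (T.uw_bd c d σ n).2.1
      have hx : (t σ - (T.uw c d σ n).1) / (T.uw c d σ n).2 ∈ Icc (0:ℝ) 1 :=
        ⟨div_nonneg (by linarith) hw.le, (div_le_one hw).2 (by linarith)⟩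
      have := T.F_uw hpi c d h0 hc hσ1 n hx
      rw [show (T.uw c d σ n).1 + (T.uw c d σ n).2 *
        ((t σ - (T.uw c d σ n).1) / (T.uw c d σ n).2) = t σ by field_simp; ring] at this
      simp only [this]
      exact T.fam.F_mem (up _ (c n)) hx

end Tr


structure Dat where
  α : ℝ → ℕ∞
  β : ℝ → ℕ∞
  O : ℕ → Set ℝ
  hO : ∀ k, IsOpen (O k)
  hα : ∀ (k : ℕ) y, (k : ℕ∞) ≤ α y → ∃ δ > 0, Ioo (y - δ) y ⊆ O k
  hβ : ∀ (k : ℕ) y, (k : ℕ∞) ≤ β y → ∃ δ > 0, Ioo y (y + δ) ⊆ O k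
  hOα : ∀ k, ∀ y ∈ O k, (k : ℕ∞) ≤ α y
  hOβ : ∀ k, ∀ y ∈ O k, (k : ℕ∞) ≤ β y
  O0 : O 0 = Set.univ
  q : ℕ → ℝ
  hq : ∀ r : ℚ, ∃ n, q n = r
  hX : ∀ y, y ∉ range q → ∀ k : ℕ, ((k : ℕ∞) ≤ α y ∨ (k : ℕ∞) ≤ β y) → y ∈ O k
  p : (ℕ → ℕ) → ℝ

namespace Dat
variable (D : Dat)

open Classical in
def mid (a b : ℝ) : ℝ := if h : ∃ n, D.q n ∈ Ioo a b then D.q (Nat.find h) else (a + b) / 2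

def iv : List Bool → ℝ × ℝ
  | [] => (0, 1)
  | false :: s => ((iv s).1, D.mid (iv s).1 (iv s).2)
  | true :: s => (D.mid (iv s).1 (iv s).2, (iv s).2)

lemma exq {a b : ℝ} (h : a < b) : ∃ n, D.q n ∈ Ioo a b := by
  obtain ⟨r, h1, h2⟩ := exists_rat_btwn h
  obtain ⟨n, hn⟩ := D.hq r
  exact ⟨n, by rw [hn]; exact ⟨h1, h2⟩⟩

lemma mid_mem {a b : ℝ} (h : a < b) : D.mid a b ∈ Ioo a b := by
  classical
  have := D.exq h
  rw [mid, dif_pos this]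
  exact Nat.find_spec this

lemma mid_first {a b : ℝ} (h : a < b) {i : ℕ} (hi : D.q i ∈ Ioo a b) :
    D.q i = D.mid a b ∨ ∃ j < i, D.q j ∈ Ioo a b := by
  classical
  have := D.exq h
  rw [mid, dif_pos this]
  rcases (Nat.find_min' this hi).lt_or_eq with h1 | h1
  · right; exact ⟨_, h1, Nat.find_spec this⟩
  · left; rw [h1]

lemma iv_lt (s : List Bool) : (D.iv s).1 < (D.iv s).2 := by
  induction s with
  | nil => simp [iv]
  | cons d s ih =>
    have := D.mid_mem ih
    cases d
    · exact this.1
    · exact this.2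

lemma iv_bd (s : List Bool) : 0 ≤ (D.iv s).1 ∧ (D.iv s).2 ≤ 1 := by
  induction s with
  | nil => simp [iv]
  | cons d s ih =>
    have := D.mid_mem (D.iv_lt s)
    cases d
    · exact ⟨ih.1, (this.2.trans_le ih.2).le⟩
    · exact ⟨(ih.1.trans_lt this.1).le, ih.2⟩

lemma iv_q (s : List Bool) (i : ℕ) (hi : i < s.length) : D.q i ∉ Ioo (D.iv s).1 (D.iv s).2 := by
  induction s generalizing i with
  | nil => simp at hi
  | cons d s ih =>
    intro h
    have hm := D.mid_mem (D.iv_lt s)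
    have h1 : D.q i ∈ Ioo (D.iv s).1 (D.iv s).2 := by
      cases d
      · exact ⟨h.1, h.2.trans hm.2⟩
      · exact ⟨hm.1.trans h.1, h.2⟩
    rcases D.mid_first (D.iv_lt s) h1 with h2 | ⟨j, hj, h2⟩
    · rw [h2] at h
      cases d
      · exact lt_irrefl _ h.2
      · exact lt_irrefl _ h.1
    · simp only [List.length_cons] at hi
      exact ih j (by omega) h2

lemma iv_small (ε : ℝ) (hε : 0 < ε) : ∃ N, ∀ s : List Bool, N ≤ s.length →
    (D.iv s).2 - (D.iv s).1 < ε := by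
  obtain ⟨M, hM⟩ := exists_nat_one_div_lt hε
  choose idx hidx using D.hq
  refine ⟨(Finset.range (M+2)).sup (fun j => idx ((j:ℚ) / (M+1)) + 1), fun s hs => ?_⟩
  by_contra hc
  push Not at hc
  have h0 := D.iv_bd s
  have hMp : (0:ℝ) < M + 1 := by positivity
  set a := (D.iv s).1
  set b := (D.iv s).2
  have hf1 := Nat.lt_floor_add_one (a * (M+1))
  have hf2 := Nat.floor_le (mul_nonneg h0.1 hMp.le)
  set j := ⌊a * (M+1)⌋₊
  have g1 : a < ((j+1 : ℕ) : ℝ) / (M+1) := by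
    rw [lt_div_iff₀ hMp]; push_cast; exact hf1
  have g2 : ((j+1 : ℕ) : ℝ) / (M+1) < b := by
    have : ((j+1 : ℕ) : ℝ) / (M+1) ≤ a + 1 / (M+1) := by
      rw [div_le_iff₀ hMp, add_mul, one_div_mul_cancel hMp.ne']; push_cast; linarith
    linarith
  have g3 : j + 1 < M + 2 := by
    have : ((j+1 : ℕ) : ℝ) / (M+1) < 1 := by linarith [h0.2]
    rw [div_lt_one hMp] at this
    have h' : ((j + 1 : ℕ) : ℝ) < ((M + 1 : ℕ) : ℝ) := by push_cast at *; exact this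
    have := Nat.cast_lt.1 h'
    omega
  have g4 := Finset.le_sup (f := fun j : ℕ => idx ((j:ℚ) / (M+1)) + 1) (Finset.mem_range.2 g3)
  refine D.iv_q s (idx (((j+1 : ℕ) : ℚ) / (M+1))) (by omega) ?_
  rw [hidx]
  push_cast at *
  exact ⟨g1, g2⟩

def allowed (κ : ℕ) (x : ℝ × ℝ) : Prop :=
  Ioo x.1 x.2 ⊆ D.O κ ∧ (κ : ℕ∞) ≤ D.β x.1 ∧ (κ : ℕ∞) ≤ D.α x.2

open Classical in
def lvl : List Bool → ℕ
  | [] => 0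
  | _ :: s => lvl s + if D.allowed (lvl s + 1) (D.iv s) then 1 else 0

def gd (s : List Bool) : Prop := D.allowed (D.lvl s + 1) (D.iv s)

lemma lev_gd (s : List Bool) : lev D.gd s = D.lvl s := by
  classical
  induction s with
  | nil => rfl
  | cons d s ih =>
    rw [lev, lvl, ih]
    rfl

open Classical in
def T : Tr where
  a s := (D.iv s).1
  b s := (D.iv s).2
  m s := D.mid (D.iv s).1 (D.iv s).2
  a0 := rfl
  b0 := rfl
  aL s := rfl
  bL s := rfl
  aR s := rfl
  bR s := rfl
  am s := (D.mid_mem (D.iv_lt s)).1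
  mb s := (D.mid_mem (D.iv_lt s)).2
  small ε hε := D.iv_small ε hε
  good := D.gd
  pi s := if Tr.Alive D.p (D.iv s).1 (D.iv s).2 (lev D.gd s + 1) then pr (lev D.gd s + 1) else 0
  pi_le s := by
    split_ifs
    · exact pr_lt
    · exact Nat.zero_le _

lemma piOK : D.T.PiOK D.p := fun s => rfl

lemma k_eq (s : List Bool) : D.T.k s = D.lvl s := D.lev_gd s

lemma good_iff (s : List Bool) : D.T.good s ↔ D.allowed (D.T.k s + 1) (D.iv s) := by
  rw [k_eq]; exact Iff.rfl

lemma allowed_child {κ : ℕ} {s : List Bool} (h : D.allowed κ (D.iv s)) (d : Bool) :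
    D.allowed κ (D.iv (d :: s)) := by
  have hm := D.mid_mem (D.iv_lt s)
  obtain ⟨h1, h2, h3⟩ := h
  have hO := h1 hm
  cases d
  · exact ⟨fun z hz => h1 ⟨hz.1, hz.2.trans hm.2⟩, h2, D.hOα _ _ hO⟩
  · exact ⟨fun z hz => h1 ⟨hm.1.trans hz.1, hz.2⟩, D.hOβ _ _ hO, h3⟩

lemma inv (s : List Bool) : D.allowed (D.T.k s) (D.iv s) := by
  induction s with
  | nil => simp [allowed, Tr.k, lev, D.O0]
  | cons d s ih =>
    by_cases hg : D.T.good s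
    · rw [Tr.lev_pos _ hg]
      exact D.allowed_child ((D.good_iff s).1 hg) d
    · rw [Tr.lev_neg _ hg]
      exact D.allowed_child ih d

lemma allowed_β {κ : ℕ} {s : List Bool} (h : D.allowed κ (D.iv s)) {y : ℝ}
    (hy : y ∈ Ico (D.iv s).1 (D.iv s).2) : (κ : ℕ∞) ≤ D.β y := by
  rcases hy.1.eq_or_lt with h1 | h1
  · rw [← h1]; exact h.2.1
  · exact D.hOβ _ _ (h.1 ⟨h1, hy.2⟩)

lemma allowed_α {κ : ℕ} {s : List Bool} (h : D.allowed κ (D.iv s)) {y : ℝ}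
    (hy : y ∈ Ioc (D.iv s).1 (D.iv s).2) : (κ : ℕ∞) ≤ D.α y := by
  rcases hy.2.eq_or_lt with h1 | h1
  · rw [h1]; exact h.2.2
  · exact D.hOα _ _ (h.1 ⟨hy.1, h1⟩)

lemma rc_succ (y : ℝ) (n : ℕ) (s : List Bool) : D.T.rc y (n+1) s =
    decide (D.T.m (D.T.rc y n s) ≤ y) :: D.T.rc y n s := by
  induction n generalizing s with
  | zero => rfl
  | succ n ih => rw [Tr.rc, ih]; rfl

lemma lc_succ (y : ℝ) (n : ℕ) (s : List Bool) : D.T.lc y (n+1) s =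
    decide (D.T.m (D.T.lc y n s) < y) :: D.T.lc y n s := by
  induction n generalizing s with
  | zero => rfl
  | succ n ih => rw [Tr.lc, ih]; rfl

lemma rc_mem {y : ℝ} (hy : y ∈ Ico (0:ℝ) 1) (n : ℕ) :
    y ∈ Ico (D.iv (D.T.rc y n [])).1 (D.iv (D.T.rc y n [])).2 := by
  induction n with
  | zero => exact hy
  | succ n ih =>
    rw [rc_succ]
    by_cases h : D.T.m (D.T.rc y n []) ≤ y
    · rw [decide_eq_true h]; exact ⟨h, ih.2⟩
    · rw [decide_eq_false h]; exact ⟨ih.1, not_le.1 h⟩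

lemma lc_mem {y : ℝ} (hy : y ∈ Ioc (0:ℝ) 1) (n : ℕ) :
    y ∈ Ioc (D.iv (D.T.lc y n [])).1 (D.iv (D.T.lc y n [])).2 := by
  induction n with
  | zero => exact hy
  | succ n ih =>
    rw [lc_succ]
    by_cases h : D.T.m (D.T.lc y n []) < y
    · rw [decide_eq_true h]; exact ⟨h, ih.2⟩
    · rw [decide_eq_false h]; exact ⟨ih.1, not_lt.1 h⟩

lemma rc_uniq {y : ℝ} (s : List Bool) (hy : y ∈ Ico (D.iv s).1 (D.iv s).2) :
    s = D.T.rc y s.length [] := by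
  induction s with
  | nil => rfl
  | cons d s ih =>
    have hm := D.mid_mem (D.iv_lt s)
    rw [List.length_cons, rc_succ]
    cases d
    · rw [← ih ⟨hy.1, hy.2.trans hm.2⟩, decide_eq_false]
      exact not_le.2 hy.2
    · rw [← ih ⟨hm.1.le.trans hy.1, hy.2⟩, decide_eq_true]
      exact hy.1

lemma lc_uniq {y : ℝ} (s : List Bool) (hy : y ∈ Ioc (D.iv s).1 (D.iv s).2) :
    s = D.T.lc y s.length [] := by
  induction s with
  | nil => rfl
  | cons d s ih =>
    have hm := D.mid_mem (D.iv_lt s)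
    rw [List.length_cons, lc_succ]
    cases d
    · rw [← ih ⟨hy.1, hy.2.trans hm.2.le⟩, decide_eq_false]
      exact not_lt.2 hy.2
    · rw [← ih ⟨hm.1.trans hy.1, hy.2⟩, decide_eq_true]
      exact hy.1

lemma rc_len (y : ℝ) (n : ℕ) : (D.T.rc y n []).length = n := by
  induction n with
  | zero => rfl
  | succ n ih => rw [rc_succ, List.length_cons, ih]

lemma lc_len (y : ℝ) (n : ℕ) : (D.T.lc y n []).length = n := by
  induction n with
  | zero => rfl
  | succ n ih => rw [lc_succ, List.length_cons, ih]

lemma k_cons_le (d : Bool) (s : List Bool) : D.T.k s ≤ D.T.k (d :: s) := by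
  by_cases hg : D.T.good s
  · rw [Tr.lev_pos _ hg]; omega
  · rw [Tr.lev_neg _ hg]

lemma rc_mono (y : ℝ) : Monotone fun n => D.T.k (D.T.rc y n []) :=
  monotone_nat_of_le_succ fun n => by rw [rc_succ]; exact D.k_cons_le _ _

lemma lc_mono (y : ℝ) : Monotone fun n => D.T.k (D.T.lc y n []) :=
  monotone_nat_of_le_succ fun n => by rw [lc_succ]; exact D.k_cons_le _ _

/-- small nodes around an interior point of `O κ` are allowed -/
lemma allowed_small {κ : ℕ} {y : ℝ} (hy : y ∈ D.O κ) : ∃ N, ∀ s : List Bool, N ≤ s.length →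
    y ∈ Icc (D.iv s).1 (D.iv s).2 → D.allowed κ (D.iv s) := by
  obtain ⟨ε, hε, h⟩ := Metric.isOpen_iff.1 (D.hO κ) y hy
  obtain ⟨N, hN⟩ := D.iv_small ε hε
  refine ⟨N, fun s hs hm => ?_⟩
  have h1 := hN s hs
  have key : ∀ z ∈ Icc (D.iv s).1 (D.iv s).2, z ∈ D.O κ := by
    intro z hz
    apply h
    rw [Metric.mem_ball, Real.dist_eq, abs_lt]
    constructor <;> linarith [hz.1, hz.2, hm.1, hm.2]
  have hlt := (D.iv_lt s).le
  exact ⟨fun z hz => key z (Ioo_subset_Icc_self hz), D.hOβ _ _ (key _ ⟨le_rfl, hlt⟩),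
    D.hOα _ _ (key _ ⟨hlt, le_rfl⟩)⟩

lemma rc_att {y : ℝ} (hy : y ∈ Ico (0:ℝ) 1) (κ : ℕ) (h : (κ : ℕ∞) ≤ D.β y) :
    ∃ n, κ ≤ D.T.k (D.T.rc y n []) := by
  induction κ with
  | zero => exact ⟨0, Nat.zero_le _⟩
  | succ κ ih =>
    obtain ⟨n₀, hn₀⟩ := ih (le_trans (by exact_mod_cast Nat.le_succ κ) h)
    by_contra hc
    push Not at hc
    have hk : ∀ n, n₀ ≤ n → D.T.k (D.T.rc y n []) = κ := fun n hn => by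
      have h1 := D.rc_mono y hn
      simp only at h1
      have := hc n
      omega
    have hng : ∀ n, n₀ ≤ n → ¬ D.allowed (κ+1) (D.iv (D.T.rc y n [])) := by
      intro n hn ha
      have hg : D.T.good (D.T.rc y n []) := by rw [good_iff, hk n hn]; exact ha
      have := hc (n+1)
      rw [rc_succ, Tr.lev_pos _ hg, hk n hn] at this
      omega
    by_cases hA : ∃ n, (D.iv (D.T.rc y n [])).1 = y
    · obtain ⟨n₁, hn₁⟩ := hA
      have hst : ∀ n, n₁ ≤ n → (D.iv (D.T.rc y n [])).1 = y := by
        intro n hn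
        induction n, hn using Nat.le_induction with
        | base => exact hn₁
        | succ n hn ih =>
          rw [rc_succ]
          have : ¬ D.T.m (D.T.rc y n []) ≤ y := by
            rw [not_le]; conv_lhs => rw [← ih]
            exact D.T.am _
          rw [decide_eq_false this]
          exact ih
      obtain ⟨δ, hδ, hO⟩ := D.hβ _ _ h
      obtain ⟨N, hN⟩ := D.iv_small δ hδ
      let n := max (max n₀ n₁) N
      have h1 := hN (D.T.rc y n []) (by rw [rc_len]; exact le_max_right _ _)
      have h2 := hst n ((le_max_right _ _).trans (le_max_left _ _))
      have h3 := D.iv_lt (D.T.rc y n [])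
      refine hng n ((le_max_left _ _).trans (le_max_left _ _)) ⟨?_, ?_, ?_⟩
      · intro z hz
        exact hO ⟨by linarith [hz.1], by linarith [hz.2]⟩
      · rw [h2]; exact h
      · exact D.hOα _ _ (hO ⟨by linarith, by linarith⟩)
    · push Not at hA
      have hyq : y ∉ range D.q := by
        rintro ⟨i, rfl⟩
        have h1 := D.rc_mem hy (i+1)
        exact D.iv_q (D.T.rc (D.q i) (i+1) []) i (by rw [rc_len]; omega)
          ⟨lt_of_le_of_ne h1.1 (hA _), h1.2⟩
      obtain ⟨N, hN⟩ := D.allowed_small (D.hX y hyq _ (Or.inr h))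
      exact hng (max n₀ N) (le_max_left _ _) (hN _ (by rw [rc_len]; exact le_max_right _ _)
        (Ico_subset_Icc_self (D.rc_mem hy _)))

lemma lc_att {y : ℝ} (hy : y ∈ Ioc (0:ℝ) 1) (κ : ℕ) (h : (κ : ℕ∞) ≤ D.α y) :
    ∃ n, κ ≤ D.T.k (D.T.lc y n []) := by
  induction κ with
  | zero => exact ⟨0, Nat.zero_le _⟩
  | succ κ ih =>
    obtain ⟨n₀, hn₀⟩ := ih (le_trans (by exact_mod_cast Nat.le_succ κ) h)
    by_contra hc
    push Not at hc
    have hk : ∀ n, n₀ ≤ n → D.T.k (D.T.lc y n []) = κ := fun n hn => by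
      have h1 := D.lc_mono y hn
      simp only at h1
      have := hc n
      omega
    have hng : ∀ n, n₀ ≤ n → ¬ D.allowed (κ+1) (D.iv (D.T.lc y n [])) := by
      intro n hn ha
      have hg : D.T.good (D.T.lc y n []) := by rw [good_iff, hk n hn]; exact ha
      have := hc (n+1)
      rw [lc_succ, Tr.lev_pos _ hg, hk n hn] at this
      omega
    by_cases hA : ∃ n, (D.iv (D.T.lc y n [])).2 = y
    · obtain ⟨n₁, hn₁⟩ := hA
      have hst : ∀ n, n₁ ≤ n → (D.iv (D.T.lc y n [])).2 = y := by
        intro n hn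
        induction n, hn using Nat.le_induction with
        | base => exact hn₁
        | succ n hn ih =>
          rw [lc_succ]
          have : D.T.m (D.T.lc y n []) < y := by
            conv_rhs => rw [← ih]
            exact D.T.mb _
          rw [decide_eq_true this]
          exact ih
      obtain ⟨δ, hδ, hO⟩ := D.hα _ _ h
      obtain ⟨N, hN⟩ := D.iv_small δ hδ
      let n := max (max n₀ n₁) N
      have h1 := hN (D.T.lc y n []) (by rw [lc_len]; exact le_max_right _ _)
      have h2 := hst n ((le_max_right _ _).trans (le_max_left _ _))
      have h3 := D.iv_lt (D.T.lc y n [])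
      refine hng n ((le_max_left _ _).trans (le_max_left _ _)) ⟨?_, ?_, ?_⟩
      · intro z hz
        exact hO ⟨by linarith [hz.1], by linarith [hz.2]⟩
      · exact D.hOβ _ _ (hO ⟨by linarith, by linarith⟩)
      · rw [h2]; exact h
    · push Not at hA
      have hyq : y ∉ range D.q := by
        rintro ⟨i, rfl⟩
        have h1 := D.lc_mem hy (i+1)
        exact D.iv_q (D.T.lc (D.q i) (i+1) []) i (by rw [lc_len]; omega)
          ⟨h1.1, lt_of_le_of_ne h1.2 (hA _).symm⟩
      obtain ⟨N, hN⟩ := D.allowed_small (D.hX y hyq _ (Or.inl h))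
      exact hng (max n₀ N) (le_max_left _ _) (hN _ (by rw [lc_len]; exact le_max_right _ _)
        (Ioc_subset_Icc_self (D.lc_mem hy _)))

lemma rc_le {y : ℝ} (hy : y ∈ Ico (0:ℝ) 1) (n : ℕ) : (D.T.k (D.T.rc y n []) : ℕ∞) ≤ D.β y :=
  D.allowed_β (D.inv _) (D.rc_mem hy n)

lemma lc_le {y : ℝ} (hy : y ∈ Ioc (0:ℝ) 1) (n : ℕ) : (D.T.k (D.T.lc y n []) : ℕ∞) ≤ D.α y :=
  D.allowed_α (D.inv _) (D.lc_mem hy n)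

lemma la_root (y : ℝ) (n : ℕ) : D.T.la y n [] = D.T.k (D.T.lc y n []) := by
  rw [← D.T.la_eq]; simp [Tr.k, lev]

open Classical in
lemma count (y : ℝ) (h0 : y ∈ Icc (0:ℝ) 1) (hα0 : D.α 0 = 0) (hβ1 : D.β 1 = 0) :
    D.T.M (St.up 0 []) y + (if y = 1 then 1 else 0) = 1 + D.β y + D.α y := by
  have hC : D.T.M (St.up 0 []) y = D.T.C [] y := by simp [Tr.C, Tr.k, lev]
  have hV := fun n => D.T.V_eq y n []
  simp only [la_root, D.T.a0, D.T.b0] at hV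
  -- normalise
  have hV' : ∀ n, D.T.V y n [] + (if y = 1 then 1 else 0) =
      1 + ((if y ∈ Ico (0:ℝ) 1 then D.T.k (D.T.rc y n []) else 0 : ℕ) : ℕ∞) +
      ((if y ∈ Ioc (0:ℝ) 1 then D.T.k (D.T.lc y n []) else 0 : ℕ) : ℕ∞) := by
    intro n
    rw [hV]
    by_cases h1 : y = 1
    · subst h1; simp; ring
    · have : y ∈ Ico (0:ℝ) 1 := ⟨h0.1, lt_of_le_of_ne h0.2 h1⟩
      rw [if_pos this, if_pos this, if_neg h1, add_zero]
      by_cases h2 : y ∈ Ioc (0:ℝ) 1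
      · rw [if_pos h2, if_pos h2]; push_cast; ring
      · rw [if_neg h2, if_neg h2]; push_cast; ring
  have hr : ∀ κ : ℕ, (κ : ℕ∞) ≤ D.β y → ∃ n, ∀ n' ≥ n,
      κ ≤ (if y ∈ Ico (0:ℝ) 1 then D.T.k (D.T.rc y n' []) else 0 : ℕ) := by
    intro κ hκ
    by_cases h1 : y ∈ Ico (0:ℝ) 1
    · obtain ⟨n, hn⟩ := D.rc_att h1 κ hκ
      refine ⟨n, fun n' hn' => ?_⟩
      rw [if_pos h1]
      exact hn.trans (D.rc_mono y hn')
    · have : y = 1 := by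
        by_contra h; exact h1 ⟨h0.1, lt_of_le_of_ne h0.2 h⟩
      rw [this, hβ1] at hκ
      refine ⟨0, fun n' _ => ?_⟩
      have : κ = 0 := by simpa using hκ
      omega
  have hl : ∀ κ : ℕ, (κ : ℕ∞) ≤ D.α y → ∃ n, ∀ n' ≥ n,
      κ ≤ (if y ∈ Ioc (0:ℝ) 1 then D.T.k (D.T.lc y n' []) else 0 : ℕ) := by
    intro κ hκ
    by_cases h1 : y ∈ Ioc (0:ℝ) 1
    · obtain ⟨n, hn⟩ := D.lc_att h1 κ hκ
      refine ⟨n, fun n' hn' => ?_⟩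
      rw [if_pos h1]
      exact hn.trans (D.lc_mono y hn')
    · have : y = 0 := by
        by_contra h; exact h1 ⟨lt_of_le_of_ne h0.1 (Ne.symm h), h0.2⟩
      rw [this, hα0] at hκ
      refine ⟨0, fun n' _ => ?_⟩
      have : κ = 0 := by simpa using hκ
      omega
  rw [hC]
  apply le_antisymm
  · by_cases hfin : D.α y ≠ ⊤ ∧ D.β y ≠ ⊤
    · obtain ⟨ha, hb⟩ := hfin
      obtain ⟨i, hi⟩ := ENat.ne_top_iff_exists.1 ha
      obtain ⟨j, hj⟩ := ENat.ne_top_iff_exists.1 hb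
      obtain ⟨n1, hn1⟩ := hr j hj.le
      obtain ⟨n2, hn2⟩ := hl i hi.le
      have hq : D.T.C [] y = D.T.V y (max n1 n2) [] := by
        apply D.T.V_quiet
        intro s hs hg hy
        simp only [List.length_nil, zero_add] at hs
        have hal := (D.good_iff s).1 hg
        have hbd := D.iv_bd s
        have hlt := D.iv_lt s
        rcases (show y ≤ (D.iv s).2 from hy.2).lt_or_eq with h1 | h1
        · have hm : y ∈ Ico (D.iv s).1 (D.iv s).2 := ⟨hy.1, h1⟩
          have h2 := D.allowed_β hal hm
          have h3 := hn1 s.length ((le_max_left _ _).trans hs)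
          rw [if_pos ⟨h0.1, h1.trans_le hbd.2⟩, ← D.rc_uniq s hm] at h3
          rw [← hj] at h2
          have := Nat.cast_le.1 h2
          omega
        · have hm : y ∈ Ioc (D.iv s).1 (D.iv s).2 := ⟨by rw [h1]; exact hlt, h1.le⟩
          have h2 := D.allowed_α hal hm
          have h3 := hn2 s.length ((le_max_right _ _).trans hs)
          rw [if_pos ⟨hbd.1.trans_lt hm.1, h0.2⟩, ← D.lc_uniq s hm] at h3
          rw [← hi] at h2
          have := Nat.cast_le.1 h2
          omega
      rw [hq, hV']
      gcongr
      · split_ifs with h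
        · exact D.rc_le h _
        · simp
      · split_ifs with h
        · exact D.lc_le h _
        · simp
    · have : 1 + D.β y + D.α y = ⊤ := by
        by_cases h : D.α y = ⊤
        · rw [h]; simp
        · have : D.β y = ⊤ := by
            by_contra h'; exact hfin ⟨h, h'⟩
          rw [this]; simp
      rw [this]; exact le_top
  · have key : ∀ i j : ℕ, (i : ℕ∞) ≤ D.α y → (j : ℕ∞) ≤ D.β y →
        (1 : ℕ∞) + j + i ≤ D.T.C [] y + (if y = 1 then 1 else 0) := by
      intro i j hi hj
      obtain ⟨n1, hn1⟩ := hr j hj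
      obtain ⟨n2, hn2⟩ := hl i hi
      refine le_trans ?_ (add_le_add (D.T.V_le y (max n1 n2) []) le_rfl)
      rw [hV']
      gcongr
      · exact hn1 _ (le_max_left _ _)
      · exact hn2 _ (le_max_right _ _)
    by_cases hfin : D.α y ≠ ⊤ ∧ D.β y ≠ ⊤
    · obtain ⟨ha, hb⟩ := hfin
      obtain ⟨i, hi⟩ := ENat.ne_top_iff_exists.1 ha
      obtain ⟨j, hj⟩ := ENat.ne_top_iff_exists.1 hb
      rw [← hi, ← hj]
      exact key i j hi.le hj.le
    · suffices h : D.T.C [] y + (if y = 1 then 1 else 0) = ⊤ by rw [h]; exact le_top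
      rw [ENat.eq_top_iff_forall_ge]
      intro N
      by_cases h : D.α y = ⊤
      · refine le_trans ?_ (key N 0 (by rw [h]; exact le_top) (by simp))
        simp
      · have : D.β y = ⊤ := by
          by_contra h'; exact hfin ⟨h, h'⟩
        refine le_trans ?_ (key 0 N (by simp) (by rw [this]; exact le_top))
        simp

def F : ℝ → ℝ := D.T.fam.F (St.up 0 [])

/-- the fibre over `[0,1]` -/
def fb (y : ℝ) : Set ℝ := {x | x ∈ Icc (0:ℝ) 1 ∧ D.F x = y}

lemma F0 : D.F 0 = 0 := D.T.fam.F_zero (St.up 0 [])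
lemma F1 : D.F 1 = 1 := D.T.fam.F_one (St.up 0 [])
lemma F_maps : MapsTo D.F (Icc 0 1) (Icc 0 1) := fun _ ht => D.T.fam.F_mem (St.up 0 []) ht
lemma F_cont : ContinuousOn D.F (Icc 0 1) := D.T.fam.F_cont (St.up 0 [])

lemma fb_eq (y : ℝ) : D.fb y = D.T.fam.fib (St.up 0 []) y ∪ {x | x = 1 ∧ y = 1} := by
  ext x
  simp only [fb, Fam.fib, mem_ofPred_eq, mem_union]
  change (x ∈ Icc (0:ℝ) 1 ∧ D.F x = y) ↔ (x ∈ Ico (0:ℝ) 1 ∧ D.F x = y) ∨ _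
  constructor
  · rintro ⟨h1, h2⟩
    rcases h1.2.lt_or_eq with h | h
    · left; exact ⟨⟨h1.1, h⟩, h2⟩
    · right; rw [h, F1] at h2; exact ⟨h, h2.symm⟩
  · rintro (⟨h1, h2⟩ | ⟨rfl, rfl⟩)
    · exact ⟨Ico_subset_Icc_self h1, h2⟩
    · exact ⟨by simp, D.F1⟩

lemma fb_encard (y : ℝ) (h0 : y ∈ Icc (0:ℝ) 1) (hα0 : D.α 0 = 0) (hβ1 : D.β 1 = 0) :
    (D.fb y).encard = 1 + D.β y + D.α y := by
  classical
  rw [← D.count y h0 hα0 hβ1, fb_eq, encard_union_eq]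
  · congr 1
    by_cases h : y = 1
    · rw [if_pos h]; simp [h]
    · rw [if_neg h]; simp [h]
  · rw [Set.disjoint_left]
    rintro x ⟨h1, _⟩ ⟨rfl, _⟩
    exact lt_irrefl _ h1.2

lemma fb_countable (hp : Continuous D.p) {y : ℝ} (hy : y ∉ range D.p) : (D.fb y).Countable := by
  rw [fb_eq]
  refine Countable.union ?_ ?_
  · by_contra h
    exact hy (D.T.unc_mem hp D.piOK h)
  · exact (countable_singleton (1:ℝ)).mono fun x hx => hx.1

lemma fb_inj {y : ℝ} (h0 : y ∈ Icc (0:ℝ) 1) (hα0 : D.α 0 = 0) (hβ1 : D.β 1 = 0)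
    (hinf : D.α y = ⊤ ∨ D.β y = ⊤) :
    ∃ t : (ℕ → ℕ) → ℝ, InjOn t {σ | D.p σ = y} ∧ ∀ σ, D.p σ = y → t σ ∈ D.fb y := by
  rcases hinf with h | h
  · have hy : y ∈ Ioc (0:ℝ) 1 := ⟨lt_of_le_of_ne h0.1 (by rintro rfl; rw [hα0] at h; simp at h), h0.2⟩
    exact D.T.inj_fib D.piOK (fun n => D.T.lc y n []) _ rfl (fun n => D.lc_succ y n [])
      (fun n => Ioc_subset_Icc_self (D.lc_mem hy n))
      (fun K => D.lc_att hy K (by rw [h]; exact le_top))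
  · have hy : y ∈ Ico (0:ℝ) 1 := ⟨h0.1, lt_of_le_of_ne h0.2 (by rintro rfl; rw [hβ1] at h; simp at h)⟩
    exact D.T.inj_fib D.piOK (fun n => D.T.rc y n []) _ rfl (fun n => D.rc_succ y n [])
      (fun n => Ico_subset_Icc_self (D.rc_mem hy n))
      (fun K => D.rc_att hy K (by rw [h]; exact le_top))

end Dat


def Lk (g : ℝ → ℕ∞) (y : ℝ) (k : ℕ) : Prop :=
  ∃ δ > 0, ∀ z ∈ Ioo (y - δ) y, ((2 * k + 1 : ℕ) : ℕ∞) ≤ g z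

def Rk (g : ℝ → ℕ∞) (y : ℝ) (k : ℕ) : Prop :=
  ∃ δ > 0, ∀ z ∈ Ioo y (y + δ), ((2 * k + 1 : ℕ) : ℕ∞) ≤ g z

/-- local condition on the two sides -/
def PP (n : ℕ) (a b : ℕ∞) : Prop :=
  ((2 * n + 2 : ℕ) : ℕ∞) ≤ a + b ∧
    (a + b = ((2 * n + 2 : ℕ) : ℕ∞) → ∃ i j : ℕ, a = ((2 * i + 1 : ℕ) : ℕ∞) ∧
      b = ((2 * j + 1 : ℕ) : ℕ∞))

def HH (g : ℝ → ℕ∞) : Prop :=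
  ∀ y (n : ℕ), ((n + 1 : ℕ) : ℕ∞) ≤ g y → ∃ ε > 0, ∀ z₁ ∈ Ioo (y - ε) y, ∀ z₂ ∈ Ioo y (y + ε),
    PP n (g z₁) (g z₂)

lemma Lk_mono {g : ℝ → ℕ∞} {y : ℝ} {k k' : ℕ} (h : k' ≤ k) (hk : Lk g y k) : Lk g y k' := by
  obtain ⟨δ, hδ, h1⟩ := hk
  exact ⟨δ, hδ, fun z hz => le_trans (by exact_mod_cast (by omega)) (h1 z hz)⟩

lemma Rk_mono {g : ℝ → ℕ∞} {y : ℝ} {k k' : ℕ} (h : k' ≤ k) (hk : Rk g y k) : Rk g y k' := by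
  obtain ⟨δ, hδ, h1⟩ := hk
  exact ⟨δ, hδ, fun z hz => le_trans (by exact_mod_cast (by omega)) (h1 z hz)⟩

lemma Lk_zero {g : ℝ → ℕ∞} (h1 : ∀ z, 1 ≤ g z) (y : ℝ) : Lk g y 0 :=
  ⟨1, one_pos, fun z _ => by simpa using h1 z⟩

lemma Rk_zero {g : ℝ → ℕ∞} (h1 : ∀ z, 1 ≤ g z) (y : ℝ) : Rk g y 0 :=
  ⟨1, one_pos, fun z _ => by simpa using h1 z⟩

lemma star {g : ℝ → ℕ∞} (h1 : ∀ z, 1 ≤ g z) (H : HH g) {y : ℝ} {n : ℕ}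
    (h : ((n + 1 : ℕ) : ℕ∞) ≤ g y) : ∃ i j, i + j = n ∧ Lk g y i ∧ Rk g y j := by
  classical
  have hL := Nat.findGreatest_spec (P := Lk g y) (Nat.zero_le n) (Lk_zero h1 y)
  have hle := Nat.findGreatest_le (P := Lk g y) n
  have hgr := fun k => Nat.findGreatest_is_greatest (P := Lk g y) (n := n) (k := k)
  set i := Nat.findGreatest (Lk g y) n
  rcases hle.eq_or_lt with hi | hi
  · exact ⟨n, 0, rfl, hi ▸ hL, Rk_zero h1 y⟩
  · have hn := hgr (i+1) (Nat.lt_succ_self i) hi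
    obtain ⟨ε, hε, hH⟩ := H y n h
    have : ∃ z₁ ∈ Ioo (y - ε) y, g z₁ < ((2 * (i+1) + 1 : ℕ) : ℕ∞) := by
      by_contra hc
      push Not at hc
      exact hn ⟨ε, hε, hc⟩
    obtain ⟨z₁, hz₁, hlt⟩ := this
    refine ⟨i, n - i, by omega, hL, ε, hε, fun z₂ hz₂ => ?_⟩
    by_contra hc
    push Not at hc
    obtain ⟨hs, he⟩ := hH z₁ hz₁ z₂ hz₂
    obtain ⟨c, hc1⟩ := ENat.ne_top_iff_exists.1 hlt.ne_top
    obtain ⟨d, hd1⟩ := ENat.ne_top_iff_exists.1 hc.ne_top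
    rw [← hc1] at hlt hs he
    rw [← hd1] at hc hs he
    norm_cast at hlt hc hs he
    obtain ⟨u, v, hu, hv⟩ := he (by omega)
    omega

lemma exists_sup (P : ℕ → Prop) (h0 : P 0) (hm : ∀ k k', k' ≤ k → P k → P k') :
    ∃ A : ℕ∞, ∀ k : ℕ, (k : ℕ∞) ≤ A ↔ P k := by
  classical
  by_cases h : ∀ k, P k
  · exact ⟨⊤, fun k => by simp [h k]⟩
  · push Not at h
    have h1 := Nat.find_spec h
    have h2 := fun k => Nat.find_min h (m := k)
    set m := Nat.find h
    have hm0 : m ≠ 0 := by intro h'; rw [h'] at h1; exact h1 h0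
    refine ⟨((m - 1 : ℕ) : ℕ∞), fun k => ?_⟩
    rw [Nat.cast_le]
    constructor
    · intro hk
      by_contra hc
      exact h2 k (by omega) hc
    · intro hk
      by_contra hc
      exact h1 (hm k m (by omega) hk)

lemma exists_ab {g : ℝ → ℕ∞} (h1 : ∀ z, 1 ≤ g z) (H : HH g) (y : ℝ) :
    ∃ A B : ℕ∞, 1 + B + A = g y ∧ (∀ k : ℕ, (k : ℕ∞) ≤ A → Lk g y k) ∧
      (∀ k : ℕ, (k : ℕ∞) ≤ B → Rk g y k) ∧
      (∀ k : ℕ, ((2 * k + 1 : ℕ) : ℕ∞) ≤ g y → Lk g y k → Rk g y k →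
        (k : ℕ∞) ≤ A ∧ (k : ℕ∞) ≤ B) := by
  classical
  by_cases hT : g y = ⊤
  · obtain ⟨A, hA⟩ := exists_sup (Lk g y) (Lk_zero h1 y) (fun _ _ h => Lk_mono h)
    obtain ⟨B, hB⟩ := exists_sup (Rk g y) (Rk_zero h1 y) (fun _ _ h => Rk_mono h)
    refine ⟨A, B, ?_, fun k => (hA k).1, fun k => (hB k).1,
      fun k _ h2 h3 => ⟨(hA k).2 h2, (hB k).2 h3⟩⟩
    rw [hT]
    by_contra hc
    have hAf : A ≠ ⊤ := by rintro rfl; simp at hc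
    have hBf : B ≠ ⊤ := by rintro rfl; simp at hc
    obtain ⟨i, rfl⟩ := ENat.ne_top_iff_exists.1 hAf
    obtain ⟨j, rfl⟩ := ENat.ne_top_iff_exists.1 hBf
    obtain ⟨i', j', hij, hi, hj⟩ := star h1 H (y := y) (n := i + j + 1) (by rw [hT]; exact le_top)
    have e1 := Nat.cast_le.1 ((hA _).2 hi)
    have e2 := Nat.cast_le.1 ((hB _).2 hj)
    omega
  · obtain ⟨N, hN⟩ := ENat.ne_top_iff_exists.1 hT
    have hN1 : 1 ≤ N := by
      have := h1 y; rw [← hN] at this; exact_mod_cast this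
    obtain ⟨n, rfl⟩ : ∃ n, N = n + 1 := ⟨N - 1, by omega⟩
    obtain ⟨i, j, hij, hi, hj⟩ := star h1 H (y := y) (n := n) hN.le
    let S : ℕ → Prop := fun k => 2 * k ≤ n ∧ Lk g y k ∧ Rk g y k
    have hS0 : S 0 := ⟨by omega, Lk_zero h1 y, Rk_zero h1 y⟩
    have hK := Nat.findGreatest_spec (P := S) (Nat.zero_le n) hS0
    have hgr : ∀ k, S k → k ≤ Nat.findGreatest S n := fun k hk =>
      Nat.le_findGreatest (by have := hk.1; omega) hk
    set K := Nat.findGreatest S n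
    obtain ⟨hK1, hK2, hK3⟩ := hK
    have main : ∃ A B : ℕ, A + B = n ∧ Lk g y A ∧ Rk g y B ∧ K ≤ A ∧ K ≤ B := by
      by_cases c1 : i < K
      · exact ⟨K, n - K, by omega, hK2, Rk_mono (by omega) hj, le_rfl, by omega⟩
      by_cases c2 : j < K
      · exact ⟨n - K, K, by omega, Lk_mono (by omega) hi, hK3, by omega, le_rfl⟩
      exact ⟨i, j, hij, hi, hj, by omega, by omega⟩
    obtain ⟨A, B, hAB, hA, hB, hKA, hKB⟩ := main
    refine ⟨A, B, ?_, ?_, ?_, ?_⟩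
    · rw [← hN]; norm_cast; omega
    · intro k hk; exact Lk_mono (by exact_mod_cast hk) hA
    · intro k hk; exact Rk_mono (by exact_mod_cast hk) hB
    · intro k hk h2 h3
      rw [← hN] at hk
      have hk' := Nat.cast_le.1 hk
      have := hgr k ⟨by omega, h2, h3⟩
      exact ⟨by exact_mod_cast this.trans hKA, by exact_mod_cast this.trans hKB⟩

lemma exists_dat {g : ℝ → ℕ∞} (h1 : ∀ z, 1 ≤ g z) (H : HH g) (hout : ∀ z ∉ Icc (0:ℝ) 1, g z = 1)
    (p : (ℕ → ℕ) → ℝ) : ∃ D : Dat, D.p = p ∧ D.α 0 = 0 ∧ D.β 1 = 0 ∧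
      ∀ y, 1 + D.β y + D.α y = g y := by
  choose α β hsum hα hβ hαβ using exists_ab h1 H
  let O : ℕ → Set ℝ := fun k => interior {z | ((2 * k + 1 : ℕ) : ℕ∞) ≤ g z}
  have hO : ∀ k, IsOpen (O k) := fun k => isOpen_interior
  have hα' : ∀ (k : ℕ) y, (k : ℕ∞) ≤ α y → ∃ δ > 0, Ioo (y - δ) y ⊆ O k := by
    intro k y h
    obtain ⟨δ, hδ, h2⟩ := hα y k h
    exact ⟨δ, hδ, interior_maximal h2 isOpen_Ioo⟩
  have hβ' : ∀ (k : ℕ) y, (k : ℕ∞) ≤ β y → ∃ δ > 0, Ioo y (y + δ) ⊆ O k := by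
    intro k y h
    obtain ⟨δ, hδ, h2⟩ := hβ y k h
    exact ⟨δ, hδ, interior_maximal h2 isOpen_Ioo⟩
  have hOO : ∀ k, ∀ y ∈ O k, (k : ℕ∞) ≤ α y ∧ (k : ℕ∞) ≤ β y := by
    intro k y hy
    obtain ⟨ε, hε, h⟩ := Metric.isOpen_iff.1 (hO k) y hy
    have hsub : ∀ z ∈ O k, ((2 * k + 1 : ℕ) : ℕ∞) ≤ g z := fun z hz =>
      (interior_subset : O k ⊆ {z | ((2 * k + 1 : ℕ) : ℕ∞) ≤ g z}) hz
    have h' : ∀ z ∈ Metric.ball y ε, ((2 * k + 1 : ℕ) : ℕ∞) ≤ g z :=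
      fun z hz => hsub z (h hz)
    apply hαβ y k (hsub y hy)
    · refine ⟨ε, hε, fun z hz => h' z ?_⟩
      rw [Metric.mem_ball, Real.dist_eq, abs_lt]
      constructor <;> linarith [hz.1, hz.2]
    · refine ⟨ε, hε, fun z hz => h' z ?_⟩
      rw [Metric.mem_ball, Real.dist_eq, abs_lt]
      constructor <;> linarith [hz.1, hz.2]
  have hc1 : ∀ k, {y | y ∉ O k ∧ ∃ δ > 0, Ioo y (y + δ) ⊆ O k}.Countable := by
    intro k
    refine (countable_setOfPred_isolated_right_within (s := (O k)ᶜ)).mono ?_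
    rintro y ⟨h2, δ, hδ, h3⟩
    refine ⟨h2, ?_⟩
    rw [← Filter.empty_mem_iff_bot, mem_nhdsWithin]
    refine ⟨Iio (y + δ), isOpen_Iio, by simp [hδ], ?_⟩
    rintro z ⟨hz1, hz2, hz3⟩
    exact hz2 (h3 ⟨hz3, hz1⟩)
  have hc2 : ∀ k, {y | y ∉ O k ∧ ∃ δ > 0, Ioo (y - δ) y ⊆ O k}.Countable := by
    intro k
    refine (countable_setOfPred_isolated_left_within (s := (O k)ᶜ)).mono ?_
    rintro y ⟨h2, δ, hδ, h3⟩
    refine ⟨h2, ?_⟩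
    rw [← Filter.empty_mem_iff_bot, mem_nhdsWithin]
    refine ⟨Ioi (y - δ), isOpen_Ioi, by simp [hδ], ?_⟩
    rintro z ⟨hz1, hz2, hz3⟩
    exact hz2 (h3 ⟨hz1, hz3⟩)
  have hcount : ((⋃ k, ({y | y ∉ O k ∧ ∃ δ > 0, Ioo y (y + δ) ⊆ O k} ∪
      {y | y ∉ O k ∧ ∃ δ > 0, Ioo (y - δ) y ⊆ O k})) ∪ range ((↑) : ℚ → ℝ)).Countable :=
    (countable_iUnion fun k => (hc1 k).union (hc2 k)).union (countable_range _)
  obtain ⟨q, hq⟩ := hcount.exists_eq_range ⟨((0:ℚ):ℝ), Or.inr ⟨0, rfl⟩⟩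
  refine ⟨⟨α, β, O, hO, hα', hβ', fun k y hy => (hOO k y hy).1, fun k y hy => (hOO k y hy).2,
    ?_, q, ?_, ?_, p⟩, rfl, ?_, ?_, hsum⟩
  · have : {z | ((2 * 0 + 1 : ℕ) : ℕ∞) ≤ g z} = Set.univ := by
      ext z; simpa using h1 z
    simp only [O, this, interior_univ]
  · intro r
    have : (r : ℝ) ∈ range q := by rw [← hq]; exact Or.inr ⟨r, rfl⟩
    exact this
  · intro y hy k hk
    by_contra hc
    apply hy
    rw [← hq]
    left
    rw [mem_iUnion]
    refine ⟨k, ?_⟩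
    rcases hk with hk | hk
    · right; exact ⟨hc, hα' k y hk⟩
    · left; exact ⟨hc, hβ' k y hk⟩
  · by_contra hc
    have : ((1:ℕ) : ℕ∞) ≤ α 0 := by
      simpa using Order.one_le_iff_ne_zero.2 hc
    obtain ⟨δ, hδ, h⟩ := hα 0 1 this
    have h2 := h (-δ/2) ⟨by linarith, by linarith⟩
    rw [hout _ (by rintro ⟨h3, _⟩; linarith)] at h2
    norm_cast at h2
  · by_contra hc
    have : ((1:ℕ) : ℕ∞) ≤ β 1 := by
      simpa using Order.one_le_iff_ne_zero.2 hc
    obtain ⟨δ, hδ, h⟩ := hβ 1 1 this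
    have h2 := h (1+δ/2) ⟨by linarith, by linarith⟩
    rw [hout _ (by rintro ⟨_, h3⟩; linarith)] at h2
    norm_cast at h2

open Classical in
def gf (f : ℝ → Cardinal.{0}) (y : ℝ) : ℕ∞ := if y ∈ Icc (0:ℝ) 1 then toENat (f y) else 1

lemma gf_in {f : ℝ → Cardinal.{0}} {y : ℝ} (h : y ∈ Icc (0:ℝ) 1) : gf f y = toENat (f y) := if_pos h
lemma gf_out {f : ℝ → Cardinal.{0}} {y : ℝ} (h : y ∉ Icc (0:ℝ) 1) : gf f y = 1 := if_neg h

lemma toENat_mono {a b : Cardinal.{0}} (h : a ≤ b) : toENat a ≤ toENat b :=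
  OrderHomClass.mono toENat h

lemma PP_one {n : ℕ} {a : ℕ∞} (h : ((2 * n + 2 : ℕ) : ℕ∞) ≤ 1 + a) : PP n 1 a := by
  refine ⟨h, fun he => ⟨0, n, by simp, ?_⟩⟩
  have hne : a ≠ ⊤ := by rintro rfl; simp at he; exact absurd he.symm (by exact_mod_cast ENat.natCast_ne_top (2*n+2))
  obtain ⟨c, rfl⟩ := ENat.ne_top_iff_exists.1 hne
  norm_cast at he ⊢
  omega

lemma PP_symm {n : ℕ} {a b : ℕ∞} (h : PP n a b) : PP n b a := by
  obtain ⟨h1, h2⟩ := h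
  refine ⟨by rwa [add_comm b a], fun he => ?_⟩
  obtain ⟨i, j, hi, hj⟩ := h2 (by rwa [add_comm a b])
  exact ⟨j, i, hj, hi⟩

lemma PP_big {n : ℕ} {a b : ℕ∞} (h : ((2 * n + 3 : ℕ) : ℕ∞) ≤ a + b) : PP n a b := by
  refine ⟨le_trans (by exact_mod_cast (by omega)) h, fun he => ?_⟩
  rw [he] at h
  have := Nat.cast_le.1 h
  omega

lemma gf_one {f : ℝ → Cardinal.{0}}
    (hf : ∀ y ∈ Set.Icc (0:ℝ) 1, (1 ≤ f y ∧ f y ≤ ℵ₀) ∨ f y = Cardinal.continuum) (z : ℝ) :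
    1 ≤ gf f z := by
  by_cases h : z ∈ Icc (0:ℝ) 1
  · rw [gf_in h]
    have : 1 ≤ f z := by
      rcases hf z h with h | h
      · exact h.1
      · rw [h]; exact one_le_aleph0.trans aleph0_le_continuum
    simpa using toENat_mono this
  · rw [gf_out h]

lemma gf_HH {f : ℝ → Cardinal.{0}}
    (hf : ∀ y ∈ Set.Icc (0:ℝ) 1, (1 ≤ f y ∧ f y ≤ ℵ₀) ∨ f y = Cardinal.continuum)
    (h1 : Cond1 f)
    (h2 : ∀ y ∈ Set.Icc (0:ℝ) 1, (f y = ℵ₀ ∨ f y = Cardinal.continuum) → CondStar f y) :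
    HH (gf f) := by
  intro y n hn
  by_cases hy : y ∈ Icc (0:ℝ) 1
  swap
  · rw [gf_out hy] at hn
    have hn0 : n = 0 := by
      have : n + 1 ≤ 1 := by exact_mod_cast hn
      omega
    subst hn0
    have hg1 := gf_one hf
    rcases (show y < 0 ∨ 1 < y by
      by_contra hc; push Not at hc; exact hy ⟨hc.1, hc.2⟩) with hy0 | hy0
    · refine ⟨1, one_pos, fun z₁ hz₁ z₂ hz₂ => ?_⟩
      rw [gf_out (y := z₁) (fun h => by linarith [h.1, hz₁.2])]
      apply PP_one
      have := add_le_add (le_refl (1:ℕ∞)) (hg1 z₂)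
      rw [one_add_one_eq_two] at this
      simpa using this
    · refine ⟨1, one_pos, fun z₁ hz₁ z₂ hz₂ => ?_⟩
      rw [gf_out (y := z₂) (fun h => by linarith [h.2, hz₂.1])]
      apply PP_symm
      apply PP_one
      have := add_le_add (le_refl (1:ℕ∞)) (hg1 z₁)
      rw [one_add_one_eq_two] at this
      simpa using this
  rw [gf_in hy] at hn
  by_cases hfin : f y < ℵ₀
  · obtain ⟨N, hN⟩ := lt_aleph0.1 hfin
    rw [hN, toENat_nat] at hn
    have hn' := Nat.cast_le.1 hn
    rcases eq_or_ne y 0 with rfl | hy0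
    · obtain ⟨ε, hε, h⟩ := h1.2.1 hfin
      refine ⟨min ε 1, by positivity, fun z₁ hz₁ z₂ hz₂ => ?_⟩
      have hz2 : z₂ ∈ Icc (0:ℝ) 1 := ⟨hz₂.1.le, by linarith [hz₂.2, min_le_right ε 1]⟩
      rw [gf_out (y := z₁) (fun h => by linarith [h.1, hz₁.2]), gf_in hz2]
      apply PP_one
      have := toENat_mono (h z₂ hz2 hz₂.1 (by linarith [hz₂.2, min_le_left ε 1]))
      rw [hN] at this
      simp only [map_mul, map_add, toENat_nat, map_one, toENat_ofNat] at this
      refine le_trans ?_ this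
      exact_mod_cast (by omega)
    rcases eq_or_ne y 1 with rfl | hy1
    · obtain ⟨ε, hε, h⟩ := h1.2.2 hfin
      refine ⟨min ε 1, by positivity, fun z₁ hz₁ z₂ hz₂ => ?_⟩
      have hz1 : z₁ ∈ Icc (0:ℝ) 1 := ⟨by linarith [hz₁.1, min_le_right ε 1], hz₁.2.le⟩
      rw [gf_out (y := z₂) (fun h => by linarith [h.2, hz₂.1]), gf_in hz1]
      apply PP_symm
      apply PP_one
      have := toENat_mono (h z₁ hz1 (by linarith [hz₁.1, min_le_left ε 1]) hz₁.2)
      rw [hN] at this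
      simp only [map_mul, map_add, toENat_nat, map_one, toENat_ofNat] at this
      rw [add_comm 1 (toENat (f z₁))]
      refine le_trans ?_ this
      exact_mod_cast (by omega)
    have hyo : y ∈ Ioo (0:ℝ) 1 := ⟨lt_of_le_of_ne hy.1 hy0.symm, lt_of_le_of_ne hy.2 hy1⟩
    obtain ⟨ε, hε, h⟩ := h1.1 y hyo hfin
    refine ⟨min ε (min y (1-y)), lt_min hε (lt_min hyo.1 (by linarith [hyo.2])),
      fun z₁ hz₁ z₂ hz₂ => ?_⟩
    have m1 := min_le_left ε (min y (1-y))
    have m2 := (min_le_right ε (min y (1-y))).trans (min_le_left _ _)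
    have m3 := (min_le_right ε (min y (1-y))).trans (min_le_right _ _)
    have hz1 : z₁ ∈ Icc (0:ℝ) 1 := ⟨by linarith [hz₁.1], by linarith [hz₁.2, hyo.2]⟩
    have hz2 : z₂ ∈ Icc (0:ℝ) 1 := ⟨by linarith [hz₂.1, hyo.1], by linarith [hz₂.2]⟩
    obtain ⟨ha, hb⟩ := h z₁ hz1 z₂ hz2 (by linarith [hz₁.1]) hz₁.2 hz₂.1 (by linarith [hz₂.2])
    rw [gf_in hz1, gf_in hz2]
    have ha' := toENat_mono ha
    rw [hN] at ha'
    simp only [map_mul, map_add, toENat_nat, toENat_ofNat] at ha'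
    refine ⟨le_trans (by exact_mod_cast (by omega)) ha', fun he => ?_⟩
    rw [he] at ha'
    have hle : 2 * N ≤ 2 * n + 2 := by exact_mod_cast ha'
    have hNn : N = n + 1 := by omega
    rw [← map_add, toENat_eq_natCast] at he
    obtain ⟨⟨i, hi, i', hi'⟩, ⟨j, hj, j', hj'⟩⟩ := hb (by
      rw [he, hN, hNn]; push_cast; ring)
    exact ⟨i', j', by rw [hi, hi', toENat_nat], by rw [hj, hj', toENat_nat]⟩
  · have hinf : f y = ℵ₀ ∨ f y = Cardinal.continuum := by
      rcases hf y hy with h | h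
      · left; exact le_antisymm h.2 (not_lt.1 hfin)
      · right; exact h
    obtain ⟨ε, hε, hA, hB, hC⟩ := h2 y hy hinf (2 * n + 3)
    rcases eq_or_ne y 0 with rfl | hy0
    · refine ⟨min ε 1, by positivity, fun z₁ hz₁ z₂ hz₂ => ?_⟩
      have hz2 : z₂ ∈ Icc (0:ℝ) 1 := ⟨hz₂.1.le, by linarith [hz₂.2, min_le_right ε 1]⟩
      rw [gf_out (y := z₁) (fun h => by linarith [h.1, hz₁.2]), gf_in hz2]
      apply PP_big
      have := toENat_mono (hB rfl z₂ hz2 hz₂.1 (by linarith [hz₂.2, min_le_left ε 1]))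
      simpa only [map_add, toENat_nat, map_one] using this
    rcases eq_or_ne y 1 with rfl | hy1
    · refine ⟨min ε 1, by positivity, fun z₁ hz₁ z₂ hz₂ => ?_⟩
      have hz1 : z₁ ∈ Icc (0:ℝ) 1 := ⟨by linarith [hz₁.1, min_le_right ε 1], hz₁.2.le⟩
      rw [gf_out (y := z₂) (fun h => by linarith [h.2, hz₂.1]), gf_in hz1]
      apply PP_big
      have := toENat_mono (hC rfl z₁ hz1 (by linarith [hz₁.1, min_le_left ε 1]) hz₁.2)
      simpa only [map_add, toENat_nat, map_one] using this
    have hyo : y ∈ Ioo (0:ℝ) 1 := ⟨lt_of_le_of_ne hy.1 hy0.symm, lt_of_le_of_ne hy.2 hy1⟩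
    refine ⟨min ε (min y (1-y)), lt_min hε (lt_min hyo.1 (by linarith [hyo.2])),
      fun z₁ hz₁ z₂ hz₂ => ?_⟩
    have m1 := min_le_left ε (min y (1-y))
    have m2 := (min_le_right ε (min y (1-y))).trans (min_le_left _ _)
    have m3 := (min_le_right ε (min y (1-y))).trans (min_le_right _ _)
    have hz1 : z₁ ∈ Icc (0:ℝ) 1 := ⟨by linarith [hz₁.1], by linarith [hz₁.2, hyo.2]⟩
    have hz2 : z₂ ∈ Icc (0:ℝ) 1 := ⟨by linarith [hz₂.1, hyo.1], by linarith [hz₂.2]⟩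
    have := toENat_mono (hA z₁ hz1 z₂ hz2 (by linarith [hz₁.1]) hz₁.2 hz₂.1 (by linarith [hz₂.2]))
    rw [gf_in hz1, gf_in hz2]
    apply PP_big
    simpa only [map_add, toENat_nat] using this

lemma exists_p {A : Set ℝ} (hA : MeasureTheory.AnalyticSet A) (hA1 : A ⊆ Icc (0:ℝ) 1) :
    ∃ p : (ℕ → ℕ) → ℝ, Continuous p ∧ (∀ y ∈ Icc (0:ℝ) 1, y ∈ range p → y ∈ A) ∧
      ∀ y ∈ A, ∃ j : (ℕ → ℕ) → (ℕ → ℕ), Function.Injective j ∧ ∀ τ, p (j τ) = y := by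
  rw [MeasureTheory.AnalyticSet] at hA
  rcases hA with rfl | ⟨p₀, hp₀, rfl⟩
  · refine ⟨fun _ => 2, continuous_const, ?_, by simp⟩
    rintro y hy ⟨_, rfl⟩
    norm_num at hy
  · refine ⟨fun σ => p₀ (fun n => σ (2 * n)), ?_, ?_, ?_⟩
    · exact hp₀.comp (continuous_pi fun n => continuous_apply _)
    · rintro y _ ⟨σ, rfl⟩
      exact ⟨_, rfl⟩
    · rintro _ ⟨σ, rfl⟩
      refine ⟨fun τ n => if n % 2 = 0 then σ (n / 2) else τ (n / 2), ?_, ?_⟩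
      · intro τ τ' h
        funext n
        have := congrFun h (2 * n + 1)
        have e1 : (2 * n + 1) % 2 ≠ 0 := by omega
        have e2 : (2 * n + 1) / 2 = n := by omega
        simpa only [if_neg e1, e2] using this
      · intro τ
        simp

theorem indicatrix_sufficiency (f : ℝ → Cardinal)
    (hf : ∀ y ∈ Set.Icc (0:ℝ) 1, (1 ≤ f y ∧ f y ≤ ℵ₀) ∨ f y = Cardinal.continuum)
    (h1 : Cond1 f)
    (h2 : ∀ y ∈ Set.Icc (0:ℝ) 1, (f y = ℵ₀ ∨ f y = Cardinal.continuum) → CondStar f y)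
    (h3 : MeasureTheory.AnalyticSet {y | y ∈ Set.Icc (0:ℝ) 1 ∧ f y = Cardinal.continuum}) :
    ∃ F : ℝ → ℝ, ContinuousOn F (Set.Icc 0 1) ∧
      Set.MapsTo F (Set.Icc 0 1) (Set.Icc 0 1) ∧ F 0 = 0 ∧ F 1 = 1 ∧
      ∀ y ∈ Set.Icc (0:ℝ) 1, #(Sec F y) = f y := by
  obtain ⟨p, hp, hpr, hpj⟩ := exists_p h3 (fun y hy => hy.1)
  obtain ⟨D, rfl, hα0, hβ1, hsum⟩ := exists_dat (gf_one hf) (gf_HH hf h1 h2)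
    (fun z hz => gf_out hz) p
  refine ⟨D.F, D.F_cont, D.F_maps, D.F0, D.F1, fun y hy => ?_⟩
  have hS : Sec D.F y = D.fb y := rfl
  rw [hS]
  have hcard : toENat #(D.fb y) = toENat (f y) := by
    rw [toENat_cardinalMk, D.fb_encard y hy hα0 hβ1, hsum, gf_in hy]
  by_cases hc : f y = Cardinal.continuum
  · rw [hc]
    apply le_antisymm
    · exact (mk_set_le _).trans mk_real.le
    · obtain ⟨j, hj, hjp⟩ := hpj y ⟨hy, hc⟩
      have hinf : D.α y = ⊤ ∨ D.β y = ⊤ := by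
        have h := hsum y
        rw [gf_in hy, hc, toENat_eq_top.2 aleph0_le_continuum] at h
        by_contra hcon
        push Not at hcon
        obtain ⟨u, hu⟩ := ENat.ne_top_iff_exists.1 hcon.1
        obtain ⟨v, hv⟩ := ENat.ne_top_iff_exists.1 hcon.2
        rw [← hu, ← hv] at h
        exact ENat.natCast_ne_top (1 + v + u) (by push_cast; exact h)
      obtain ⟨t, ht1, ht2⟩ := D.fb_inj hy hα0 hβ1 hinf
      have hle : #(ℕ → ℕ) ≤ #(D.fb y) := by
        refine mk_le_of_injective (f := fun τ => (⟨t (j τ), ht2 _ (hjp τ)⟩ : D.fb y)) ?_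
        intro τ τ' h
        exact hj (ht1 (hjp τ) (hjp τ') (congrArg Subtype.val h))
      have e : #(ℕ → ℕ) = Cardinal.continuum := by simp
      rwa [e] at hle
  · have hle : f y ≤ ℵ₀ := by
      rcases hf y hy with h | h
      · exact h.2
      · exact absurd h hc
    have hcnt : (D.fb y).Countable :=
      D.fb_countable hp fun hr => hc (hpr y hy hr).2
    exact (toENat_eq_iff_of_le_aleph0 (le_aleph0_iff_set_countable.2 hcnt) hle).1 hcard
end
end

section
/- Let F : [0,1] → [0,1] be continuous with F(0) = 0 and F(1) = 1, let y ∈ (0,1), and suppose F⁻¹(y) is finite with exactly n ≥ 1 elements. Then there exists ε > 0 such that for all y₁ ∈ (y−ε, y) and y₂ ∈ (y, y+ε) one has |F⁻¹(y₁)| + |F⁻¹(y₂)| ≥ 2n (as extended natural numbers), and if |F⁻¹(y₁)| + |F⁻¹(y₂)| = 2n then F⁻¹(y₁) and F⁻¹(y₂) are both finite with an odd number of elements. -/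
open Set

noncomputable section

def TT (F : ℝ → ℝ) (a b y : ℝ) : Set ℝ := {x | x ∈ Set.Icc a b ∧ F x = y}

theorem TT_add (F : ℝ → ℝ) (a c b z : ℝ) (hac : a ≤ c) (A : Set ℝ)
    (hA : A ⊆ TT F a b z) (hAc : ∀ x ∈ A, x < c) :
    A.encard + (TT F c b z).encard ≤ (TT F a b z).encard := by
  rw [← Set.encard_union_eq]
  · apply Set.encard_le_encard
    apply Set.union_subset hA
    rintro x ⟨hx, hz⟩
    exact ⟨⟨hac.trans hx.1, hx.2⟩, hz⟩
  · rw [Set.disjoint_left]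
    rintro x hx ⟨h, -⟩
    exact absurd (hAc x hx) (not_lt.mpr h.1)

theorem TT_main (F : ℝ → ℝ) (b y : ℝ) (hb : y < F b) (n : ℕ) : ∀ a : ℝ, a ≤ b →
    ContinuousOn F (Set.Icc a b) → F a = y → (TT F a b y).encard = (n + 1 : ℕ) →
    ∃ m₁ m₂ : ℕ, m₁ + m₂ = n ∧ ∃ ε > 0, ∀ y₁ ∈ Set.Ioo (y - ε) y, ∀ y₂ ∈ Set.Ioo y (y + ε),
      ((2 * m₁ : ℕ) : ℕ∞) ≤ (TT F a b y₁).encard ∧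
      ((2 * m₂ + 1 : ℕ) : ℕ∞) ≤ (TT F a b y₂).encard := by
  induction n with
  | zero =>
    intro a hab hc ha _
    refine ⟨0, 0, rfl, F b - y, by linarith, fun y₁ _ y₂ h₂ => ⟨by simp, ?_⟩⟩
    obtain ⟨x, hx, hxy⟩ := intermediate_value_Icc hab hc
      (show y₂ ∈ Set.Icc (F a) (F b) from ⟨by rw [ha]; exact h₂.1.le, by linarith [h₂.2]⟩)
    simp only [mul_zero, zero_add, Nat.cast_one, Set.one_le_encard_iff_nonempty]
    exact ⟨x, hx, hxy⟩
  | succ n ih =>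
    intro a hab hc ha hcard
    have haT : a ∈ TT F a b y := ⟨⟨le_rfl, hab⟩, ha⟩
    have hfin : (TT F a b y).Finite := Set.finite_of_encard_eq_coe hcard
    have hcard' : (TT F a b y \ {a}).encard = (n + 1 : ℕ) := by
      have h := Set.encard_diff_singleton_add_one haT
      rw [hcard, show ((n + 1 + 1 : ℕ) : ℕ∞) = ((n + 1 : ℕ) : ℕ∞) + 1 by push_cast; rfl] at h
      exact WithTop.add_right_cancel ENat.one_ne_top h
    have hne : (TT F a b y \ {a}).Nonempty := by
      rw [← Set.encard_pos, hcard']; simp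
    obtain ⟨c, hcS, hmin⟩ := Set.exists_min_image _ id (hfin.subset Set.diff_subset) hne
    have hac : a < c := lt_of_le_of_ne hcS.1.1.1 (fun h => hcS.2 h.symm)
    have hcb : c ≤ b := hcS.1.1.2
    have hcy : F c = y := hcS.1.2
    have hS : TT F a b y \ {a} = TT F c b y := by
      ext x
      constructor
      · intro hx
        exact ⟨⟨hmin x hx, hx.1.1.2⟩, hx.1.2⟩
      · intro hx
        exact ⟨⟨⟨hac.le.trans hx.1.1, hx.1.2⟩, hx.2⟩, (hac.trans_le hx.1.1).ne'⟩
    obtain ⟨m₁, m₂, hm, ε, hε, H⟩ := ih c hcb (hc.mono (Set.Icc_subset_Icc_left hac.le)) hcy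
      (hS ▸ hcard')
    obtain ⟨m, ham, hmc⟩ := exists_between hac
    have hFm : F m ≠ y := by
      intro h
      have := hmin m ⟨⟨⟨ham.le, hmc.le.trans hcb⟩, h⟩, ham.ne'⟩
      exact absurd hmc (not_lt.mpr this)
    have c1 : ContinuousOn F (Set.Icc a m) :=
      hc.mono (Set.Icc_subset_Icc_right (hmc.le.trans hcb))
    have c2 : ContinuousOn F (Set.Icc m c) := hc.mono (Set.Icc_subset_Icc ham.le hcb)
    have key : ∀ z u v : ℝ, u ∈ Set.Ioo a m → F u = z → v ∈ Set.Ioo m c → F v = z →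
        2 + (TT F c b z).encard ≤ (TT F a b z).encard := by
      intro z u v hu huz hv hvz
      have huv : u ≠ v := (hu.2.trans hv.1).ne
      have := TT_add F a c b z hac.le {u, v} (by
        rintro x (rfl | rfl)
        · exact ⟨⟨hu.1.le, by linarith [hu.2]⟩, huz⟩
        · exact ⟨⟨by linarith [hv.1], by linarith [hv.2]⟩, hvz⟩) (by
        rintro x (rfl | rfl)
        · linarith [hu.2]
        · exact hv.2)
      rwa [Set.encard_pair huv] at this
    have key0 : ∀ z : ℝ, (TT F c b z).encard ≤ (TT F a b z).encard := by
      intro z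
      simpa using TT_add F a c b z hac.le ∅ (by simp) (by simp)
    rcases lt_or_gt_of_ne hFm with h | h
    · refine ⟨m₁ + 1, m₂, by omega, min ε (y - F m), by simp [hε, h], ?_⟩
      intro y₁ h₁ y₂ h₂
      have e1 := min_le_left ε (y - F m)
      have e2 := min_le_right ε (y - F m)
      obtain ⟨H1, H2⟩ := H y₁ ⟨by linarith [h₁.1], h₁.2⟩ y₂ ⟨h₂.1, by linarith [h₂.2]⟩
      refine ⟨?_, H2.trans (key0 _)⟩
      obtain ⟨u, hu, huz⟩ := intermediate_value_Ioo' ham.le c1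
        (show y₁ ∈ Set.Ioo (F m) (F a) from ⟨by linarith [h₁.1], by linarith [h₁.2]⟩)
      obtain ⟨v, hv, hvz⟩ := intermediate_value_Ioo hmc.le c2
        (show y₁ ∈ Set.Ioo (F m) (F c) from ⟨by linarith [h₁.1], by linarith [h₁.2]⟩)
      refine le_trans ?_ (key _ u v hu huz hv hvz)
      rw [show ((2 * (m₁ + 1) : ℕ) : ℕ∞) = 2 + ((2 * m₁ : ℕ) : ℕ∞) by push_cast; ring]
      gcongr
    · refine ⟨m₁, m₂ + 1, by omega, min ε (F m - y), by simp [hε, h], ?_⟩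
      intro y₁ h₁ y₂ h₂
      have e1 := min_le_left ε (F m - y)
      have e2 := min_le_right ε (F m - y)
      obtain ⟨H1, H2⟩ := H y₁ ⟨by linarith [h₁.1], h₁.2⟩ y₂ ⟨h₂.1, by linarith [h₂.2]⟩
      refine ⟨H1.trans (key0 _), ?_⟩
      obtain ⟨u, hu, huz⟩ := intermediate_value_Ioo ham.le c1
        (show y₂ ∈ Set.Ioo (F a) (F m) from ⟨by linarith [h₂.1], by linarith [h₂.2]⟩)
      obtain ⟨v, hv, hvz⟩ := intermediate_value_Ioo' hmc.le c2
        (show y₂ ∈ Set.Ioo (F c) (F m) from ⟨by linarith [h₂.1], by linarith [h₂.2]⟩)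
      refine le_trans ?_ (key _ u v hu huz hv hvz)
      rw [show ((2 * (m₂ + 1) + 1 : ℕ) : ℕ∞) = 2 + ((2 * m₂ + 1 : ℕ) : ℕ∞) by push_cast; ring]
      gcongr

theorem finite_section_necessity (F : ℝ → ℝ)
    (hF : ContinuousOn F (Set.Icc 0 1))
    (hmap : Set.MapsTo F (Set.Icc 0 1) (Set.Icc 0 1))
    (h0 : F 0 = 0) (h1 : F 1 = 1)
    (y : ℝ) (hy : y ∈ Set.Ioo (0:ℝ) 1)
    (n : ℕ) (hn : 1 ≤ n) (hsec : (Sec F y).encard = n) :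
    ∃ ε > 0, ∀ y₁ ∈ Set.Ioo (y - ε) y, ∀ y₂ ∈ Set.Ioo y (y + ε),
      (2 * n : ℕ∞) ≤ (Sec F y₁).encard + (Sec F y₂).encard ∧
      ((Sec F y₁).encard + (Sec F y₂).encard = (2 * n : ℕ∞) →
        (∃ k : ℕ, (Sec F y₁).encard = k ∧ Odd k) ∧
        (∃ k : ℕ, (Sec F y₂).encard = k ∧ Odd k)) := by
  have hfin : (TT F 0 1 y).Finite := Set.finite_of_encard_eq_coe hsec
  have hne : (TT F 0 1 y).Nonempty := by
    have h : (TT F 0 1 y).encard = n := hsec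
    rw [← Set.encard_pos, h]; exact_mod_cast hn
  obtain ⟨c, hcS, hmin⟩ := Set.exists_min_image _ id hfin hne
  have hcy : F c = y := hcS.2
  have hc0 : 0 ≤ c := hcS.1.1
  have hS : TT F 0 1 y = TT F c 1 y := by
    ext x
    constructor
    · intro hx
      exact ⟨⟨hmin x hx, hx.1.2⟩, hx.2⟩
    · intro hx
      exact ⟨⟨hc0.trans hx.1.1, hx.1.2⟩, hx.2⟩
  obtain ⟨k, rfl⟩ : ∃ k, n = k + 1 := ⟨n - 1, by omega⟩
  obtain ⟨m₁, m₂, hm, ε, hε, H⟩ := TT_main F 1 y (by rw [h1]; exact hy.2) k c hcS.1.2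
    (hF.mono (Set.Icc_subset_Icc_left hc0)) hcy (hS ▸ hsec)
  refine ⟨min ε y, by simp [hε, hy.1], ?_⟩
  intro y₁ h₁ y₂ h₂
  have e1 := min_le_left ε y
  have e2 := min_le_right ε y
  obtain ⟨H1, H2⟩ := H y₁ ⟨by linarith [h₁.1], h₁.2⟩ y₂ ⟨h₂.1, by linarith [h₂.2]⟩
  obtain ⟨u, hu, huz⟩ := intermediate_value_Ioo hc0 (hF.mono (Set.Icc_subset_Icc_right hcS.1.2))
    (show y₁ ∈ Set.Ioo (F 0) (F c) from ⟨by linarith [h₁.1], by linarith [h₁.2]⟩)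
  have G1 : ((2 * m₁ + 1 : ℕ) : ℕ∞) ≤ (Sec F y₁).encard := by
    have := TT_add F 0 c 1 y₁ hc0 {u} (by
      rintro x rfl
      exact ⟨⟨hu.1.le, hu.2.le.trans hcS.1.2⟩, huz⟩) (by
      rintro x rfl
      exact hu.2)
    rw [Set.encard_singleton] at this
    refine le_trans ?_ this
    rw [show ((2 * m₁ + 1 : ℕ) : ℕ∞) = 1 + ((2 * m₁ : ℕ) : ℕ∞) by push_cast; ring]
    gcongr
  have G2 : ((2 * m₂ + 1 : ℕ) : ℕ∞) ≤ (Sec F y₂).encard := by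
    have := TT_add F 0 c 1 y₂ hc0 ∅ (by simp) (by simp)
    rw [Set.encard_empty, zero_add] at this
    exact H2.trans this
  generalize (Sec F y₁).encard = A at *
  generalize (Sec F y₂).encard = B at *
  have hsum : ((2 * ((k + 1 : ℕ) : ℕ∞)) : ℕ∞) = ((2 * m₁ + 1 + (2 * m₂ + 1) : ℕ) : ℕ∞) := by
    rw [← hm]; push_cast; ring
  rw [hsum]
  refine ⟨by rw [Nat.cast_add]; exact add_le_add G1 G2, fun h => ?_⟩
  have hA : A ≠ ⊤ := by rintro rfl; rw [top_add] at h; exact ENat.coe_ne_top _ h.symm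
  have hB : B ≠ ⊤ := by rintro rfl; rw [add_top] at h; exact ENat.coe_ne_top _ h.symm
  lift A to ℕ using hA
  lift B to ℕ using hB
  norm_cast at h G1 G2
  exact ⟨⟨A, rfl, m₁, by omega⟩, ⟨B, rfl, m₂, by omega⟩⟩
end
end

section
/- Let F : [0,1] → [0,1] be continuous with F(0) = 0 and F(1) = 1. If F⁻¹(0) is finite with exactly n elements, then there exists ε > 0 such that 1 + |F⁻¹(y₂)| ≥ 2n for all y₂ ∈ (0, ε); and if F⁻¹(1) is finite with exactly m elements, then there exists ε > 0 such that |F⁻¹(y₁)| + 1 ≥ 2m for all y₁ ∈ (1−ε, 1) (sums taken in ℕ∞). -/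
open Set

noncomputable section

theorem aux_ivt (F : ℝ → ℝ) (hF : ContinuousOn F (Set.Icc 0 1)) {s b y : ℝ}
    (hs : s ∈ Set.Icc (0:ℝ) 1) (hb : b ∈ Set.Icc (0:ℝ) 1) (hsb : s < b) (h0 : F s = 0)
    (hy : 0 < y) (hyb : y < F b) : ∃ x, s < x ∧ x < b ∧ x ∈ Sec F y := by
  have h := intermediate_value_Ioo hsb.le (hF.mono (Set.Icc_subset_Icc hs.1 hb.2))
  obtain ⟨x, hx, hxy⟩ := h ⟨by rw [h0]; exact hy, hyb⟩
  exact ⟨x, hx.1, hx.2, ⟨hs.1.trans hx.1.le, hx.2.le.trans hb.2⟩, hxy⟩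

theorem aux_ivt' (F : ℝ → ℝ) (hF : ContinuousOn F (Set.Icc 0 1)) {s b y : ℝ}
    (hs : s ∈ Set.Icc (0:ℝ) 1) (hb : b ∈ Set.Icc (0:ℝ) 1) (hsb : b < s) (h0 : F s = 0)
    (hy : 0 < y) (hyb : y < F b) : ∃ x, b < x ∧ x < s ∧ x ∈ Sec F y := by
  have h := intermediate_value_Ioo' hsb.le (hF.mono (Set.Icc_subset_Icc hb.1 hs.2))
  obtain ⟨x, hx, hxy⟩ := h ⟨by rw [h0]; exact hy, hyb⟩
  exact ⟨x, hx.1, hx.2, ⟨hb.1.trans hx.1.le, hx.2.le.trans hs.2⟩, hxy⟩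

theorem aux_main (F : ℝ → ℝ) (hF : ContinuousOn F (Set.Icc 0 1))
    (hmap : Set.MapsTo F (Set.Icc 0 1) (Set.Icc 0 1)) (hfin : (Sec F 0).Finite)
    (S : Finset ℝ) : (∀ x ∈ S, x ∈ Sec F 0) → ∀ b ∈ Set.Icc (0:ℝ) 1, 0 < F b →
      (∀ x ∈ S, x < b) → ∃ ε > 0, ∀ y ∈ Set.Ioo (0:ℝ) ε, ∃ T : Finset ℝ,
        (∀ x ∈ T, x ∈ Sec F y) ∧ (∀ x ∈ T, x < b) ∧ 2 * S.card ≤ 1 + T.card := by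
  induction S using Finset.induction_on_max with
  | empty => exact fun _ b _ _ _ => ⟨1, one_pos, fun y _ => ⟨∅, by simp, by simp, by simp⟩⟩
  | insert s S hlt ih =>
    intro hS b hb hFb hSb
    have hs : s ∈ Sec F 0 := hS s (by simp)
    have hsb : s < b := hSb s (by simp)
    have hcard : (insert s S).card = S.card + 1 :=
      Finset.card_insert_of_notMem fun h => (hlt s h).false
    rcases S.eq_empty_or_nonempty with rfl | hne
    · refine ⟨F b, hFb, fun y hy => ?_⟩
      obtain ⟨x, h1, h2, h3⟩ := aux_ivt F hF hs.1 hb hsb hs.2 hy.1 hy.2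
      exact ⟨{x}, by simpa using h3, by simpa using h2, by simp⟩
    · have hts := hlt _ (S.max'_mem hne)
      obtain ⟨c, hc, hc0⟩ := ((Set.Ioo_infinite hts).diff hfin).nonempty
      have ht := hS _ (Finset.mem_insert_of_mem (S.max'_mem hne))
      have hcI : c ∈ Set.Icc (0:ℝ) 1 := ⟨ht.1.1.trans hc.1.le, hc.2.le.trans hs.1.2⟩
      have hFc : 0 < F c := lt_of_le_of_ne (hmap hcI).1 fun h => hc0 ⟨hcI, h.symm⟩
      obtain ⟨ε, hε, H⟩ := ih (fun x hx => hS x (Finset.mem_insert_of_mem hx)) c hcI hFc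
        (fun x hx => (S.le_max' x hx).trans_lt hc.1)
      refine ⟨min ε (min (F b) (F c)), by positivity, fun y hy => ?_⟩
      obtain ⟨hy0, hy1⟩ := hy
      simp only [lt_min_iff] at hy1
      obtain ⟨T, hT1, hT2, hT3⟩ := H y ⟨hy0, hy1.1⟩
      obtain ⟨u, u1, u2, u3⟩ := aux_ivt' F hF hs.1 hcI hc.2 hs.2 hy0 hy1.2.2
      obtain ⟨v, v1, v2, v3⟩ := aux_ivt F hF hs.1 hb hsb hs.2 hy0 hy1.2.1
      have huT : u ∉ T := fun h => (hT2 u h).not_gt u1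
      have hvT : v ∉ insert u T := by
        intro h
        rcases Finset.mem_insert.1 h with h | h
        · linarith
        · have := hT2 v h
          linarith [hc.2]
      refine ⟨insert v (insert u T), ?_, ?_, ?_⟩
      · intro x hx
        simp only [Finset.mem_insert] at hx
        rcases hx with rfl | rfl | hx
        exacts [v3, u3, hT1 x hx]
      · intro x hx
        simp only [Finset.mem_insert] at hx
        rcases hx with rfl | rfl | hx
        · exact v2
        · linarith
        · have := hT2 x hx
          linarith [hc.2]
      · rw [hcard, Finset.card_insert_of_notMem hvT, Finset.card_insert_of_notMem huT]
        omega

theorem aux_first (F : ℝ → ℝ)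
    (hF : ContinuousOn F (Set.Icc 0 1))
    (hmap : Set.MapsTo F (Set.Icc 0 1) (Set.Icc 0 1))
    (h1 : F 1 = 1) (n : ℕ) (hn : (Sec F 0).encard = n) :
      ∃ ε > 0, ∀ y₂ ∈ Set.Ioo (0:ℝ) ε, (2 * n : ℕ∞) ≤ 1 + (Sec F y₂).encard := by
  have hfin : (Sec F 0).Finite := Set.finite_of_encard_eq_coe hn
  obtain ⟨ε, hε, H⟩ := aux_main F hF hmap hfin hfin.toFinset (by simp) 1 (by simp)
    (by simp [h1]) (by
      intro x hx
      have hx : x ∈ Sec F 0 := by simpa using hx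
      refine lt_of_le_of_ne hx.1.2 ?_
      rintro rfl
      have := hx.2
      rw [h1] at this
      exact one_ne_zero this)
  refine ⟨ε, hε, fun y hy => ?_⟩
  obtain ⟨T, hT1, -, hT3⟩ := H y hy
  have hc : hfin.toFinset.card = n := by
    rw [hfin.encard_eq_coe_toFinset_card] at hn
    exact_mod_cast hn
  rw [hc] at hT3
  have hle : (T.card : ℕ∞) ≤ (Sec F y).encard := by
    rw [← Set.encard_coe_eq_coe_finsetCard]
    exact Set.encard_le_encard hT1
  calc (2 * n : ℕ∞) ≤ 1 + (T.card : ℕ∞) := by exact_mod_cast hT3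
    _ ≤ _ := by gcongr

theorem aux_sec (F : ℝ → ℝ) (y : ℝ) :
    (Sec (fun x => 1 - F (1 - x)) y).encard = (Sec F (1 - y)).encard := by
  have hinj : Function.Injective (fun x : ℝ => 1 - x) := sub_right_injective
  rw [← hinj.encard_image (Sec F (1 - y))]
  congr 1
  ext x
  simp only [Sec, Set.mem_image, Set.mem_setOf_eq, Set.mem_Icc]
  constructor
  · rintro ⟨⟨a, b⟩, c⟩
    exact ⟨1 - x, ⟨⟨by linarith, by linarith⟩, by linarith⟩, by ring⟩
  · rintro ⟨z, ⟨⟨a, b⟩, c⟩, rfl⟩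
    refine ⟨⟨by linarith, by linarith⟩, ?_⟩
    rw [sub_sub_cancel, c]
    ring

theorem finite_section_necessity_endpoints (F : ℝ → ℝ)
    (hF : ContinuousOn F (Set.Icc 0 1))
    (hmap : Set.MapsTo F (Set.Icc 0 1) (Set.Icc 0 1))
    (h0 : F 0 = 0) (h1 : F 1 = 1) :
    (∀ n : ℕ, (Sec F 0).encard = n →
      ∃ ε > 0, ∀ y₂ ∈ Set.Ioo (0:ℝ) ε, (2 * n : ℕ∞) ≤ 1 + (Sec F y₂).encard) ∧
    (∀ m : ℕ, (Sec F 1).encard = m →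
      ∃ ε > 0, ∀ y₁ ∈ Set.Ioo (1 - ε) (1:ℝ), (2 * m : ℕ∞) ≤ (Sec F y₁).encard + 1) := by
  refine ⟨aux_first F hF hmap h1, fun m hm => ?_⟩
  have hI : Set.MapsTo (fun x : ℝ => 1 - x) (Set.Icc 0 1) (Set.Icc 0 1) :=
    fun x hx => ⟨by linarith [hx.2], by linarith [hx.1]⟩
  obtain ⟨ε, hε, H⟩ := aux_first (fun x => 1 - F (1 - x))
    (continuousOn_const.sub (hF.comp (by fun_prop) hI))
    (fun x hx => hI (hmap (hI hx))) (by simp [h0]) m (by rw [aux_sec]; simpa using hm)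
  refine ⟨ε, hε, fun y hy => ?_⟩
  have := H (1 - y) ⟨by linarith [hy.2], by linarith [hy.1]⟩
  rwa [aux_sec, sub_sub_cancel, add_comm] at this
end
end

section
/- Let F : [0,1] → [0,1] be continuous, let y ∈ (0,1), suppose F⁻¹(y) is infinite, and suppose there is no nondegenerate interval [a,b] ⊆ [0,1] with a < b on which F is constantly equal to y. Then for every n ∈ ℕ there exists ε > 0 such that |F⁻¹(y₁)| + |F⁻¹(y₂)| ≥ n for all y₁ ∈ (y−ε, y) and y₂ ∈ (y, y+ε) (sums taken in ℕ∞). -/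
open Set

noncomputable section

theorem infinite_section_necessity (F : ℝ → ℝ)
    (hF : ContinuousOn F (Set.Icc 0 1))
    (hmap : Set.MapsTo F (Set.Icc 0 1) (Set.Icc 0 1))
    (y : ℝ) (hy : y ∈ Set.Ioo (0:ℝ) 1)
    (hsec : (Sec F y).Infinite)
    (hnc : ¬ ∃ a b : ℝ, 0 ≤ a ∧ a < b ∧ b ≤ 1 ∧ ∀ x ∈ Set.Icc a b, F x = y) :
    ∀ n : ℕ, ∃ ε > 0, ∀ y₁ ∈ Set.Ioo (y - ε) y, ∀ y₂ ∈ Set.Ioo y (y + ε),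
      (n : ℕ∞) ≤ (Sec F y₁).encard + (Sec F y₂).encard := by
  intro n
  obtain ⟨t, hts, htc⟩ := hsec.exists_subset_card_eq (n + 1)
  let x := t.orderEmbOfFin htc
  have hx : ∀ i, x i ∈ Set.Icc (0:ℝ) 1 ∧ F (x i) = y := fun i =>
    hts (Finset.orderEmbOfFin_mem t htc i)
  have hz : ∀ i : Fin n, ∃ z, x i.castSucc < z ∧ z < x i.succ ∧ F z ≠ y := by
    intro i
    by_contra hcon
    push Not at hcon
    have hlt : x i.castSucc < x i.succ := x.strictMono (Fin.castSucc_lt_succ)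
    refine hnc ⟨x i.castSucc, x i.succ, (hx _).1.1, hlt, (hx _).1.2, ?_⟩
    intro u hu
    rcases eq_or_lt_of_le hu.1 with h | h
    · rw [← h]; exact (hx _).2
    rcases eq_or_lt_of_le hu.2 with h' | h'
    · rw [h']; exact (hx _).2
    exact hcon u h h'
  choose z hz1 hz2 hz3 using hz
  have hε : ∃ ε > 0, ∀ i, ε < |F (z i) - y| := by
    have h1 : ∀ᶠ ε in nhdsWithin (0:ℝ) (Set.Ioi 0), ∀ i, ε < |F (z i) - y| := by
      rw [Filter.eventually_all]
      intro i
      exact nhdsWithin_le_nhds (eventually_lt_nhds (abs_pos.2 (sub_ne_zero.2 (hz3 i))))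
    obtain ⟨ε, h, h'⟩ := (h1.and self_mem_nhdsWithin).exists
    exact ⟨ε, h', h⟩
  obtain ⟨ε, hε0, hε⟩ := hε
  refine ⟨ε, hε0, fun y₁ hy₁ y₂ hy₂ => ?_⟩
  have hw : ∀ i : Fin n, ∃ w, x i.castSucc < w ∧ w < x i.succ ∧ w ∈ Sec F y₁ ∪ Sec F y₂ := by
    intro i
    have ha := (hx i.castSucc).1.1
    have hb := (hx i.succ).1.2
    have h1 := hz1 i
    have h2 := hz2 i
    have hc : ContinuousOn F (Set.Icc (x i.castSucc) (z i)) :=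
      hF.mono (Set.Icc_subset_Icc ha (by linarith))
    have he := hε i
    rcases lt_or_gt_of_ne (hz3 i) with h | h
    · rw [abs_of_neg (by linarith)] at he
      obtain ⟨w, hw, hw'⟩ := intermediate_value_Icc' h1.le hc
        (show y₁ ∈ Set.Icc _ _ from ⟨by linarith [hy₁.1], by rw [(hx _).2]; exact hy₁.2.le⟩)
      refine ⟨w, lt_of_le_of_ne hw.1 ?_, by linarith [hw.2],
        Or.inl ⟨⟨by linarith [hw.1], by linarith [hw.2]⟩, hw'⟩⟩
      rintro rfl
      rw [(hx _).2] at hw'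
      linarith [hy₁.2]
    · rw [abs_of_pos (by linarith)] at he
      obtain ⟨w, hw, hw'⟩ := intermediate_value_Icc h1.le hc
        (show y₂ ∈ Set.Icc _ _ from ⟨by rw [(hx _).2]; exact hy₂.1.le, by linarith [hy₂.2]⟩)
      refine ⟨w, lt_of_le_of_ne hw.1 ?_, by linarith [hw.2],
        Or.inr ⟨⟨by linarith [hw.1], by linarith [hw.2]⟩, hw'⟩⟩
      rintro rfl
      rw [(hx _).2] at hw'
      linarith [hy₂.1]
  choose w hw1 hw2 hw3 using hw
  have hmono : StrictMono w := by
    intro i j hij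
    have : x i.succ ≤ x j.castSucc := x.monotone (by
      rw [Fin.le_def]; simp only [Fin.val_succ, Fin.val_castSucc]; exact hij)
    linarith [hw1 j, hw2 i]
  calc (n : ℕ∞) = (Set.range w).encard := by
        rw [← Set.image_univ, hmono.injective.encard_image]; simp
    _ ≤ (Sec F y₁ ∪ Sec F y₂).encard := Set.encard_le_encard (Set.range_subset_iff.2 hw3)
    _ ≤ _ := Set.encard_union_le _ _
end
end

section
/- Let F : [0,1] → [0,1] be continuous. If F⁻¹(0) is infinite and there is no nondegenerate interval [a,b] ⊆ [0,1] with a < b on which F is constantly 0, then for every n ∈ ℕ there exists ε > 0 such that 1 + |F⁻¹(y₂)| ≥ n for all y₂ ∈ (0, ε). Dually, if F⁻¹(1) is infinite and there is no nondegenerate interval on which F is constantly 1, then for every n ∈ ℕ there exists ε > 0 such that |F⁻¹(y₁)| + 1 ≥ n for all y₁ ∈ (1−ε, 1) (sums taken in ℕ∞). -/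
open Set

noncomputable section

theorem aux_zero (F : ℝ → ℝ)
    (hF : ContinuousOn F (Set.Icc 0 1))
    (hmap : ∀ x ∈ Set.Icc (0:ℝ) 1, 0 ≤ F x)
    (hinf : (Sec F 0).Infinite)
    (hno : ¬ ∃ a b : ℝ, 0 ≤ a ∧ a < b ∧ b ≤ 1 ∧ ∀ x ∈ Set.Icc a b, F x = 0) (n : ℕ) :
    ∃ ε > 0, ∀ y ∈ Set.Ioo (0:ℝ) ε, (n : ℕ∞) ≤ (Sec F y).encard := by
  obtain ⟨t, ht, hc⟩ := hinf.exists_subset_card_eq (n + 1)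
  let e := t.orderEmbOfFin hc
  have he : ∀ i, e i ∈ Sec F 0 := fun i => ht (t.orderEmbOfFin_mem hc i)
  have hm : ∀ i : Fin n, ∃ m, m ∈ Set.Icc (e i.castSucc) (e i.succ) ∧ 0 < F m := by
    intro i
    by_contra! h
    refine hno ⟨e i.castSucc, e i.succ, (he _).1.1, e.strictMono i.castSucc_lt_succ, (he _).1.2, ?_⟩
    intro x hx
    exact le_antisymm (h x hx) (hmap x ⟨(he _).1.1.trans hx.1, hx.2.trans (he _).1.2⟩)
  choose m hm hpos using hm
  have hev : ∀ᶠ y in nhdsWithin (0:ℝ) (Set.Ioi 0), ∀ i, y < F (m i) := by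
    rw [Filter.eventually_all]
    intro i
    exact nhdsWithin_le_nhds (Iio_mem_nhds (hpos i))
  obtain ⟨ε, hε, hs⟩ := mem_nhdsGT_iff_exists_Ioo_subset.1 hev
  refine ⟨ε, hε, fun y hy => ?_⟩
  have hx : ∀ i : Fin n, ∃ x, x ∈ Set.Ioo (e i.castSucc) (m i) ∧ F x = y := by
    intro i
    have hsub : Set.Icc (e i.castSucc) (m i) ⊆ Set.Icc 0 1 :=
      Set.Icc_subset_Icc (he _).1.1 ((hm i).2.trans (he _).1.2)
    have := intermediate_value_Ioo (hm i).1 (hF.mono hsub)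
    rw [(he _).2] at this
    obtain ⟨x, hx, hxy⟩ := this ⟨hy.1, hs hy i⟩
    exact ⟨x, hx, hxy⟩
  choose x hx hxy using hx
  have hmono : StrictMono x := by
    intro i j hij
    calc x i < m i := (hx i).2
      _ ≤ e i.succ := (hm i).2
      _ ≤ e j.castSucc := e.monotone (by simp [Fin.le_def]; omega)
      _ < x j := (hx j).1
  have hr : Set.range x ⊆ Sec F y := by
    rintro _ ⟨i, rfl⟩
    exact ⟨⟨(he _).1.1.trans (hx i).1.le, (hx i).2.le.trans ((hm i).2.trans (he _).1.2)⟩, hxy i⟩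
  calc (n : ℕ∞) = (Set.range x).encard := by
        rw [← Set.image_univ, hmono.injective.encard_image]; simp
    _ ≤ _ := Set.encard_le_encard hr

theorem infinite_section_necessity_endpoints (F : ℝ → ℝ)
    (hF : ContinuousOn F (Set.Icc 0 1))
    (hmap : Set.MapsTo F (Set.Icc 0 1) (Set.Icc 0 1)) :
    ((Sec F 0).Infinite →
      (¬ ∃ a b : ℝ, 0 ≤ a ∧ a < b ∧ b ≤ 1 ∧ ∀ x ∈ Set.Icc a b, F x = 0) →
      ∀ n : ℕ, ∃ ε > 0, ∀ y₂ ∈ Set.Ioo (0:ℝ) ε,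
        (n : ℕ∞) ≤ 1 + (Sec F y₂).encard) ∧
    ((Sec F 1).Infinite →
      (¬ ∃ a b : ℝ, 0 ≤ a ∧ a < b ∧ b ≤ 1 ∧ ∀ x ∈ Set.Icc a b, F x = 1) →
      ∀ n : ℕ, ∃ ε > 0, ∀ y₁ ∈ Set.Ioo (1 - ε) (1:ℝ),
        (n : ℕ∞) ≤ (Sec F y₁).encard + 1) := by
  refine ⟨fun hi hno n => ?_, fun hi hno n => ?_⟩
  · obtain ⟨ε, hε, h⟩ := aux_zero F hF (fun x hx => (hmap hx).1) hi hno n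
    exact ⟨ε, hε, fun y hy => (h y hy).trans le_add_self⟩
  · have hS : ∀ y, Sec (fun x => 1 - F x) y = Sec F (1 - y) := by
      intro y
      ext x
      simp only [Sec, Set.mem_setOf_eq]
      constructor <;> rintro ⟨h1, h2⟩ <;> exact ⟨h1, by linarith⟩
    obtain ⟨ε, hε, h⟩ := aux_zero (fun x => 1 - F x) (continuousOn_const.sub hF)
      (fun x hx => sub_nonneg.2 (hmap hx).2) (by rw [hS]; simpa using hi)
      (fun ⟨a, b, h0, h1, h2, h3⟩ => hno ⟨a, b, h0, h1, h2, fun x hx => by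
        have := h3 x hx
        linarith⟩) n
    refine ⟨ε, hε, fun y hy => ?_⟩
    have := h (1 - y) ⟨by linarith [hy.2], by linarith [hy.1]⟩
    rw [hS, sub_sub_cancel] at this
    exact this.trans le_self_add
end
end

section
/- Let F : [0,1] → ℝ be continuous. Then the set {y ∈ ℝ : F⁻¹(y) is uncountable} is an analytic subset of ℝ. -/
open Set

noncomputable section

theorem aux_cont (F : ℝ → ℝ) (hF : Continuous F) :
    MeasureTheory.AnalyticSet {y : ℝ | ¬ (Sec F y).Countable} := by
  have hcl : ∀ y, IsClosed (Sec F y) := fun y =>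
    isClosed_Icc.inter (isClosed_eq hF continuous_const)
  let S : Set (ℕ → ℝ) := {x | (∀ n, x n ∈ Set.Icc (0:ℝ) 1) ∧ (∀ n, F (x n) = F (x 0)) ∧
    ∀ n k : ℕ, ∃ m, 0 < dist (x m) (x n) ∧ dist (x m) (x n) < 1 / ((k:ℝ) + 1)}
  have hS : MeasurableSet S := by
    have h1 : MeasurableSet {x : ℕ → ℝ | ∀ n, x n ∈ Set.Icc (0:ℝ) 1} := by
      simp only [Set.ofPred_forall]
      exact MeasurableSet.iInter fun n => measurableSet_Icc.preimage (measurable_pi_apply n)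
    have h2 : MeasurableSet {x : ℕ → ℝ | ∀ n, F (x n) = F (x 0)} := by
      simp only [Set.ofPred_forall]
      exact MeasurableSet.iInter fun n => (isClosed_eq (by fun_prop) (by fun_prop)).measurableSet
    have h3 : MeasurableSet {x : ℕ → ℝ | ∀ n k : ℕ, ∃ m, 0 < dist (x m) (x n) ∧
        dist (x m) (x n) < 1 / ((k:ℝ) + 1)} := by
      simp only [Set.ofPred_forall, Set.ofPred_exists]
      refine MeasurableSet.iInter fun n => MeasurableSet.iInter fun k =>
        MeasurableSet.iUnion fun m => ?_
      refine IsOpen.measurableSet (IsOpen.and ?_ ?_)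
      · exact isOpen_lt (by fun_prop) (by fun_prop)
      · exact isOpen_lt (by fun_prop) (by fun_prop)
    exact h1.inter (h2.inter h3)
  have himg : {y : ℝ | ¬ (Sec F y).Countable} = (fun x : ℕ → ℝ => F (x 0)) '' S := by
    ext y
    constructor
    · intro hy
      obtain ⟨D, hD, hne, hDC⟩ := exists_perfect_nonempty_of_isClosed_of_not_countable (hcl y) hy
      have : Nonempty D := hne.to_subtype
      let u := TopologicalSpace.denseSeq D
      have hu : DenseRange u := TopologicalSpace.denseRange_denseSeq D
      refine ⟨fun n => (u n : ℝ), ⟨fun n => (hDC (u n).2).1, fun n => ?_, fun n k => ?_⟩,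
        (hDC (u 0).2).2⟩
      · exact (hDC (u n).2).2.trans (hDC (u 0).2).2.symm
      · have hk : (0:ℝ) < 1 / ((k:ℝ) + 1) := by positivity
        obtain ⟨z, ⟨hz1, hz2⟩, hz3⟩ := preperfect_iff_nhds.1 hD.acc (u n) (u n).2 _
          (Metric.ball_mem_nhds _ hk)
        have ho : IsOpen {w : D | 0 < dist (w : ℝ) (u n) ∧ dist (w : ℝ) (u n) < 1 / ((k:ℝ) + 1)} := by
          refine IsOpen.and ?_ ?_
          · exact isOpen_lt (by fun_prop) (by fun_prop)
          · exact isOpen_lt (by fun_prop) (by fun_prop)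
        obtain ⟨m, hm⟩ := hu.exists_mem_open ho ⟨⟨z, hz2⟩, dist_pos.2 hz3, hz1⟩
        exact ⟨m, hm⟩
    · rintro ⟨x, ⟨h1, h2, h3⟩, rfl⟩ hc
      have hp : Preperfect (Set.range x) := by
        rw [preperfect_iff_nhds]
        rintro _ ⟨n, rfl⟩ U hU
        obtain ⟨ε, hε, hb⟩ := Metric.mem_nhds_iff.1 hU
        obtain ⟨k, hk⟩ := exists_nat_one_div_lt hε
        obtain ⟨m, hm1, hm2⟩ := h3 n k
        exact ⟨x m, ⟨hb (hm2.trans hk), m, rfl⟩, dist_pos.1 hm1⟩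
      have hsub : closure (Set.range x) ⊆ Sec F (F (x 0)) := by
        refine closure_minimal ?_ (hcl _)
        rintro _ ⟨n, rfl⟩
        exact ⟨h1 n, h2 n⟩
      obtain ⟨f, hf, -, hinj⟩ := hp.perfect_closure.exists_nat_bool_injection
        ⟨x 0, subset_closure ⟨0, rfl⟩⟩
      have hr : (Set.range f).Countable := hc.mono (hf.trans hsub)
      have : Countable (ℕ → Bool) := by
        rw [← Set.image_univ] at hr
        exact Set.countable_univ_iff.1 (Set.countable_of_injective_of_countable_image hinj.injOn hr)
      obtain ⟨g, hg⟩ := exists_surjective_nat (ℕ → Bool)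
      obtain ⟨n, hn⟩ := hg fun n => !(g n n)
      have := congrFun hn n
      simp at this
  rw [himg]
  exact hS.analyticSet.image_of_continuous (by fun_prop)

/-- Sierpiński–Mazurkiewicz: the set of values with uncountable section is analytic. -/
theorem uncountable_sections_analytic (F : ℝ → ℝ)
    (hF : ContinuousOn F (Set.Icc 0 1)) :
    MeasureTheory.AnalyticSet {y : ℝ | ¬ (Sec F y).Countable} := by
  have h := aux_cont (Set.IccExtend (zero_le_one (α := ℝ)) ((Set.Icc (0:ℝ) 1).domRestrict F))
    (hF.domRestrict.Icc_extend')
  have hs : ∀ y, Sec (Set.IccExtend (zero_le_one (α := ℝ)) ((Set.Icc (0:ℝ) 1).domRestrict F)) y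
      = Sec F y := by
    intro y
    ext x
    refine and_congr_right fun hx => ?_
    rw [Set.IccExtend_of_mem _ _ hx]
    rfl
  simpa only [hs] using h
end
end

section
/- For every analytic set A ⊆ [0,1] there exists a continuous function F : [0,1] → [0,1] with F(0) = 0 and F(1) = 1 such that F⁻¹(y) has cardinality 𝔠 for every y ∈ A, and F⁻¹(y) is countably infinite for every y ∈ [0,1] \ A. -/
open Set Cardinal

noncomputable section

def lin (a b A B z : ℝ) : ℝ := (A * (b - z) + B * (z - a)) / (b - a)

def pol (a b A B c z : ℝ) : ℝ := lin a b A B z + (z - a) * (b - z) * (c - lin a b A B z)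

lemma lin_mem {a b A B z : ℝ} (haz : a < z) (hzb : z < b) (hA : A ∈ Icc (0:ℝ) 1)
    (hB : B ∈ Icc (0:ℝ) 1) : lin a b A B z ∈ Icc (0:ℝ) 1 := by
  have hab : 0 < b - a := by linarith
  obtain ⟨hA0, hA1⟩ := hA
  obtain ⟨hB0, hB1⟩ := hB
  unfold lin
  constructor
  · apply div_nonneg _ hab.le
    have := mul_nonneg hA0 (by linarith : 0 ≤ b - z)
    have := mul_nonneg hB0 (by linarith : 0 ≤ z - a)
    linarith
  · rw [div_le_one hab]
    nlinarith

lemma pol_mem {a b A B c z : ℝ} (haz : a < z) (hzb : z < b) (ha : 0 ≤ a) (hb : b ≤ 1)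
    (hA : A ∈ Icc (0:ℝ) 1)
    (hB : B ∈ Icc (0:ℝ) 1) (hc : c ∈ Icc (0:ℝ) 1) : pol a b A B c z ∈ Icc (0:ℝ) 1 := by
  obtain ⟨h0, h1⟩ := lin_mem haz hzb hA hB
  unfold pol
  set L := lin a b A B z
  have hw0 : 0 ≤ (z - a) * (b - z) := mul_nonneg (by linarith) (by linarith)
  have hw1 : (z - a) * (b - z) ≤ 1 := by nlinarith
  set w := (z - a) * (b - z)
  obtain ⟨hc0, hc1⟩ := hc
  constructor <;> nlinarith

lemma pol_finite {a b A B c : ℝ} (hab : a < b) (hc : c ≠ A) (y : ℝ) :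
    {z | pol a b A B c z = y}.Finite := by
  classical
  let L : Polynomial ℝ := Polynomial.C ((b - a)⁻¹) *
    (Polynomial.C A * (Polynomial.C b - Polynomial.X) +
      Polynomial.C B * (Polynomial.X - Polynomial.C a))
  let P : Polynomial ℝ := L + (Polynomial.X - Polynomial.C a) * (Polynomial.C b - Polynomial.X) *
    (Polynomial.C c - L) - Polynomial.C y
  have hP : ∀ z, P.eval z = pol a b A B c z - y := by
    intro z
    simp [P, L, pol, lin, div_eq_inv_mul]
  have hba : b - a ≠ 0 := by linarith
  have hne : P ≠ 0 := by
    intro h0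
    have h1 : ∀ z, pol a b A B c z = y := by
      intro z
      have := hP z
      rw [h0] at this
      simp at this
      linarith
    have ha := h1 a
    have hb := h1 b
    have hm := h1 ((a + b) / 2)
    have e1 : A = y := by
      simpa [pol, lin, hba] using ha
    have e2 : B = y := by
      simpa [pol, lin, hba] using hb
    subst e1
    subst e2
    have e3 : lin a b B B ((a + b)/2) = B := by
      unfold lin; field_simp; ring
    unfold pol at hm
    rw [e3] at hm
    have : ((a + b) / 2 - a) * (b - (a + b) / 2) * (c - B) = 0 := by linarith
    rcases mul_eq_zero.1 this with h | h
    · rcases mul_eq_zero.1 h with h | h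
      · apply hba; linarith
      · apply hba; linarith
    · apply hc; linarith
  refine (Polynomial.finite_setOfPred_isRoot hne).subset ?_
  intro z hz
  have hz' : pol a b A B c z = y := hz
  show P.eval z = 0
  rw [hP, hz']; ring

lemma pol_est (G : ℝ → ℝ) (hG : Continuous G) (c : ℝ → ℝ) (hc : ∀ x, c x ∈ Icc (0:ℝ) 1)
    (M : ℝ) (hM : ∀ x ∈ Icc (0:ℝ) 1, |G x| ≤ M)
    (ε : ℝ) (hε : 0 < ε) :
    ∃ δ > 0, ∀ a b z : ℝ, 0 ≤ a → b ≤ 1 → a < z → z < b → G a ∈ Icc (0:ℝ) 1 →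
      G b ∈ Icc (0:ℝ) 1 → (z - a < δ ∨ b - z < δ) →
      |pol a b (G a) (G b) (c a) z - G z| < ε := by
  have hu : UniformContinuousOn G (Icc 0 1) :=
    isCompact_Icc.uniformContinuousOn_of_continuous hG.continuousOn
  rw [Metric.uniformContinuousOn_iff] at hu
  obtain ⟨η, hη, hu⟩ := hu (ε / 4) (by linarith)
  have hM0 : 0 ≤ M := (abs_nonneg _).trans (hM 0 (by simp))
  -- weight estimate
  have key : ∀ z p l s : ℝ, z ∈ Icc (0:ℝ) 1 → p ∈ Icc (0:ℝ) 1 → 0 < s → 0 < l →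
      |p - z| = l - s → (s < η / (2 * M + 1) * (ε / 4) ∨ |p - z| < η) → s ≤ l →
      s / l * |G p - G z| ≤ ε / 4 := by
    intro z p l s hz hp hs hl hpl hor hsl
    have hsl1 : s / l ≤ 1 := (div_le_one hl).2 hsl
    have hsl0 : 0 ≤ s / l := (div_pos hs hl).le
    by_cases hd : |p - z| < η
    · have := hu p hp z hz (by rwa [Real.dist_eq])
      rw [Real.dist_eq] at this
      have h0 := abs_nonneg (G p - G z)
      nlinarith
    · have hs' := hor.resolve_right hd
      have hlη : η ≤ l := by push Not at hd; linarith
      have h1 : |G p - G z| ≤ 2 * M + 1 := by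
        have := abs_sub (G p) (G z)
        have := hM p hp
        have := hM z hz
        linarith
      have h2 : s / l ≤ 1 / (2 * M + 1) * (ε / 4) := by
        rw [div_le_iff₀ hl]
        calc s ≤ η / (2 * M + 1) * (ε / 4) := hs'.le
          _ = 1 / (2 * M + 1) * (ε / 4) * η := by ring
          _ ≤ _ := by gcongr
      calc s / l * |G p - G z| ≤ 1 / (2 * M + 1) * (ε / 4) * (2 * M + 1) := by gcongr
        _ = ε / 4 := by field_simp
  refine ⟨min (min η (η / (2 * M + 1) * (ε / 4))) (ε / 4), by positivity, ?_⟩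
  intro a b z ha hb haz hzb hGa hGb hor
  have hz : z ∈ Icc (0:ℝ) 1 := ⟨by linarith, by linarith⟩
  have hl : 0 < b - a := by linarith
  have hL := lin_mem haz hzb hGa hGb
  have hA : (b - z) / (b - a) * |G a - G z| ≤ ε / 4 := by
    apply key z a (b - a) (b - z) hz ⟨ha, by linarith⟩ (by linarith) hl
    · rw [abs_of_neg (by linarith)]; ring
    · rcases hor with h | h
      · right
        rw [abs_of_neg (by linarith)]
        have := h.trans_le ((min_le_left _ _).trans (min_le_left _ _))
        linarith
      · left
        exact h.trans_le ((min_le_left _ _).trans (min_le_right _ _))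
    · linarith
  have hB : (z - a) / (b - a) * |G b - G z| ≤ ε / 4 := by
    apply key z b (b - a) (z - a) hz ⟨by linarith, hb⟩ (by linarith) hl
    · rw [abs_of_pos (by linarith)]; ring
    · rcases hor with h | h
      · left
        exact h.trans_le ((min_le_left _ _).trans (min_le_right _ _))
      · right
        rw [abs_of_pos (by linarith)]
        have := h.trans_le ((min_le_left _ _).trans (min_le_left _ _))
        linarith
    · linarith
  have hw : (z - a) * (b - z) ≤ ε / 4 := by
    rcases hor with h | h
    · have := h.trans_le (min_le_right _ _)
      nlinarith
    · have := h.trans_le (min_le_right _ _)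
      nlinarith
  have hw0 : 0 ≤ (z - a) * (b - z) := mul_nonneg (by linarith) (by linarith)
  have hcL : |c a - lin a b (G a) (G b) z| ≤ 1 := by
    have := hc a
    rw [abs_le]
    constructor <;> linarith [this.1, this.2, hL.1, hL.2]
  have e : pol a b (G a) (G b) (c a) z - G z =
      (b - z) / (b - a) * (G a - G z) + (z - a) / (b - a) * (G b - G z) +
        (z - a) * (b - z) * (c a - lin a b (G a) (G b) z) := by
    unfold pol
    have : lin a b (G a) (G b) z - G z = (b - z) / (b - a) * (G a - G z) +
        (z - a) / (b - a) * (G b - G z) := by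
      unfold lin; field_simp; ring
    linarith
  rw [e]
  have t1 : |(b - z) / (b - a) * (G a - G z)| ≤ ε / 4 := by
    rw [abs_mul, abs_of_nonneg (div_nonneg (by linarith) hl.le)]; exact hA
  have t2 : |(z - a) / (b - a) * (G b - G z)| ≤ ε / 4 := by
    rw [abs_mul, abs_of_nonneg (div_nonneg (by linarith) hl.le)]; exact hB
  have t3 : |(z - a) * (b - z) * (c a - lin a b (G a) (G b) z)| ≤ ε / 4 := by
    rw [abs_mul, abs_of_nonneg hw0]
    nlinarith [abs_nonneg (c a - lin a b (G a) (G b) z)]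
  have := abs_add_three ((b - z) / (b - a) * (G a - G z)) ((z - a) / (b - a) * (G b - G z))
    ((z - a) * (b - z) * (c a - lin a b (G a) (G b) z))
  linarith

lemma ext_lemma (K : Set ℝ) (hK : IsClosed K) (hKI : K ⊆ Icc 0 1) (h0 : (0:ℝ) ∈ K)
    (h1 : (1:ℝ) ∈ K) (G : ℝ → ℝ) (hG : Continuous G) (hGK : ∀ x ∈ K, G x ∈ Icc (0:ℝ) 1) :
    ∃ F : ℝ → ℝ, ContinuousOn F (Icc 0 1) ∧ MapsTo F (Icc 0 1) (Icc 0 1) ∧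
      (∀ x ∈ K, F x = G x) ∧ ∀ y, {x | x ∈ Icc (0:ℝ) 1 \ K ∧ F x = y}.Countable := by
  classical
  have hgap : ∀ x : ℝ, ∃ a b : ℝ, x ∈ Icc (0:ℝ) 1 \ K →
      a ∈ K ∧ b ∈ K ∧ a < x ∧ x < b ∧ ∀ t ∈ Ioo a b, t ∉ K := by
    intro x
    by_cases hx : x ∈ Icc (0:ℝ) 1 \ K
    swap
    · exact ⟨0, 0, fun h => absurd h hx⟩
    have hb1 : BddAbove (K ∩ Iic x) := ⟨x, fun t ht => ht.2⟩
    have hb2 : BddBelow (K ∩ Ici x) := ⟨x, fun t ht => ht.2⟩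
    have ha := (hK.inter isClosed_Iic).csSup_mem (s := K ∩ Iic x) ⟨0, h0, hx.1.1⟩ hb1
    have hb := (hK.inter isClosed_Ici).csInf_mem (s := K ∩ Ici x) ⟨1, h1, hx.1.2⟩ hb2
    refine ⟨sSup (K ∩ Iic x), sInf (K ∩ Ici x), fun _ => ⟨ha.1, hb.1, ?_, ?_, ?_⟩⟩
    · exact lt_of_le_of_ne ha.2 (fun h => hx.2 (h ▸ ha.1))
    · exact lt_of_le_of_ne hb.2 (fun h => hx.2 (h.symm ▸ hb.1))
    · intro t ht htK
      rcases le_total t x with h | h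
      · exact absurd (le_csSup hb1 ⟨htK, h⟩) (not_le.2 ht.1)
      · exact absurd (csInf_le hb2 ⟨htK, h⟩) (not_le.2 ht.2)
  choose a b hab using hgap
  let c : ℝ → ℝ := fun t => if G t ≤ 1/2 then 1 else 0
  have hc : ∀ x, c x ∈ Icc (0:ℝ) 1 := by
    intro x; simp only [c]; split_ifs <;> simp
  have hcne : ∀ x, c x ≠ G x := by
    intro x; simp only [c]; split_ifs with h <;> intro h' <;> rw [← h'] at h <;> norm_num at h
  have hU : ∀ x ∈ Icc (0:ℝ) 1 \ K, ∀ z ∈ Ioo (a x) (b x), z ∈ Icc (0:ℝ) 1 \ K ∧ a z = a x ∧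
      b z = b x := by
    intro x hx z hz
    obtain ⟨q1, q2, q3, q4, q5⟩ := hab x hx
    have hzU : z ∈ Icc (0:ℝ) 1 \ K :=
      ⟨⟨(hKI q1).1.trans hz.1.le, hz.2.le.trans (hKI q2).2⟩, q5 z hz⟩
    obtain ⟨r1, r2, r3, r4, r5⟩ := hab z hzU
    refine ⟨hzU, ?_, ?_⟩
    · rcases lt_trichotomy (a z) (a x) with h | h | h
      · exact absurd q1 (r5 _ ⟨h, hz.1.trans r4⟩)
      · exact h
      · exact absurd r1 (q5 _ ⟨h, r3.trans hz.2⟩)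
    · rcases lt_trichotomy (b z) (b x) with h | h | h
      · exact absurd r2 (q5 _ ⟨hz.1.trans r4, h⟩)
      · exact h
      · exact absurd q2 (r5 _ ⟨r3.trans hz.2, h⟩)
  let F : ℝ → ℝ := fun x => if x ∈ K then G x else
    pol (a x) (b x) (G (a x)) (G (b x)) (c (a x)) x
  have hFK : ∀ x ∈ K, F x = G x := fun x hx => by simp only [F, if_pos hx]
  have hFU : ∀ x ∉ K, F x = pol (a x) (b x) (G (a x)) (G (b x)) (c (a x)) x :=
    fun x hx => by simp only [F, if_neg hx]
  obtain ⟨M, hM⟩ := (isCompact_Icc (a := (0:ℝ)) (b := 1)).exists_bound_of_continuousOn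
    hG.continuousOn
  refine ⟨F, ?_, ?_, hFK, ?_⟩
  · intro x hx
    by_cases hxK : x ∈ K
    · rw [Metric.continuousWithinAt_iff]
      intro ε hε
      obtain ⟨δ, hδ, hest⟩ := pol_est G hG c hc M (fun x hx => hM x hx) (ε / 2) (by linarith)
      obtain ⟨δ', hδ', hcont⟩ := Metric.continuous_iff.1 hG x (ε / 2) (by linarith)
      refine ⟨min δ δ', by positivity, ?_⟩
      intro z hz hzx
      have hz1 := hcont z (hzx.trans_le (min_le_right _ _))
      have hz2 := hzx.trans_le (min_le_left _ _)
      rw [hFK x hxK]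
      by_cases hzK : z ∈ K
      · rw [hFK z hzK]; linarith
      · obtain ⟨r1, r2, r3, r4, r5⟩ := hab z ⟨hz, hzK⟩
        have := hest (a z) (b z) z (hKI r1).1 (hKI r2).2 r3 r4 (hGK _ r1) (hGK _ r2) (by
          rw [Real.dist_eq, abs_lt] at hz2
          by_contra hcon
          push Not at hcon
          exact r5 x ⟨by linarith, by linarith⟩ hxK)
        rw [hFU z hzK]
        rw [← Real.dist_eq] at this
        exact (dist_triangle _ (G z) _).trans_lt (by linarith)
    · obtain ⟨q1, q2, q3, q4, q5⟩ := hab x ⟨hx, hxK⟩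
      apply ContinuousAt.continuousWithinAt
      have : F =ᶠ[nhds x] fun z => pol (a x) (b x) (G (a x)) (G (b x)) (c (a x)) z := by
        filter_upwards [Ioo_mem_nhds q3 q4] with z hz
        obtain ⟨s1, s2, s3⟩ := hU x ⟨hx, hxK⟩ z hz
        rw [hFU z s1.2, s2, s3]
      refine ContinuousAt.congr ?_ this.symm
      unfold pol lin
      fun_prop
  · intro x hx
    by_cases hxK : x ∈ K
    · rw [hFK x hxK]; exact hGK x hxK
    · obtain ⟨q1, q2, q3, q4, q5⟩ := hab x ⟨hx, hxK⟩
      rw [hFU x hxK]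
      exact pol_mem q3 q4 (hKI q1).1 (hKI q2).2 (hGK _ q1) (hGK _ q2) (hc _)
  · intro y
    have : {x | x ∈ Icc (0:ℝ) 1 \ K ∧ F x = y} ⊆
        ⋃ q : ℚ, {x | (x ∈ Icc (0:ℝ) 1 \ K ∧ F x = y) ∧ (q:ℝ) ∈ Ioo (a x) (b x)} := by
      intro x hx
      obtain ⟨q1, q2, q3, q4, q5⟩ := hab x hx.1
      obtain ⟨q, h1, h2⟩ := exists_rat_btwn q3
      exact mem_iUnion.2 ⟨q, hx, h1, h2.trans q4⟩
    refine (countable_iUnion fun q => ?_).mono this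
    by_cases hq : (a q) < (b q)
    · refine ((pol_finite (A := G (a q)) (B := G (b q)) hq (hcne (a q)) y).subset ?_).countable
      rintro x ⟨⟨hx, hxy⟩, hxq⟩
      obtain ⟨s1, s2, s3⟩ := hU x hx q hxq
      rw [hFU x hx.2, ← s2, ← s3] at hxy
      exact hxy
    · convert countable_empty
      rw [eq_empty_iff_forall_notMem]
      rintro x ⟨⟨hx, hxy⟩, hxq⟩
      obtain ⟨s1, s2, s3⟩ := hU x hx q hxq
      obtain ⟨q1, q2, q3, q4, q5⟩ := hab q s1
      exact hq (q3.trans q4)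

lemma countable_eventually {α : Type} [Finite α] (c : α) :
    {v : ℕ → α | ∃ n, ∀ i, n ≤ i → v i = c}.Countable := by
  classical
  let f : (Σ n : ℕ, Fin n → α) → (ℕ → α) := fun p i => if h : i < p.1 then p.2 ⟨i, h⟩ else c
  have : Countable (Σ n : ℕ, Fin n → α) := by
    infer_instance
  refine (countable_range f).mono ?_
  rintro v ⟨n, hn⟩
  refine ⟨⟨n, fun i => v i⟩, ?_⟩
  funext i
  simp only [f]
  split_ifs with h
  · rfl
  · exact (hn i (not_lt.1 h)).symm

lemma ofDigits_eq_zero {u : ℕ → Fin 2} (h : Real.ofDigits u ≤ 0) (i : ℕ) : u i = 0 := by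
  have h1 : Real.ofDigitsTerm u i ≤ Real.ofDigits u :=
    Real.summable_ofDigitsTerm.le_tsum i (fun j _ => Real.ofDigitsTerm_nonneg)
  have h2 := h1.trans h
  unfold Real.ofDigitsTerm at h2
  by_contra hne
  have h3 : u i = 1 := by omega
  rw [h3] at h2
  have : (0:ℝ) < ((2:ℕ):ℝ) ^ (i+1) := by positivity
  have := inv_pos.2 this
  simp at h2
  have h4 : (0:ℝ) < 2 ^ (i+1) := by positivity
  linarith

lemma fiber_aux {u v : ℕ → Fin 2} (h : Real.ofDigits u = Real.ofDigits v) {n : ℕ}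
    (hlt : ∀ i < n, u i = v i) (hu : u n = 1) (hv : v n = 0) : ∀ i, n + 1 ≤ i → u i = 0 := by
  have hs : ∑ i ∈ Finset.range n, Real.ofDigitsTerm u i =
      ∑ i ∈ Finset.range n, Real.ofDigitsTerm v i :=
    Finset.sum_congr rfl fun i hi => by
      simp [Real.ofDigitsTerm, hlt i (Finset.mem_range.1 hi)]
  rw [Real.ofDigits_eq_sum_add_ofDigits u (n+1), Real.ofDigits_eq_sum_add_ofDigits v (n+1),
    Finset.sum_range_succ, Finset.sum_range_succ, hs] at h
  have hv1 := Real.ofDigits_le_one (fun i => v (i + (n+1)))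
  set ru := Real.ofDigits (fun i => u (i + (n+1))) with hru
  set rv := Real.ofDigits (fun i => v (i + (n+1)))
  have hp : (0:ℝ) < (2 ^ (n+1))⁻¹ := by positivity
  simp only [Real.ofDigitsTerm, hu, hv] at h
  simp at h
  have h' : (2 ^ (n+1))⁻¹ * (1 + ru - rv) = (0:ℝ) := by linarith
  rcases mul_eq_zero.1 h' with h'' | h''
  · linarith
  · have hz : ru ≤ 0 := by linarith
    intro i hi
    have := ofDigits_eq_zero (u := fun i => u (i + (n+1))) hz (i - (n+1))
    simpa [Nat.sub_add_cancel hi] using this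

lemma fiber_countable (y : ℝ) : {u : ℕ → Fin 2 | Real.ofDigits u = y}.Countable := by
  classical
  have h1 := countable_eventually (0 : Fin 2)
  have h2 : ({u : ℕ → Fin 2 | Real.ofDigits u = y} \
      {v : ℕ → Fin 2 | ∃ n, ∀ i, n ≤ i → v i = 0}).Subsingleton := by
    rintro u ⟨hu, hu'⟩ v ⟨hv, hv'⟩
    by_contra hne
    have hex : ∃ n, u n ≠ v n := by
      by_contra hcon
      push Not at hcon
      exact hne (funext hcon)
    have hn := Nat.find_spec hex
    have hlt : ∀ i < Nat.find hex, u i = v i := fun i hi => by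
      simpa using Nat.find_min hex hi
    have huv : Real.ofDigits u = Real.ofDigits v := by
      rw [mem_ofPred_eq] at hu hv
      rw [hu, hv]
    rcases (by omega : (u (Nat.find hex) = 1 ∧ v (Nat.find hex) = 0) ∨
      (u (Nat.find hex) = 0 ∧ v (Nat.find hex) = 1)) with ⟨p, q⟩ | ⟨p, q⟩
    · exact hu' ⟨_, fiber_aux huv hlt p q⟩
    · exact hv' ⟨_, fiber_aux huv.symm (fun i hi => (hlt i hi).symm) q p⟩
  refine (h1.union h2.countable).mono ?_
  intro u hu
  by_cases h : u ∈ {v : ℕ → Fin 2 | ∃ n, ∀ i, n ≤ i → v i = 0}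
  · exact Or.inl h
  · exact Or.inr ⟨hu, h⟩

def ones (v : ℕ → Bool) : ℕ → Prop := fun i => v i = true

def Pset : Set (ℕ → Bool) := {v | ¬ ∃ n, ∀ i, n ≤ i → v i = false}

lemma nth_eventually (v : ℕ → Bool) (hv : (Set.ofPred (ones v)).Infinite) (n : ℕ) :
    ∀ᶠ w in nhds v, Nat.nth (ones w) n = Nat.nth (ones v) n := by
  classical
  have h : ∀ᶠ w in nhds v, ∀ i ∈ Finset.range (Nat.nth (ones v) n + 1), w i = v i := by
    rw [Filter.eventually_all_finset]
    intro i _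
    have : Filter.Tendsto (fun w : ℕ → Bool => w i) (nhds v) (nhds (v i)) :=
      (continuous_apply i).continuousAt
    rw [nhds_discrete Bool] at this
    exact this (Filter.mem_pure.2 (show v i ∈ {t | t = v i} from rfl))
  filter_upwards [h] with w hw
  have hN : ones v (Nat.nth (ones v) n) := Nat.nth_mem_of_infinite hv n
  have hcv : Nat.count (ones v) (Nat.nth (ones v) n) = n := Nat.count_nth_of_infinite hv n
  set N := Nat.nth (ones v) n
  have hwN : ones w N := by
    unfold ones; rw [hw N (by simp)]; exact hN
  have hcw : Nat.count (ones w) N = n := by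
    rw [← hcv, Nat.count_eq_card_filter_range, Nat.count_eq_card_filter_range]
    congr 1
    apply Finset.filter_congr
    intro i hi
    unfold ones
    rw [hw i (by simp at hi ⊢; omega)]
  have := Nat.nth_count hwN
  rwa [hcw] at this

lemma Pset_inf {v : ℕ → Bool} (hv : v ∈ Pset) : (Set.ofPred (ones v)).Infinite := by
  intro hf
  apply hv
  obtain ⟨n, hn⟩ := hf.bddAbove
  refine ⟨n + 1, fun i hi => ?_⟩
  by_contra h
  have : i ≤ n := hn (show ones v i by simpa [ones] using h)
  omega

def dec (v : ℕ → Bool) : ℕ → ℕ := fun n => Nat.nth (ones v) (n + 1) - Nat.nth (ones v) n - 1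

lemma dec_cont : ContinuousOn dec Pset := by
  intro v hv
  apply ContinuousAt.continuousWithinAt
  rw [continuousAt_pi]
  intro n
  have h1 := nth_eventually v (Pset_inf hv) n
  have h2 := nth_eventually v (Pset_inf hv) (n+1)
  refine ContinuousAt.congr (continuousAt_const (y := dec v n)) ?_
  filter_upwards [h1, h2] with w e1 e2
  simp only [dec, e1, e2]

def psum (x : ℕ → ℕ) (n : ℕ) : ℕ := ∑ i ∈ Finset.range n, (x i + 1)

lemma psum_mono (x : ℕ → ℕ) : StrictMono (psum x) :=
  strictMono_nat_of_lt_succ fun n => by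
    simp only [psum, Finset.sum_range_succ]; omega

open Classical in
def enc (x : ℕ → ℕ) : ℕ → Bool := fun i => decide (i ∈ range (psum x))

lemma ones_enc (x : ℕ → ℕ) : Set.ofPred (ones (enc x)) = range (psum x) := by
  ext i; rw [Set.mem_ofPred_eq]; simp [ones, enc]

lemma enc_inf (x : ℕ → ℕ) : (Set.ofPred (ones (enc x))).Infinite := by
  rw [ones_enc]; exact infinite_range_of_injective (psum_mono x).injective

lemma enc_mem (x : ℕ → ℕ) : enc x ∈ Pset := by
  rintro ⟨n, hn⟩
  apply enc_inf x
  refine (finite_Iio n).subset ?_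
  intro i hi
  by_contra h
  have h1 := hn i (not_lt.1 h)
  have h2 : enc x i = true := hi
  rw [h1] at h2
  simp at h2

lemma nth_enc (x : ℕ → ℕ) : Nat.nth (ones (enc x)) = psum x := by
  rw [← StrictMono.range_inj (Nat.nth_strictMono (enc_inf x)) (psum_mono x)]
  rw [Nat.range_nth_of_infinite (enc_inf x)]
  exact ones_enc x

lemma dec_enc (x : ℕ → ℕ) : dec (enc x) = x := by
  funext n
  simp only [dec, nth_enc, psum, Finset.sum_range_succ]
  omega

lemma exists_G (A : Set ℝ) (hA : MeasureTheory.AnalyticSet A) :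
    ∃ G : Set (ℝ × (ℕ → Bool)), IsClosed G ∧ (∀ y ∉ A, {v | (y, v) ∈ G}.Countable) ∧
      ∀ y ∈ A, 𝔠 ≤ #{v | (y, v) ∈ G} := by
  rw [MeasureTheory.AnalyticSet] at hA
  rcases hA with rfl | ⟨f, hf, rfl⟩
  · exact ⟨∅, isClosed_empty, by simp, by simp⟩
  let f' : (ℕ → Bool) → ℝ := fun v => f (fun n => dec v (2 * n))
  have hf' : ContinuousOn f' Pset := by
    have h1 : Continuous (fun x : ℕ → ℕ => f (fun n => x (2 * n))) :=
      hf.comp (continuous_pi fun n => continuous_apply _)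
    exact h1.comp_continuousOn dec_cont
  refine ⟨closure ((fun v => (f' v, v)) '' Pset), isClosed_closure, ?_, ?_⟩
  · intro y hy
    refine (countable_eventually false).mono ?_
    intro v hv
    by_contra hvP
    have hvP : v ∈ Pset := hvP
    apply hy
    obtain ⟨s, hs, hlim⟩ := mem_closure_iff_seq_limit.1 hv
    choose u hu hus using hs
    have e : s = fun n => (f' (u n), u n) := funext fun n => (hus n).symm
    rw [e, Prod.tendsto_iff] at hlim
    obtain ⟨l1, l2⟩ := hlim
    have l3 : Filter.Tendsto u Filter.atTop (nhdsWithin v Pset) :=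
      tendsto_nhdsWithin_iff.2 ⟨l2, Filter.Eventually.of_forall hu⟩
    have l4 := (hf' v hvP).tendsto.comp l3
    have : y = f' v := tendsto_nhds_unique l1 l4
    rw [this]
    exact mem_range_self _
  · rintro y ⟨x, rfl⟩
    let il : (ℕ → ℕ) → (ℕ → ℕ) := fun z n => if n % 2 = 0 then x (n / 2) else z (n / 2)
    have hil : Function.Injective il := by
      intro z w h
      funext n
      have := congrFun h (2 * n + 1)
      have e1 : (2 * n + 1) % 2 = 1 := by omega
      have e2 : (2 * n + 1) / 2 = n := by omega
      simpa [il, e1, e2] using this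
    have henc : Function.Injective enc := Function.LeftInverse.injective dec_enc
    let j : (ℕ → ℕ) → {v | (f x, v) ∈ closure ((fun v => (f' v, v)) '' Pset)} :=
      fun z => ⟨enc (il z), subset_closure ⟨enc (il z), enc_mem _, by
        simp only [f', dec_enc]
        congr 2
        funext n
        simp [il]⟩⟩
    have hj : Function.Injective j := by
      intro z w h
      exact hil (henc (congrArg Subtype.val h))
    have := mk_le_of_injective hj
    have e : #(ℕ → ℕ) = 𝔠 := by simp
    rwa [e] at this

theorem analytic_set_of_continuum_sections (A : Set ℝ)
    (hA : A ⊆ Set.Icc 0 1) (hAan : MeasureTheory.AnalyticSet A) :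
    ∃ F : ℝ → ℝ, ContinuousOn F (Set.Icc 0 1) ∧
      Set.MapsTo F (Set.Icc 0 1) (Set.Icc 0 1) ∧ F 0 = 0 ∧ F 1 = 1 ∧
      (∀ y ∈ A, #(Sec F y) = Cardinal.continuum) ∧
      (∀ y ∈ Set.Icc (0:ℝ) 1 \ A, (Sec F y).Countable ∧ (Sec F y).Infinite) := by
  classical
  obtain ⟨G, hGc, hGcount, hGcard⟩ := exists_G A hAan
  let Z : Set (ℕ → Bool) := {v | ∀ i j, i ≠ j → ¬ (v i = true ∧ v j = true)}
  have hZc : IsClosed Z := by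
    have : Z = ⋂ i, ⋂ j, ⋂ (_ : i ≠ j), {v : ℕ → Bool | ¬ (v i = true ∧ v j = true)} := by
      ext v; simp [Z]
    rw [this]
    refine isClosed_iInter fun i => isClosed_iInter fun j => isClosed_iInter fun _ => ?_
    have hc : Continuous (fun v : ℕ → Bool => (v i, v j)) := by fun_prop
    exact (isClosed_discrete {p : Bool × Bool | ¬ (p.1 = true ∧ p.2 = true)}).preimage hc
  have hZcount : Z.Countable := by
    refine (countable_eventually false).mono ?_
    intro v hv
    by_cases h : ∃ n, v n = true
    · obtain ⟨n, hn⟩ := h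
      refine ⟨n + 1, fun i hi => ?_⟩
      by_contra hcon
      exact hv n i (by omega) ⟨hn, by simpa using hcon⟩
    · push Not at h
      exact ⟨0, fun i _ => by simpa using h i⟩
  have hZinf : Z.Infinite := by
    let s : ℕ → (ℕ → Bool) := fun n i => decide (i = n)
    have hs : Function.Injective s := by
      intro n m h
      have := congrFun h n
      simpa [s] using this
    refine (infinite_range_of_injective hs).mono ?_
    rintro _ ⟨n, rfl⟩ i j hij ⟨h1, h2⟩
    simp [s] at h1 h2
    omega
  let X0 : Set ((ℕ → Fin 2) × (ℕ → Bool)) := {p | p.2 ∈ Z ∨ (Real.ofDigits p.1, p.2) ∈ G}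
  have hX0 : IsClosed X0 := by
    have c1 : Continuous (fun p : (ℕ → Fin 2) × (ℕ → Bool) => (Real.ofDigits p.1, p.2)) :=
      (Real.continuous_ofDigits.comp continuous_fst).prodMk continuous_snd
    exact (hZc.preimage continuous_snd).union (hGc.preimage c1)
  have : CompactSpace X0 := isCompact_iff_compactSpace.1 hX0.isCompact
  -- embedding into the Cantor set
  let k : (ℕ → Fin 2) × (ℕ → Bool) → ℝ := fun p =>
    (cantorSetHomeomorphNatToBool.symm (cantorSpaceHomeomorphNatToCantorSpace.symm
      (fun n => if n = 0 then (fun i => decide (p.1 i = 1)) else p.2)) : cantorSet)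
  have hk : Continuous k := by
    refine continuous_subtype_val.comp (cantorSetHomeomorphNatToBool.symm.continuous.comp
      (cantorSpaceHomeomorphNatToCantorSpace.symm.continuous.comp ?_))
    refine continuous_pi fun n => ?_
    by_cases h : n = 0
    · simp only [h, if_true]
      refine continuous_pi fun i => ?_
      have h1 : Continuous (fun t : Fin 2 => decide (t = 1)) := continuous_of_discreteTopology
      exact h1.comp ((continuous_apply i).comp continuous_fst)
    · simp only [h, if_false]
      exact continuous_snd
  have hkinj : Function.Injective k := by
    rintro ⟨u, v⟩ ⟨u', v'⟩ h
    have h1 := cantorSpaceHomeomorphNatToCantorSpace.symm.injective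
      (cantorSetHomeomorphNatToBool.symm.injective (Subtype.val_injective h))
    have e0 := congrFun h1 0
    have e1 := congrFun h1 1
    simp only [if_true] at e0
    have e1 : v = v' := by simpa using e1
    have e0 : u = u' := by
      funext i
      have := congrFun e0 i
      simp only [decide_eq_decide] at this
      omega
    rw [e0, e1]
  have hkI : ∀ p, k p ∈ Icc (0:ℝ) 1 := fun p => cantorSet_subset_unitInterval (Subtype.property _)
  let e : X0 ⊕ Bool → ℝ := Sum.elim (fun p => 1/3 + 1/3 * k p.1) (fun b => if b then 1 else 0)
  let g : X0 ⊕ Bool → ℝ := Sum.elim (fun p => Real.ofDigits p.1.1) (fun b => if b then 1 else 0)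
  have he : Continuous e := by
    refine Continuous.sumElim ?_ continuous_of_discreteTopology
    exact continuous_const.add (continuous_const.mul (hk.comp continuous_subtype_val))
  have hg : Continuous g := by
    refine Continuous.sumElim ?_ continuous_of_discreteTopology
    exact Real.continuous_ofDigits.comp (continuous_fst.comp continuous_subtype_val)
  have hel : ∀ p : X0, e (Sum.inl p) = 1/3 + 1/3 * k p.1 := fun _ => rfl
  have her : ∀ b : Bool, e (Sum.inr b) = if b then 1 else 0 := fun _ => rfl
  have hgl : ∀ p : X0, g (Sum.inl p) = Real.ofDigits p.1.1 := fun _ => rfl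
  have hgr : ∀ b : Bool, g (Sum.inr b) = if b then 1 else 0 := fun _ => rfl
  have heinj : Function.Injective e := by
    rintro (p | b) (q | c) h
    · rw [hel, hel] at h
      have : k p.1 = k q.1 := by linarith
      rw [Subtype.ext (hkinj this)]
    · rw [hel, her] at h
      have := hkI p.1
      obtain ⟨h1, h2⟩ := this
      split_ifs at h <;> linarith
    · rw [hel, her] at h
      obtain ⟨h1, h2⟩ := hkI q.1
      split_ifs at h <;> linarith
    · rw [her, her] at h
      cases b <;> cases c <;> simp_all
  have hemb : Topology.IsClosedEmbedding e := he.isClosedEmbedding heinj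
  obtain ⟨G', hG'⟩ := ContinuousMap.exists_extension' hemb ⟨g, hg⟩
  have hG'e : ∀ x, G' (e x) = g x := fun x => congrFun hG' x
  obtain ⟨F, hF1, hF2, hF3, hF4⟩ := ext_lemma (range e) hemb.isClosed_range (by
      rintro _ ⟨p | b, rfl⟩
      · rw [hel]
        obtain ⟨h1, h2⟩ := hkI p.1
        constructor <;> linarith
      · rw [her]; cases b <;> simp) ⟨Sum.inr false, by simp [her]⟩ ⟨Sum.inr true, by simp [her]⟩
    G' G'.continuous (by
      rintro _ ⟨p | b, rfl⟩
      · rw [hG'e, hgl]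
        exact ⟨Real.ofDigits_nonneg _, Real.ofDigits_le_one _⟩
      · rw [hG'e, hgr]; cases b <;> simp)
  have hFe : ∀ x, F (e x) = g x := fun x => by rw [hF3 _ (mem_range_self x), hG'e]
  have heI : ∀ x, e x ∈ Icc (0:ℝ) 1 := by
    rintro (p | b)
    · rw [hel]
      obtain ⟨h1, h2⟩ := hkI p.1
      constructor <;> linarith
    · rw [her]; cases b <;> simp
  have hinj : ∀ y ∈ Icc (0:ℝ) 1, ∃ j : {v | v ∈ Z ∨ (y, v) ∈ G} → Sec F y,
      Function.Injective j := by
    intro y hy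
    obtain ⟨u, -, rfl⟩ := Real.ofDigits_SurjOn (b := 2) (by norm_num) hy
    refine ⟨fun v => ⟨e (Sum.inl ⟨(u, v.1), v.2⟩), heI _, by rw [hFe, hgl]⟩, ?_⟩
    intro v w h
    have h0 : e (Sum.inl ⟨(u, v.1), v.2⟩) = e (Sum.inl ⟨(u, w.1), w.2⟩) := congrArg Subtype.val h
    have h1 := heinj h0
    have h2 := congrArg Subtype.val (Sum.inl.inj h1)
    exact Subtype.ext (congrArg Prod.snd h2)
  refine ⟨F, hF1, hF2, ?_, ?_, ?_, ?_⟩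
  · have := hFe (Sum.inr false)
    simpa [her, hgr] using this
  · have := hFe (Sum.inr true)
    simpa [her, hgr] using this
  · intro y hy
    obtain ⟨j, hj⟩ := hinj y (hA hy)
    apply le_antisymm
    · rw [← Cardinal.mk_real]; exact mk_set_le _
    · refine (hGcard y hy).trans (le_trans ?_ (mk_le_of_injective hj))
      exact mk_le_mk_of_subset fun v hv => Or.inr hv
  · intro y hy
    constructor
    · have hsub : Sec F y ⊆ e '' (Sum.inl '' (Subtype.val ⁻¹'
          ({u : ℕ → Fin 2 | Real.ofDigits u = y} ×ˢ (Z ∪ {v | (y, v) ∈ G})))) ∪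
          e '' (range Sum.inr) ∪ {x | x ∈ Icc (0:ℝ) 1 \ range e ∧ F x = y} := by
        rintro x ⟨hx, hxy⟩
        by_cases hxe : x ∈ range e
        · left
          obtain ⟨p | b, rfl⟩ := hxe
          · left
            rw [hFe, hgl] at hxy
            refine ⟨_, ⟨p, ⟨hxy, ?_⟩, rfl⟩, rfl⟩
            have := p.2
            rcases this with h | h
            · exact Or.inl h
            · right
              rw [hxy] at h
              exact h
          · right
            exact ⟨_, ⟨b, rfl⟩, rfl⟩
        · right
          exact ⟨⟨hx, hxe⟩, hxy⟩
      refine Countable.mono hsub ((Countable.union ?_ ?_).union (hF4 y))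
      · refine Countable.image (Countable.image ?_ _) _
        refine Countable.preimage_of_injOn ?_ Subtype.val_injective.injOn
        exact (fiber_countable y).prod (hZcount.union (hGcount y hy.2))
      · exact (countable_range _).image _
    · obtain ⟨j, hj⟩ := hinj y hy.1
      have : Infinite {v | v ∈ Z ∨ (y, v) ∈ G} :=
        (hZinf.mono fun v hv => Or.inl hv).to_subtype
      exact infinite_coe_iff.1 (Infinite.of_injective j hj)
end
end
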